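/- Let {X_i : i ∈ 𝒥} be an m-dependent random field indexed by a finite set 𝒥 ⊆ ℤ^d, with E X_i = 0 and E|X_i|^p < ∞ for some 2 < p ≤ 3, and assume E W² = 1 where W = Σ_{i∈𝒥} X_i. Then sup_{z∈ℝ} |F(z) − Φ(z)| ≤ 75 (10m + 1)^{(p−1)d} Σ_{i∈𝒥} E|X_i|^p. -/

import Mathlib

open MeasureTheory ProbabilityTheory Real

noncomputable def stdGaussianCDF : ℝ → ℝ :=
  fun z => ∫ x in Set.Iic z, (Real.sqrt (2 * Real.pi))⁻¹ * Real.exp (-x ^ 2 / 2)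

/-!
Stein's method under local dependence. If `f` solves `f' - w f = h - E h(Z)` for a smoothed
indicator `h` of a half-line, then `E h(W) - E h(Z) = E (f'(W) - W f(W))`. Each `X i` has mean zero
and is independent of the part of `W` outside a neighbourhood of `i`, so `E W f(W)` is the
expectation of `f'` averaged against a kernel carried by the neighbourhood sums, of total mass
`E W² = 1`. What remains is the oscillation of `f'` over the size of these sums. Its singular part
is an average of indicators of short intervals, whose probability is controlled by a concentration
inequality for `W`, obtained by the same expansion with a trapezoidal test function. Truncating the
neighbourhood sums at `1` gives the exponent `p`, and Young's inequality together with counting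
neighbours bounds all the mixed moments by `κ ^ (p - 1) * ∑ E |X i| ^ p`.
-/

open Set Filter Topology

namespace LocalDependence

local notation "φ" => gaussianPDFReal 0 1

local notation "γ" => gaussianReal 0 1

/-! ### Stein's equation -/

lemma gaussianPDFReal_zero_one (x : ℝ) : φ x = (√(2 * π))⁻¹ * exp (-x ^ 2 / 2) := by
  simp [gaussianPDFReal]

lemma gaussianPDFReal_zero_one_pos (x : ℝ) : 0 < φ x :=
  gaussianPDFReal_pos 0 1 x one_ne_zero

lemma integrable_gaussianPDFReal_zero_one : Integrable φ :=
  integrable_gaussianPDFReal 0 1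

lemma gaussianPDFReal_zero_one_neg (x : ℝ) : φ (-x) = φ x := by
  simp [gaussianPDFReal_zero_one]

lemma gaussianPDFReal_zero_one_abs (x : ℝ) : φ |x| = φ x := by
  simp [gaussianPDFReal_zero_one]

lemma hasDerivAt_gaussianPDFReal_zero_one (x : ℝ) : HasDerivAt φ (-x * φ x) x := by
  have hexponent : HasDerivAt (fun x : ℝ => -x ^ 2 / 2) (-x) x :=
    ((hasDerivAt_pow 2 x).neg.div_const 2).congr_deriv (by simp; ring)
  rw [funext gaussianPDFReal_zero_one]
  exact (hexponent.exp.const_mul _).congr_deriv (by ring)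

lemma continuous_gaussianPDFReal_zero_one : Continuous φ :=
  continuous_iff_continuousAt.2 fun x => (hasDerivAt_gaussianPDFReal_zero_one x).continuousAt

lemma tendsto_gaussianPDFReal_zero_one_atTop : Tendsto φ atTop (𝓝 0) := by
  have hexponent : Tendsto (fun x : ℝ => -x ^ 2 / 2) atTop atBot := by
    simpa only [neg_div, Function.comp_def] using tendsto_neg_atTop_atBot.comp
      ((tendsto_pow_atTop two_ne_zero).atTop_div_const (two_pos (α := ℝ)))
  rw [funext gaussianPDFReal_zero_one]
  simpa using (tendsto_exp_atBot.comp hexponent).const_mul (√(2 * π))⁻¹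

lemma gaussianPDFReal_zero_one_le_half (x : ℝ) : φ x ≤ 1 / 2 := by
  have hsqrt : 2 ≤ √(2 * π) := le_sqrt_of_sq_le (by linarith [pi_gt_three])
  have hexp : exp (-x ^ 2 / 2) ≤ 1 := exp_le_one_iff.2 (by linarith [sq_nonneg x])
  rw [gaussianPDFReal_zero_one, inv_mul_le_iff₀ (by linarith)]
  linarith

lemma quarter_le_gaussianPDFReal_zero_one {x : ℝ} (hx : |x| ≤ 1 / 2) : 1 / 4 ≤ φ x := by
  have hsqrt : √(2 * π) ≤ 3 := by
    rw [sqrt_le_left (by norm_num)]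
    linarith [pi_lt_four]
  have hexp : 3 / 4 ≤ exp (-x ^ 2 / 2) := by
    linarith [add_one_le_exp (-x ^ 2 / 2), sq_le_sq' (abs_le.1 hx).1 (abs_le.1 hx).2]
  rw [gaussianPDFReal_zero_one, le_inv_mul_iff₀ (by positivity)]
  linarith

lemma mul_setIntegral_Ioi_gaussianPDFReal_le {w : ℝ} (hw : 0 ≤ w) :
    w * ∫ x in Ioi w, φ x ≤ φ w := by
  have hderiv : ∀ x ∈ Ici w, HasDerivAt (fun x => -φ x) (x * φ x) x := fun x _ =>
    (hasDerivAt_gaussianPDFReal_zero_one x).neg.congr_deriv (by ring)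
  have hlim : Tendsto (fun x => -φ x) atTop (𝓝 0) := by
    simpa using tendsto_gaussianPDFReal_zero_one_atTop.neg
  have hint : IntegrableOn (fun x => x * φ x) (Ioi w) :=
    integrableOn_Ioi_deriv_of_nonneg' hderiv
      (fun x hx => mul_nonneg (hw.trans (le_of_lt hx)) (gaussianPDFReal_nonneg 0 1 x)) hlim
  calc w * ∫ x in Ioi w, φ x = ∫ x in Ioi w, w * φ x := (integral_const_mul ..).symm
    _ ≤ ∫ x in Ioi w, x * φ x :=
        setIntegral_mono_on (integrable_gaussianPDFReal_zero_one.const_mul w).integrableOn hint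
          measurableSet_Ioi fun x hx =>
            mul_le_mul_of_nonneg_right (le_of_lt hx) (gaussianPDFReal_nonneg 0 1 x)
    _ = φ w := by simp [integral_Ioi_of_hasDerivAt_of_tendsto' hderiv hint hlim]

lemma setIntegral_Iic_neg_gaussianPDFReal (w : ℝ) :
    ∫ x in Iic (-w), φ x = ∫ x in Ioi w, φ x := by
  rw [← neg_neg w, ← integral_comp_neg_Iic]
  simp [gaussianPDFReal_zero_one_neg]

lemma setIntegral_Ioi_zero_gaussianPDFReal : ∫ x in Ioi 0, φ x = 1 / 2 := by
  have hsymm := setIntegral_Iic_neg_gaussianPDFReal 0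
  have hsplit := intervalIntegral.integral_Iic_add_Ioi (b := 0)
    integrable_gaussianPDFReal_zero_one.integrableOn
    integrable_gaussianPDFReal_zero_one.integrableOn
  rw [integral_gaussianPDFReal_eq_one 0 one_ne_zero] at hsplit
  rw [neg_zero] at hsymm
  linarith

lemma setIntegral_Ioi_gaussianPDFReal_le {w : ℝ} (hw : 0 ≤ w) :
    ∫ x in Ioi w, φ x ≤ 2 * φ w := by
  have htail : 0 ≤ ∫ x in Ioi w, φ x := integral_nonneg (gaussianPDFReal_nonneg 0 1)
  rcases le_total (1 / 2) w with hlarge | hsmall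
  · nlinarith [mul_setIntegral_Ioi_gaussianPDFReal_le hw]
  · have hmono : ∫ x in Ioi w, φ x ≤ ∫ x in Ioi 0, φ x :=
      setIntegral_mono_set integrable_gaussianPDFReal_zero_one.integrableOn
        (.of_forall (gaussianPDFReal_nonneg 0 1)) (.of_forall (Ioi_subset_Ioi hw))
    rw [setIntegral_Ioi_zero_gaussianPDFReal] at hmono
    linarith [quarter_le_gaussianPDFReal_zero_one (abs_le.2 ⟨by linarith, hsmall⟩)]

/-- The bounded solution `f` of Stein's equation `f' w - w * f w = h w - ∫ h dγ`,
with `γ` the standard Gaussian law. -/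
noncomputable def steinSolution (h : ℝ → ℝ) (w : ℝ) : ℝ :=
  (φ w)⁻¹ * ∫ x in Iic w, (h x - ∫ y, h y ∂γ) * φ x

/-- The derivative of `steinSolution h`, as given by Stein's equation. -/
noncomputable def steinDeriv (h : ℝ → ℝ) (w : ℝ) : ℝ :=
  w * steinSolution h w + (h w - ∫ y, h y ∂γ)

section SteinSolution

variable {h : ℝ → ℝ}

lemma integral_mem_Icc_of_forall_mem_Icc {Ω : Type*} [MeasurableSpace Ω] {ρ : Measure Ω}
    [IsProbabilityMeasure ρ] {f : Ω → ℝ} (hf : AEStronglyMeasurable f ρ)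
    (h01 : ∀ x, f x ∈ Icc 0 1) : ∫ x, f x ∂ρ ∈ Icc 0 1 := by
  have hint : Integrable f ρ := .of_bound hf 1 (.of_forall fun x => by
    rw [norm_of_nonneg (h01 x).1]
    exact (h01 x).2)
  refine ⟨integral_nonneg fun x => (h01 x).1, ?_⟩
  simpa using integral_mono hint (integrable_const 1) fun x => (h01 x).2

lemma abs_sub_integral_gaussian_le_one (hc : Continuous h) (h01 : ∀ x, h x ∈ Icc 0 1) (x : ℝ) :
    |h x - ∫ y, h y ∂γ| ≤ 1 := by
  have hmean := integral_mem_Icc_of_forall_mem_Icc (ρ := γ) hc.aestronglyMeasurable h01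
  rw [abs_le]
  constructor <;> linarith [(h01 x).1, (h01 x).2, hmean.1, hmean.2]

lemma abs_centered_mul_gaussianPDFReal_le (hc : Continuous h) (h01 : ∀ x, h x ∈ Icc 0 1)
    (x : ℝ) : |(h x - ∫ y, h y ∂γ) * φ x| ≤ φ x := by
  rw [abs_mul, abs_of_pos (gaussianPDFReal_zero_one_pos x)]
  exact mul_le_of_le_one_left (gaussianPDFReal_nonneg 0 1 x)
    (abs_sub_integral_gaussian_le_one hc h01 x)

lemma continuous_centered_mul_gaussianPDFReal (hc : Continuous h) :
    Continuous fun x => (h x - ∫ y, h y ∂γ) * φ x :=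
  (hc.sub continuous_const).mul continuous_gaussianPDFReal_zero_one

lemma integrable_centered_mul_gaussianPDFReal (hc : Continuous h)
    (h01 : ∀ x, h x ∈ Icc 0 1) : Integrable fun x => (h x - ∫ y, h y ∂γ) * φ x :=
  integrable_gaussianPDFReal_zero_one.mono'
    (continuous_centered_mul_gaussianPDFReal hc).aestronglyMeasurable
    (.of_forall (abs_centered_mul_gaussianPDFReal_le hc h01))

lemma integral_centered_mul_gaussianPDFReal (hc : Continuous h) (h01 : ∀ x, h x ∈ Icc 0 1) :
    ∫ x, (h x - ∫ y, h y ∂γ) * φ x = 0 := by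
  have hint : Integrable h γ := .of_bound hc.aestronglyMeasurable 1 (.of_forall fun x => by
    rw [norm_of_nonneg (h01 x).1]
    exact (h01 x).2)
  have hcentered : ∫ x, h x - ∫ y, h y ∂γ ∂γ = 0 := by
    simp [integral_sub hint (integrable_const _)]
  rw [integral_gaussianReal_eq_integral_smul one_ne_zero] at hcentered
  simpa only [smul_eq_mul, mul_comm] using hcentered

lemma abs_setIntegral_Iic_centered_le (hc : Continuous h) (h01 : ∀ x, h x ∈ Icc 0 1) (w : ℝ) :
    |∫ x in Iic w, (h x - ∫ y, h y ∂γ) * φ x| ≤ ∫ x in Ioi |w|, φ x := by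
  have hint := integrable_centered_mul_gaussianPDFReal hc h01
  have hle (s : Set ℝ) : |∫ x in s, (h x - ∫ y, h y ∂γ) * φ x| ≤ ∫ x in s, φ x :=
    abs_integral_le_integral_abs.trans <| integral_mono hint.abs.integrableOn
      integrable_gaussianPDFReal_zero_one.integrableOn (abs_centered_mul_gaussianPDFReal_le hc h01)
  rcases le_total 0 w with hw | hw
  · have hsplit := intervalIntegral.integral_Iic_add_Ioi (b := w)
      hint.integrableOn hint.integrableOn
    rw [integral_centered_mul_gaussianPDFReal hc h01] at hsplit
    rw [eq_neg_of_add_eq_zero_left hsplit, abs_neg, abs_of_nonneg hw]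
    exact hle _
  · rw [abs_of_nonpos hw, ← setIntegral_Iic_neg_gaussianPDFReal, neg_neg]
    exact hle _

lemma abs_steinSolution_le (hc : Continuous h) (h01 : ∀ x, h x ∈ Icc 0 1) (w : ℝ) :
    |steinSolution h w| ≤ 2 := by
  have hφ := gaussianPDFReal_zero_one_pos w
  have htail := setIntegral_Ioi_gaussianPDFReal_le (abs_nonneg w)
  rw [gaussianPDFReal_zero_one_abs] at htail
  rw [steinSolution, abs_mul, abs_inv, abs_of_pos hφ, inv_mul_le_iff₀ hφ, mul_comm]
  exact (abs_setIntegral_Iic_centered_le hc h01 w).trans htail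

lemma abs_mul_steinSolution_le (hc : Continuous h) (h01 : ∀ x, h x ∈ Icc 0 1) (w : ℝ) :
    |w * steinSolution h w| ≤ 1 := by
  have hφ := gaussianPDFReal_zero_one_pos w
  have htail := mul_setIntegral_Ioi_gaussianPDFReal_le (abs_nonneg w)
  rw [gaussianPDFReal_zero_one_abs] at htail
  rw [steinSolution, mul_left_comm, abs_mul, abs_mul, abs_inv, abs_of_pos hφ,
    inv_mul_le_iff₀ hφ, mul_one]
  exact (mul_le_mul_of_nonneg_left (abs_setIntegral_Iic_centered_le hc h01 w)
    (abs_nonneg w)).trans htail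

lemma abs_steinDeriv_le (hc : Continuous h) (h01 : ∀ x, h x ∈ Icc 0 1) (w : ℝ) :
    |steinDeriv h w| ≤ 2 := by
  refine (abs_add_le _ _).trans ?_
  linarith [abs_mul_steinSolution_le hc h01 w, abs_sub_integral_gaussian_le_one hc h01 w]

lemma hasDerivAt_setIntegral_Iic {u : ℝ → ℝ} (hu : Continuous u) (hint : Integrable u) (w : ℝ) :
    HasDerivAt (fun w => ∫ x in Iic w, u x) (u w) w := by
  have hsplit : (fun w => ∫ x in Iic w, u x) =
      fun w => (∫ x in Iic 0, u x) + ∫ x in (0 : ℝ)..w, u x := by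
    funext w
    rw [← intervalIntegral.integral_Iic_sub_Iic hint.integrableOn hint.integrableOn]
    ring
  rw [hsplit]
  exact (intervalIntegral.integral_hasDerivAt_right (hu.intervalIntegrable 0 w)
    (hu.stronglyMeasurableAtFilter _ _) hu.continuousAt).const_add _

lemma hasDerivAt_steinSolution (hc : Continuous h) (h01 : ∀ x, h x ∈ Icc 0 1) (w : ℝ) :
    HasDerivAt (steinSolution h) (steinDeriv h w) w := by
  have hφ := (gaussianPDFReal_zero_one_pos w).ne'
  refine (((hasDerivAt_gaussianPDFReal_zero_one w).inv hφ).mul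
    (hasDerivAt_setIntegral_Iic (continuous_centered_mul_gaussianPDFReal hc)
      (integrable_centered_mul_gaussianPDFReal hc h01) w)).congr_deriv ?_
  simp only [steinDeriv, steinSolution, Pi.inv_apply]
  field_simp

lemma continuous_steinSolution (hc : Continuous h) (h01 : ∀ x, h x ∈ Icc 0 1) :
    Continuous (steinSolution h) :=
  continuous_iff_continuousAt.2 fun w => (hasDerivAt_steinSolution hc h01 w).continuousAt

lemma continuous_steinDeriv (hc : Continuous h) (h01 : ∀ x, h x ∈ Icc 0 1) :
    Continuous (steinDeriv h) :=
  (continuous_id.mul (continuous_steinSolution hc h01)).add (hc.sub continuous_const)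

end SteinSolution

/-! ### Smoothing -/

lemma stdGaussianCDF_eq_gaussianReal_real_Iic (z : ℝ) : stdGaussianCDF z = (γ).real (Iic z) := by
  rw [measureReal_def, gaussianReal_apply_eq_integral 0 one_ne_zero, ENNReal.toReal_ofReal
    (integral_nonneg (gaussianPDFReal_nonneg 0 1))]
  exact integral_congr_ae (.of_forall fun x => (gaussianPDFReal_zero_one x).symm)

lemma gaussianReal_real_Ioc_le (z : ℝ) {t : ℝ} (ht : 0 ≤ t) :
    (γ).real (Ioc z (z + t)) ≤ t / 2 := by
  have hint : IntegrableOn φ (Ioc z (z + t)) := integrable_gaussianPDFReal_zero_one.integrableOn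
  rw [measureReal_def, gaussianReal_apply_eq_integral 0 one_ne_zero, ENNReal.toReal_ofReal
    (integral_nonneg (gaussianPDFReal_nonneg 0 1))]
  calc ∫ x in Ioc z (z + t), φ x ≤ ∫ _ in Ioc z (z + t), (1 / 2 : ℝ) :=
        integral_mono hint (integrable_const _) gaussianPDFReal_zero_one_le_half
    _ = t / 2 := by simp [ht]; ring

/-- The piecewise linear function equal to `0` on `(-∞, 0]`, to `w` on `[0, α]` and to `α` on
`[α, ∞)`; its increments smooth the indicators of intervals. -/
noncomputable def ramp (α w : ℝ) : ℝ := max 0 (min w α)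

section Ramp

variable {α : ℝ}

lemma continuous_ramp : Continuous (ramp α) := by unfold ramp; fun_prop

lemma ramp_nonneg (w : ℝ) : 0 ≤ ramp α w := le_max_left _ _

lemma ramp_le (hα : 0 ≤ α) (w : ℝ) : ramp α w ≤ α := max_le hα (min_le_right _ _)

lemma monotone_ramp : Monotone (ramp α) := fun x y h => by unfold ramp; gcongr

lemma ramp_of_nonpos {w : ℝ} (hw : w ≤ 0) : ramp α w = 0 :=
  max_eq_left ((min_le_left _ _).trans hw)

lemma ramp_of_le (hα : 0 ≤ α) {w : ℝ} (hw : α ≤ w) : ramp α w = α := by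
  rw [ramp, min_eq_right hw, max_eq_right hα]

/-- A continuous approximation of the indicator of `(-∞, z]`, linear on `[z, z + α]`. -/
noncomputable def smoothIndicator (α z w : ℝ) : ℝ := 1 - ramp α (w - z) / α

lemma continuous_smoothIndicator (z : ℝ) : Continuous (smoothIndicator α z) :=
  continuous_const.sub ((continuous_ramp.comp (continuous_id.sub continuous_const)).div_const _)

lemma smoothIndicator_mem_Icc (hα : 0 < α) (z w : ℝ) : smoothIndicator α z w ∈ Icc 0 1 :=
  ⟨sub_nonneg.2 ((div_le_one hα).2 (ramp_le hα.le _)),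
    sub_le_self _ (div_nonneg (ramp_nonneg _) hα.le)⟩

lemma smoothIndicator_of_le {z w : ℝ} (h : w ≤ z) : smoothIndicator α z w = 1 := by
  simp [smoothIndicator, ramp_of_nonpos (sub_nonpos.2 h)]

lemma smoothIndicator_of_ge (hα : 0 < α) {z w : ℝ} (h : z + α ≤ w) :
    smoothIndicator α z w = 0 := by
  simp [smoothIndicator, ramp_of_le hα.le (le_sub_iff_add_le'.2 h), hα.ne']

variable (ρ : Measure ℝ) [IsProbabilityMeasure ρ]

lemma integrable_smoothIndicator (hα : 0 < α) (z : ℝ) : Integrable (smoothIndicator α z) ρ :=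
  .of_bound (continuous_smoothIndicator z).aestronglyMeasurable 1 (.of_forall fun w => by
    rw [norm_of_nonneg (smoothIndicator_mem_Icc hα z w).1]
    exact (smoothIndicator_mem_Icc hα z w).2)

lemma measureReal_Iic_le_integral_smoothIndicator (hα : 0 < α) (z : ℝ) :
    ρ.real (Iic z) ≤ ∫ w, smoothIndicator α z w ∂ρ := by
  rw [← integral_indicator_one measurableSet_Iic]
  refine integral_mono ((integrable_const 1).indicator measurableSet_Iic)
    (integrable_smoothIndicator ρ hα z) (indicator_le' (fun w hw => ?_) fun w _ => ?_)
  · exact (smoothIndicator_of_le hw).ge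
  · exact (smoothIndicator_mem_Icc hα z w).1

lemma integral_smoothIndicator_le_measureReal_Iic (hα : 0 < α) (z : ℝ) :
    ∫ w, smoothIndicator α z w ∂ρ ≤ ρ.real (Iic (z + α)) := by
  rw [← integral_indicator_one measurableSet_Iic]
  refine integral_mono (integrable_smoothIndicator ρ hα z)
    ((integrable_const 1).indicator measurableSet_Iic) fun w => le_indicator_apply (fun _ => ?_)
      fun hw => ?_
  · exact (smoothIndicator_mem_Icc hα z w).2
  · exact (smoothIndicator_of_ge hα (not_le.1 hw).le).le

lemma measureReal_Iic_add (z : ℝ) {t : ℝ} (ht : 0 ≤ t) :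
    ρ.real (Iic (z + t)) = ρ.real (Iic z) + ρ.real (Ioc z (z + t)) := by
  rw [← Iic_union_Ioc_eq_Iic (le_add_of_nonneg_right ht),
    measureReal_union (Iic_disjoint_Ioc le_rfl) measurableSet_Ioc]

lemma abs_measureReal_Iic_sub_gaussian_le (hα : 0 < α) {T : ℝ}
    (hT : ∀ z, |∫ w, smoothIndicator α z w ∂ρ - ∫ w, smoothIndicator α z w ∂γ| ≤ T) (z : ℝ) :
    |ρ.real (Iic z) - (γ).real (Iic z)| ≤ T + α / 2 := by
  have hright := abs_le.1 (hT z)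
  have hleft := abs_le.1 (hT (z - α))
  have hγright := measureReal_Iic_add γ z hα.le
  have hγleft := measureReal_Iic_add γ (z - α) hα.le
  have hρ := integral_smoothIndicator_le_measureReal_Iic ρ hα (z - α)
  rw [sub_add_cancel] at hγleft hρ
  have hmassright := gaussianReal_real_Ioc_le z hα.le
  have hmassleft := gaussianReal_real_Ioc_le (z - α) hα.le
  rw [sub_add_cancel] at hmassleft
  rw [abs_le]
  constructor <;>
    linarith [measureReal_Iic_le_integral_smoothIndicator ρ hα z,
      integral_smoothIndicator_le_measureReal_Iic γ hα z,
      measureReal_Iic_le_integral_smoothIndicator γ hα (z - α)]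

end Ramp

/-! ### Ramp increments and trapezoids -/

local notation "ν" => (volume.restrict (Ioc (-1) 1) : Measure ℝ)

section Trapezoid

variable {α : ℝ}

lemma ramp_sub_ramp_le_max {u v : ℝ} (hα : 0 ≤ α) (huv : u ≤ v) :
    ramp α v - ramp α u ≤ max (min v α - max u 0) 0 := by
  unfold ramp
  grind

lemma ramp_sub_ramp_le_integral {u v : ℝ} (hα : 0 ≤ α) (huv : u ≤ v) :
    ramp α v - ramp α u ≤
      ∫ s in (0 : ℝ)..1, (v - u) * (Icc 0 α).indicator 1 (u + s * (v - u)) := by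
  have hchange : ∫ s in (0 : ℝ)..1, (v - u) * (Icc 0 α).indicator (1 : ℝ → ℝ) (u + s * (v - u)) =
      ∫ x in u..v, (Icc 0 α).indicator 1 x := by
    rw [intervalIntegral.integral_const_mul, ← smul_eq_mul]
    simpa [mul_comm] using
      intervalIntegral.smul_integral_comp_add_mul (a := 0) (b := 1)
        ((Icc 0 α).indicator (1 : ℝ → ℝ)) (v - u) u
  have hvolume : volume.real (Ioc (max u 0) (min v α)) ≤ volume.real (Icc 0 α ∩ Ioc u v) := by
    refine measureReal_mono (fun x hx => ?_)
      ((measure_mono inter_subset_right).trans_lt measure_Ioc_lt_top).ne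
    exact ⟨⟨(le_max_right _ _).trans hx.1.le, hx.2.trans (min_le_right _ _)⟩,
      ⟨(le_max_left _ _).trans_lt hx.1, hx.2.trans (min_le_left _ _)⟩⟩
  rw [hchange, intervalIntegral.integral_of_le huv, integral_indicator_one measurableSet_Icc,
    measureReal_restrict_apply measurableSet_Icc]
  rw [Real.volume_real_Ioc] at hvolume
  exact (ramp_sub_ramp_le_max hα huv).trans hvolume

/-- The trapezoid function with value `1` on `[0, α]`, vanishing outside `[-α, 2 * α]`. -/
noncomputable def trapezoid (α t : ℝ) : ℝ := (ramp α (t + α) - ramp α (t - α)) / α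

lemma continuous_trapezoid : Continuous (trapezoid α) :=
  ((continuous_ramp.comp (continuous_id.add continuous_const)).sub
    (continuous_ramp.comp (continuous_id.sub continuous_const))).div_const _

lemma trapezoid_nonneg (hα : 0 < α) (t : ℝ) : 0 ≤ trapezoid α t :=
  div_nonneg (sub_nonneg.2 (monotone_ramp (by linarith))) hα.le

lemma trapezoid_le_one (hα : 0 < α) (t : ℝ) : trapezoid α t ≤ 1 :=
  (div_le_one hα).2 (by linarith [ramp_le hα.le (t + α), ramp_nonneg (α := α) (t - α)])

lemma trapezoid_of_mem_Icc (hα : 0 < α) {t : ℝ} (ht : t ∈ Icc 0 α) : trapezoid α t = 1 := by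
  rw [trapezoid, ramp_of_le hα.le (by linarith [ht.1]), ramp_of_nonpos (by linarith [ht.2]),
    sub_zero, div_self hα.ne']

lemma trapezoid_of_le (hα : 0 < α) {t : ℝ} (ht : t ≤ -α) : trapezoid α t = 0 := by
  simp [trapezoid, ramp_of_nonpos (show t + α ≤ 0 by linarith),
    ramp_of_nonpos (show t - α ≤ 0 by linarith)]

lemma trapezoid_of_ge (hα : 0 < α) {t : ℝ} (ht : 2 * α ≤ t) : trapezoid α t = 0 := by
  simp [trapezoid, ramp_of_le hα.le (show α ≤ t + α by linarith),
    ramp_of_le hα.le (show α ≤ t - α by linarith)]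

lemma indicator_Icc_le_trapezoid (hα : 0 < α) (t : ℝ) :
    (Icc 0 α).indicator 1 t ≤ trapezoid α t :=
  indicator_apply_le' (fun ht => (trapezoid_of_mem_Icc hα ht).ge) fun _ => trapezoid_nonneg hα t

lemma trapezoid_sq_le_indicator (hα : 0 < α) (t : ℝ) :
    trapezoid α t ^ 2 ≤ (Icc (-α) (2 * α)).indicator 1 t := by
  refine le_indicator_apply (fun _ => ?_) fun ht => ?_
  · exact pow_le_one₀ (trapezoid_nonneg hα t) (trapezoid_le_one hα t)
  · rcases le_total t (-α) with h | h
    · simp [trapezoid_of_le hα h]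
    · simp [trapezoid_of_ge hα (not_le.1 fun h' => ht ⟨h, h'⟩).le]

lemma integral_trapezoid_sq_le (hα : 0 < α) (x : ℝ) :
    ∫ t, trapezoid α (x + t) ^ 2 ∂ν ≤ 3 * α := by
  have hset : (fun t => (Icc (-α) (2 * α)).indicator (1 : ℝ → ℝ) (x + t)) =
      (Icc (-α - x) (2 * α - x)).indicator 1 := by
    funext t
    simp only [indicator_apply, mem_Icc, sub_le_iff_le_add', le_sub_iff_add_le', Pi.one_apply]
  have hint : Integrable ((Icc (-α - x) (2 * α - x)).indicator (1 : ℝ → ℝ)) :=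
    (integrable_indicator_iff measurableSet_Icc).2 (integrableOn_const (by simp))
  calc ∫ t, trapezoid α (x + t) ^ 2 ∂ν
      ≤ ∫ t, (Icc (-α - x) (2 * α - x)).indicator 1 t ∂ν := by
        refine integral_mono_of_nonneg (.of_forall fun t => sq_nonneg _) hint.restrict
          (.of_forall fun t => ?_)
        rw [← hset]
        exact trapezoid_sq_le_indicator hα (x + t)
    _ ≤ ∫ t, (Icc (-α - x) (2 * α - x)).indicator 1 t :=
        setIntegral_le_integral hint (.of_forall (indicator_nonneg fun _ _ => zero_le_one))
    _ = 3 * α := by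
        rw [integral_indicator_one measurableSet_Icc, Real.volume_real_Icc_of_le (by linarith)]
        ring

/-- The primitive of `trapezoid α` that vanishes at the centre `α / 2`. -/
noncomputable def trapezoidPrimitive (α t : ℝ) : ℝ := ∫ s in (α / 2)..t, trapezoid α s

lemma trapezoidPrimitive_sub (x y : ℝ) :
    trapezoidPrimitive α x - trapezoidPrimitive α y = ∫ s in y..x, trapezoid α s :=
  intervalIntegral.integral_interval_sub_left (continuous_trapezoid.intervalIntegrable _ _)
    (continuous_trapezoid.intervalIntegrable _ _)

lemma abs_trapezoidPrimitive_sub_le (hα : 0 < α) (x y : ℝ) :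
    |trapezoidPrimitive α x - trapezoidPrimitive α y| ≤ |x - y| := by
  rw [trapezoidPrimitive_sub]
  simpa using intervalIntegral.norm_integral_le_of_norm_le_const (a := y) (b := x)
    (f := trapezoid α) (C := 1) fun s _ => by
      rw [norm_of_nonneg (trapezoid_nonneg hα s)]
      exact trapezoid_le_one hα s

lemma continuous_trapezoidPrimitive : Continuous (trapezoidPrimitive α) :=
  intervalIntegral.continuous_primitive (fun _ _ => continuous_trapezoid.intervalIntegrable _ _) _

lemma trapezoidPrimitive_eq_of_forall_eq_zero {a b : ℝ} (hab : a ≤ b)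
    (h : ∀ s ∈ Ioc a b, trapezoid α s = 0) :
    trapezoidPrimitive α b = trapezoidPrimitive α a := by
  rw [← sub_eq_zero, trapezoidPrimitive_sub]
  exact intervalIntegral.integral_zero_ae (.of_forall fun s hs => h s (uIoc_of_le hab ▸ hs))

lemma abs_trapezoidPrimitive_le (hα : 0 < α) (t : ℝ) :
    |trapezoidPrimitive α t| ≤ 3 / 2 * α := by
  have hcore : ∀ c ∈ Icc (-α) (2 * α), |trapezoidPrimitive α c| ≤ 3 / 2 * α := fun c hc => by
    have hlip := abs_trapezoidPrimitive_sub_le hα c (α / 2)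
    rw [show trapezoidPrimitive α (α / 2) = 0 from intervalIntegral.integral_same,
      sub_zero] at hlip
    exact hlip.trans (abs_le.2 ⟨by linarith [hc.1], by linarith [hc.2]⟩)
  rcases le_total t (-α) with hleft | hleft
  · rw [← trapezoidPrimitive_eq_of_forall_eq_zero hleft fun s hs => trapezoid_of_le hα hs.2]
    exact hcore _ ⟨le_rfl, by linarith⟩
  rcases le_total t (2 * α) with hright | hright
  · exact hcore _ ⟨hleft, hright⟩
  · rw [trapezoidPrimitive_eq_of_forall_eq_zero hright fun s hs => trapezoid_of_ge hα hs.1.le]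
    exact hcore _ ⟨by linarith, le_rfl⟩

end Trapezoid

/-! ### The truncated Stein kernel -/

/-- Truncation of `y` to `[-1, 1]`. -/
noncomputable def clip (y : ℝ) : ℝ := max (-1) (min y 1)

lemma continuous_clip : Continuous clip := by unfold clip; fun_prop

lemma abs_clip (y : ℝ) : |clip y| = min 1 |y| := by
  rcases le_total 0 y with h | h
  · rw [clip, abs_of_nonneg h, max_eq_right (by linarith [le_min h zero_le_one]),
      abs_of_nonneg (le_min h zero_le_one), min_comm]
  · rw [clip, min_eq_left (by linarith), abs_of_nonpos h, abs_of_nonpos (max_le (by norm_num) h),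
      ← min_neg_neg, neg_neg]

lemma abs_clip_le_one (y : ℝ) : |clip y| ≤ 1 := (abs_clip y).trans_le (min_le_left _ _)

lemma abs_sub_clip_le (y : ℝ) : |y - clip y| ≤ |y| * min 1 |y| := by
  rcases le_total 1 |y| with h | h
  · rw [min_eq_left h, mul_one, clip]
    grind
  · rw [clip, min_eq_left (abs_le.1 h).2, max_eq_right (abs_le.1 h).1, sub_self, abs_zero]
    positivity

/-- The kernel `K` for which `f w - f (w - c) = ∫ f' (w + t) * K y t dt` with `c = clip y`. -/
noncomputable def steinKernel (y t : ℝ) : ℝ :=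
  (Ioc (-clip y) 0).indicator 1 t - (Ioc 0 (-clip y)).indicator 1 t

lemma abs_steinKernel (y t : ℝ) : |steinKernel y t| = (uIoc (-clip y) 0).indicator 1 t := by
  rw [uIoc_eq_union]
  simp only [steinKernel, indicator_apply, mem_Ioc, mem_union, Pi.one_apply]
  grind

lemma abs_steinKernel_le_one (y t : ℝ) : |steinKernel y t| ≤ 1 := by
  rw [abs_steinKernel]
  exact indicator_le_self' (fun _ _ => zero_le_one) t

lemma sq_steinKernel (y t : ℝ) : steinKernel y t ^ 2 = |steinKernel y t| := by
  rw [← sq_abs, abs_steinKernel]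
  by_cases h : t ∈ uIoc (-clip y) 0 <;> simp [h]

lemma abs_mul_abs_steinKernel_le (y t : ℝ) :
    |t| * |steinKernel y t| ≤ min 1 |y| * |steinKernel y t| := by
  rw [abs_steinKernel, ← abs_clip]
  by_cases h : t ∈ uIoc (-clip y) 0
  · simpa [h] using abs_sub_right_of_mem_uIcc (uIoc_subset_uIcc h)
  · simp [h]

lemma measurable_uncurry_steinKernel : Measurable (Function.uncurry steinKernel) := by
  have hclip : Measurable fun p : ℝ × ℝ => -clip p.1 :=
    (continuous_clip.measurable.comp measurable_fst).neg
  refine (Measurable.ite ?_ measurable_const measurable_const).sub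
    (Measurable.ite ?_ measurable_const measurable_const)
  · exact (measurableSet_lt hclip measurable_snd).inter
      (measurableSet_le measurable_snd measurable_const)
  · exact (measurableSet_lt measurable_const measurable_snd).inter
      (measurableSet_le measurable_snd hclip)

lemma uIoc_neg_clip_subset (y : ℝ) : uIoc (-clip y) 0 ⊆ Ioc (-1) 1 := by
  have h := abs_le.1 (abs_clip_le_one y)
  exact Ioc_subset_Ioc (le_min (by linarith) (by norm_num)) (max_le (by linarith) (by norm_num))

lemma integral_mul_steinKernel (y : ℝ) {ψ : ℝ → ℝ} (hψ : Continuous ψ) :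
    ∫ t, ψ t * steinKernel y t ∂ν = ∫ t in (-clip y)..0, ψ t := by
  have hsub := uIoc_neg_clip_subset y
  rw [uIoc_eq_union, union_subset_iff] at hsub
  have hint (a b : ℝ) : Integrable ((Ioc a b).indicator ψ) ν :=
    ((integrable_indicator_iff measurableSet_Ioc).2 (hψ.integrableOn_Ioc)).restrict
  have hsplit : ∀ t, ψ t * steinKernel y t =
      (Ioc (-clip y) 0).indicator ψ t - (Ioc 0 (-clip y)).indicator ψ t := fun t => by
    simp only [steinKernel, indicator_apply, Pi.one_apply]
    split_ifs <;> ring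
  simp only [hsplit]
  rw [integral_sub (hint _ _) (hint _ _), setIntegral_indicator measurableSet_Ioc,
    setIntegral_indicator measurableSet_Ioc, inter_eq_right.2 hsub.1, inter_eq_right.2 hsub.2,
    intervalIntegral]

lemma integral_steinKernel (y : ℝ) : ∫ t, steinKernel y t ∂ν = clip y := by
  simpa using integral_mul_steinKernel y (continuous_const (y := (1 : ℝ)))

lemma integral_abs_steinKernel (y : ℝ) : ∫ t, |steinKernel y t| ∂ν = min 1 |y| := by
  simp only [abs_steinKernel]
  rw [integral_indicator_one measurableSet_uIoc, measureReal_restrict_apply measurableSet_uIoc,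
    inter_eq_left.2 (uIoc_neg_clip_subset y), measureReal_def, Real.volume_uIoc, ← abs_clip]
  simp

lemma integral_trapezoid_mul_steinKernel (α w y : ℝ) :
    ∫ t, trapezoid α (w + t) * steinKernel y t ∂ν =
      trapezoidPrimitive α w - trapezoidPrimitive α (w - clip y) := by
  have hcont : Continuous fun t => trapezoid α (w + t) :=
    continuous_trapezoid.comp (continuous_const_add w)
  rw [integral_mul_steinKernel y hcont, intervalIntegral.integral_comp_add_left,
    trapezoidPrimitive_sub, add_zero, ← sub_eq_add_neg]

lemma integral_trapezoid_mul_steinKernel_sub_le {α : ℝ} (hα : 0 < α) (w x y : ℝ) :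
    ∫ t, trapezoid α (w + t) * (x * steinKernel y t) ∂ν - |x| * (|y| * min 1 |y|) ≤
      x * (trapezoidPrimitive α w - trapezoidPrimitive α (w - y)) := by
  have htrunc : |trapezoidPrimitive α (w - y) - trapezoidPrimitive α (w - clip y)| ≤
      |y| * min 1 |y| := by
    refine (abs_trapezoidPrimitive_sub_le hα _ _).trans ?_
    rw [sub_sub_sub_cancel_left, abs_sub_comm]
    exact abs_sub_clip_le y
  have herror := (le_abs_self _).trans_eq
    (abs_mul x (trapezoidPrimitive α (w - y) - trapezoidPrimitive α (w - clip y)))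
  simp only [mul_left_comm _ x]
  rw [integral_const_mul, integral_trapezoid_mul_steinKernel]
  linarith [mul_le_mul_of_nonneg_left htrunc (abs_nonneg x)]

/-! ### Locally dependent fields -/

section PartialSums

variable {Ω ι : Type*} {X : ι → Ω → ℝ} {S T : Finset ι}

/-- The σ-algebra generated by the variables `X j`, `j ∈ S`. -/
@[reducible] def sigmaOf (X : ι → Ω → ℝ) (S : Finset ι) : MeasurableSpace Ω :=
  MeasurableSpace.comap (fun ω (a : S) => X a ω) inferInstance

/-- The sum of the variables indexed by `S`. -/
def partialSum (X : ι → Ω → ℝ) (S : Finset ι) (ω : Ω) : ℝ := ∑ j ∈ S, X j ω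

/-- The sum of the absolute values of the variables indexed by `S`. -/
def absSum (X : ι → Ω → ℝ) (S : Finset ι) (ω : Ω) : ℝ := ∑ j ∈ S, |X j ω|

lemma sigmaOf_mono (h : S ⊆ T) : sigmaOf X S ≤ sigmaOf X T := by
  have hrestrict : Measurable fun (g : T → ℝ) (a : S) => g ⟨a, h a.2⟩ :=
    measurable_pi_lambda _ fun a => measurable_pi_apply _
  exact (hrestrict.comp (comap_measurable fun ω (a : T) => X a ω)).comap_le

lemma measurable_sigmaOf {j : ι} (h : j ∈ S) : Measurable[sigmaOf X S] (X j) :=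
  (measurable_pi_apply (⟨j, h⟩ : S)).comp (comap_measurable fun ω (a : S) => X a ω)

lemma measurable_partialSum_sigmaOf (h : S ⊆ T) : Measurable[sigmaOf X T] (partialSum X S) :=
  Finset.measurable_fun_sum _ fun _ hj => measurable_sigmaOf (h hj)

lemma measurable_absSum_sigmaOf (h : S ⊆ T) : Measurable[sigmaOf X T] (absSum X S) :=
  Finset.measurable_fun_sum _ fun _ hj =>
    continuous_abs.measurable.comp (measurable_sigmaOf (h hj))

lemma sigmaOf_le [mΩ : MeasurableSpace Ω] (hX : ∀ i, Measurable (X i)) : sigmaOf X S ≤ mΩ :=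
  (measurable_pi_lambda _ fun a : S => hX a).comap_le

lemma absSum_nonneg (ω : Ω) : 0 ≤ absSum X S ω := Finset.sum_nonneg fun _ _ => abs_nonneg _

lemma absSum_mono (h : S ⊆ T) (ω : Ω) : absSum X S ω ≤ absSum X T ω :=
  Finset.sum_le_sum_of_subset_of_nonneg h fun _ _ _ => abs_nonneg _

lemma abs_partialSum_le_absSum (ω : Ω) : |partialSum X S ω| ≤ absSum X S ω :=
  Finset.abs_sum_le_sum_abs _ _

end PartialSums

section Neighbourhoods

variable {ι : Type*} [Fintype ι] [PseudoMetricSpace ι]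

/-- The indices within distance `r` of `i`. -/
noncomputable def near (r : ℝ) (i : ι) : Finset ι := {j | dist i j ≤ r}

/-- The indices at distance more than `r` from `i`. -/
noncomputable def far (r : ℝ) (i : ι) : Finset ι := {j | ¬dist i j ≤ r}

lemma mem_near {r : ℝ} {i j : ι} : j ∈ near r i ↔ dist i j ≤ r := by simp [near]

lemma mem_far {r : ℝ} {i j : ι} : j ∈ far r i ↔ r < dist i j := by simp [far]

lemma near_mono {r s : ℝ} (h : r ≤ s) (i : ι) : near r i ⊆ near s i := fun _ hj =>
  mem_near.2 ((mem_near.1 hj).trans h)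

lemma sum_near_add_sum_far (r : ℝ) (i : ι) (f : ι → ℝ) :
    ∑ j ∈ near r i, f j + ∑ j ∈ far r i, f j = ∑ j, f j :=
  Finset.sum_filter_add_sum_filter_not _ _ _

lemma partialSum_near_add_partialSum_far {Ω : Type*} (X : ι → Ω → ℝ) (r : ℝ) (i : ι) (ω : Ω) :
    partialSum X (near r i) ω + partialSum X (far r i) ω = partialSum X Finset.univ ω :=
  sum_near_add_sum_far r i _

lemma sum_sum_near_comm (r : ℝ) (f : ι → ι → ℝ) :
    ∑ i, ∑ j ∈ near r i, f i j = ∑ i, ∑ j ∈ near r i, f j i := by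
  refine Finset.sum_comm' fun i j => ?_
  simp [mem_near, dist_comm]

variable {Ω : Type*} {X : ι → Ω → ℝ} {m : ℝ}

/-- The sum of the field over the dependence neighbourhood of `i`. -/
noncomputable abbrev localSum (X : ι → Ω → ℝ) (m : ℝ) (i : ι) : Ω → ℝ := partialSum X (near m i)

/-- The mass `∑ |X j|` of the field over the indices within distance `4 * m` of `i`. -/
noncomputable def localMass (X : ι → Ω → ℝ) (m : ℝ) (i : ι) : Ω → ℝ := absSum X (near (4 * m) i)

lemma localMass_nonneg (i : ι) (ω : Ω) : 0 ≤ localMass X m i ω := absSum_nonneg ω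

lemma abs_partialSum_near_le_localMass {r : ℝ} (hr : r ≤ 4 * m) (i : ι) (ω : Ω) :
    |partialSum X (near r i) ω| ≤ localMass X m i ω :=
  (abs_partialSum_le_absSum ω).trans (absSum_mono (near_mono hr i) ω)

end Neighbourhoods

section Independence

variable {Ω : Type*} {m₁ m₂ : MeasurableSpace Ω} [mΩ : MeasurableSpace Ω] {μ : Measure Ω}
  {f g : Ω → ℝ}

lemma indepFun_of_indep (h : Indep m₁ m₂ μ) (hf : Measurable[m₁] f) (hg : Measurable[m₂] g) :
    IndepFun f g μ :=
  indep_of_indep_of_le_left (indep_of_indep_of_le_right h hg.comap_le) hf.comap_le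

lemma integral_mul_of_indep (h : Indep m₁ m₂ μ) (hm₁ : m₁ ≤ mΩ) (hm₂ : m₂ ≤ mΩ)
    (hf : Measurable[m₁] f) (hg : Measurable[m₂] g) :
    ∫ ω, f ω * g ω ∂μ = (∫ ω, f ω ∂μ) * ∫ ω, g ω ∂μ :=
  (indepFun_of_indep h hf hg).integral_fun_mul_eq_mul_integral
    (hf.mono hm₁ le_rfl).aestronglyMeasurable (hg.mono hm₂ le_rfl).aestronglyMeasurable

end Independence

lemma integrable_mul_min_one {Ω : Type*} [MeasurableSpace Ω] {μ : Measure Ω} {u v : Ω → ℝ}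
    (hu : Integrable u μ) (hv : Measurable v) (hv0 : ∀ ω, 0 ≤ v ω) :
    Integrable (fun ω => u ω * min 1 (v ω)) μ :=
  hu.mul_bdd (c := 1) (measurable_const.min hv).aestronglyMeasurable
    (.of_forall fun ω => by
      rw [norm_of_nonneg (le_min zero_le_one (hv0 ω))]
      exact min_le_left _ _)

section Fields

variable {Ω ι : Type*} [mΩ : MeasurableSpace Ω] [PseudoMetricSpace ι]

/-- A centred square integrable field in which subfamilies whose index sets are more than `m`
apart are independent. -/
structure LocallyDependent (μ : Measure Ω) (X : ι → Ω → ℝ) (m : ℝ) : Prop where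
  measurable : ∀ i, Measurable (X i)
  memLp_two : ∀ i, MemLp (X i) 2 μ
  integral_eq_zero : ∀ i, ∫ ω, X i ω ∂μ = 0
  indepFun : ∀ S T : Finset ι, (∀ i ∈ S, ∀ j ∈ T, m < dist i j) →
    IndepFun (fun ω (a : S) => X a ω) (fun ω (b : T) => X b ω) μ

variable {μ : Measure Ω} {X : ι → Ω → ℝ} {m : ℝ}

namespace LocallyDependent

lemma sigmaOf_le (hX : LocallyDependent μ X m) (S : Finset ι) : sigmaOf X S ≤ mΩ :=
  LocalDependence.sigmaOf_le hX.measurable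

lemma indep (hX : LocallyDependent μ X m) {S T : Finset ι}
    (h : ∀ i ∈ S, ∀ j ∈ T, m < dist i j) : Indep (sigmaOf X S) (sigmaOf X T) μ :=
  hX.indepFun S T h

lemma measurable_partialSum (hX : LocallyDependent μ X m) (S : Finset ι) :
    Measurable (partialSum X S) :=
  (measurable_partialSum_sigmaOf subset_rfl).mono (hX.sigmaOf_le S) le_rfl

lemma measurable_absSum (hX : LocallyDependent μ X m) (S : Finset ι) : Measurable (absSum X S) :=
  (measurable_absSum_sigmaOf subset_rfl).mono (hX.sigmaOf_le S) le_rfl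

lemma memLp_partialSum (hX : LocallyDependent μ X m) (S : Finset ι) :
    MemLp (partialSum X S) 2 μ :=
  memLp_finsetSum S fun i _ => hX.memLp_two i

lemma memLp_absSum (hX : LocallyDependent μ X m) (S : Finset ι) : MemLp (absSum X S) 2 μ :=
  memLp_finsetSum S fun i _ => (hX.memLp_two i).abs

variable [Fintype ι]

lemma integral_mul_eq_zero_of_far (hX : LocallyDependent μ X m) (j : ι) {g : Ω → ℝ}
    (hg : Measurable[sigmaOf X (far m j)] g) : ∫ ω, X j ω * g ω ∂μ = 0 := by
  have hindep : Indep (sigmaOf X {j}) (sigmaOf X (far m j)) μ := hX.indep fun i hi k hk => by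
    rw [Finset.mem_singleton.1 hi]
    exact mem_far.1 hk
  rw [integral_mul_of_indep hindep (hX.sigmaOf_le _) (hX.sigmaOf_le _)
    (measurable_sigmaOf (Finset.mem_singleton_self j)) hg, hX.integral_eq_zero, zero_mul]

lemma integral_mul_partialSum_univ (hX : LocallyDependent μ X m) (j : ι) :
    ∫ ω, X j ω * partialSum X Finset.univ ω ∂μ =
      ∫ ω, X j ω * localSum X m j ω ∂μ := by
  have hint : ∀ S, Integrable (fun ω => X j ω * partialSum X S ω) μ := fun S =>
    (hX.memLp_two j).integrable_mul (hX.memLp_partialSum S)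
  simp only [← partialSum_near_add_partialSum_far X m j, mul_add]
  rw [integral_add (hint _) (hint _),
    hX.integral_mul_eq_zero_of_far j (measurable_partialSum_sigmaOf subset_rfl), add_zero]

end LocallyDependent

variable [Fintype ι]

/-- The dependence structure and moment bounds under which Stein's method yields a normal
approximation error of order `b`. -/
structure NormalApproxData (μ : Measure Ω) (X : ι → Ω → ℝ) (m κ b : ℝ) : Prop
    extends LocallyDependent μ X m where
  range_nonneg : 0 ≤ m
  card_near_le : ∀ i : ι, ((near (4 * m) i).card : ℝ) ≤ κ
  integral_sq_eq_one : ∫ ω, partialSum X Finset.univ ω ^ 2 ∂μ = 1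
  bound_pos : 0 < b
  bound_le : b ≤ 1 / 75
  sum_integral_le :
    ∑ i, ∫ ω, |X i ω| * localMass X m i ω * min 1 (localMass X m i ω) ∂μ ≤ b
  sum_integral_mul_integral_le :
    ∑ i, (∫ ω, |X i ω| * localMass X m i ω ∂μ) * (∫ ω, min 1 (localMass X m i ω) ∂μ) ≤ b
  card_mul_sum_integral_sq_le :
    κ * ∑ i, ∫ ω, X i ω ^ 2 * min 1 (localMass X m i ω) ∂μ ≤ b
  integral_localMass_sq_le : ∀ i, ∫ ω, localMass X m i ω ^ 2 ∂μ ≤ 1 / 9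

namespace NormalApproxData

variable {κ b : ℝ}

lemma memLp_localMass (hX : NormalApproxData μ X m κ b) (i : ι) : MemLp (localMass X m i) 2 μ :=
  hX.memLp_absSum _

lemma measurable_localMass (hX : NormalApproxData μ X m κ b) (i : ι) :
    Measurable (localMass X m i) :=
  hX.measurable_absSum _

lemma abs_localSum_le_localMass (hX : NormalApproxData μ X m κ b) (i : ι) (ω : Ω) :
    |localSum X m i ω| ≤ localMass X m i ω :=
  abs_partialSum_near_le_localMass (by linarith [hX.range_nonneg]) i ω

lemma integrable_abs_mul_localMass_mul_min (hX : NormalApproxData μ X m κ b) (i : ι) :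
    Integrable (fun ω => |X i ω| * localMass X m i ω * min 1 (localMass X m i ω)) μ :=
  integrable_mul_min_one ((hX.memLp_two i).abs.integrable_mul (hX.memLp_localMass i))
    (hX.measurable_localMass i) (localMass_nonneg i)

lemma integrable_sq_mul_min_localMass (hX : NormalApproxData μ X m κ b) (i : ι) :
    Integrable (fun ω => X i ω ^ 2 * min 1 (localMass X m i ω)) μ :=
  integrable_mul_min_one (hX.memLp_two i).integrable_sq (hX.measurable_localMass i)
    (localMass_nonneg i)

lemma integral_add_const_mul_sq (hX : NormalApproxData μ X m κ b) (i : ι) (c c' : ℝ) :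
    ∫ ω, (c * localMass X m i ω ^ 2 + c' * partialSum X Finset.univ ω ^ 2) ∂μ =
      c * ∫ ω, localMass X m i ω ^ 2 ∂μ + c' := by
  rw [integral_add ((hX.memLp_localMass i).integrable_sq.const_mul _)
    ((hX.memLp_partialSum _).integrable_sq.const_mul _), integral_const_mul, integral_const_mul,
    hX.integral_sq_eq_one, mul_one]

lemma integral_abs_near_mul_univ_le (hX : NormalApproxData μ X m κ b) (i : ι) :
    ∫ ω, |partialSum X (near (4 * m) i) ω * partialSum X Finset.univ ω| ∂μ ≤ 1 / 3 := by
  have hpoint : ∀ ω, |partialSum X (near (4 * m) i) ω * partialSum X Finset.univ ω| ≤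
      3 / 2 * localMass X m i ω ^ 2 + 1 / 6 * partialSum X Finset.univ ω ^ 2 := fun ω => by
    have hnear := abs_partialSum_near_le_localMass (X := X) (le_refl (4 * m)) i ω
    rw [abs_mul, ← sq_abs (partialSum X Finset.univ ω)]
    nlinarith [sq_nonneg (3 * localMass X m i ω - |partialSum X Finset.univ ω|),
      abs_nonneg (partialSum X Finset.univ ω)]
  calc ∫ ω, |partialSum X (near (4 * m) i) ω * partialSum X Finset.univ ω| ∂μ
      ≤ ∫ ω, (3 / 2 * localMass X m i ω ^ 2 + 1 / 6 * partialSum X Finset.univ ω ^ 2) ∂μ :=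
        integral_mono ((hX.memLp_partialSum _).integrable_mul (hX.memLp_partialSum _)).abs
          (((hX.memLp_localMass i).integrable_sq.const_mul _).add
            ((hX.memLp_partialSum _).integrable_sq.const_mul _)) hpoint
    _ = 3 / 2 * ∫ ω, localMass X m i ω ^ 2 ∂μ + 1 / 6 := hX.integral_add_const_mul_sq i _ _
    _ ≤ 1 / 3 := by linarith [hX.integral_localMass_sq_le i]

variable [IsProbabilityMeasure μ]

lemma integral_abs_far_le (hX : NormalApproxData μ X m κ b) (i : ι) :
    ∫ ω, |partialSum X (far (4 * m) i) ω| ∂μ ≤ 4 / 3 := by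
  have hpoint : ∀ ω, |partialSum X (far (4 * m) i) ω| ≤
      (3 / 2 * localMass X m i ω ^ 2 + 1 / 2 * partialSum X Finset.univ ω ^ 2) + 2 / 3 :=
    fun ω => by
      have hnear := abs_partialSum_near_le_localMass (X := X) (le_refl (4 * m)) i ω
      have hsplit := partialSum_near_add_partialSum_far X (4 * m) i ω
      have hfar := abs_sub (partialSum X Finset.univ ω) (partialSum X (near (4 * m) i) ω)
      rw [← hsplit, add_sub_cancel_left, hsplit] at hfar
      rw [← sq_abs (partialSum X Finset.univ ω)]
      nlinarith [sq_nonneg (3 * localMass X m i ω - 1),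
        sq_nonneg (|partialSum X Finset.univ ω| - 1)]
  have hint : Integrable (fun ω =>
      3 / 2 * localMass X m i ω ^ 2 + 1 / 2 * partialSum X Finset.univ ω ^ 2) μ :=
    ((hX.memLp_localMass i).integrable_sq.const_mul _).add
      ((hX.memLp_partialSum _).integrable_sq.const_mul _)
  calc ∫ ω, |partialSum X (far (4 * m) i) ω| ∂μ
      ≤ ∫ ω, (3 / 2 * localMass X m i ω ^ 2 + 1 / 2 * partialSum X Finset.univ ω ^ 2
          + 2 / 3) ∂μ :=
        integral_mono ((hX.memLp_partialSum _).integrable one_le_two).abs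
          (hint.add (integrable_const _)) hpoint
    _ = 3 / 2 * ∫ ω, localMass X m i ω ^ 2 ∂μ + 1 / 2 + 2 / 3 := by
        rw [integral_add hint (integrable_const _), hX.integral_add_const_mul_sq i]
        simp only [integral_const, probReal_univ, one_smul]
    _ ≤ 4 / 3 := by linarith [hX.integral_localMass_sq_le i]

end NormalApproxData

variable [IsProbabilityMeasure μ]

lemma covariance_le_half_add {f g : Ω → ℝ} (hf : MemLp f 2 μ) (hg : MemLp g 2 μ) :
    cov[f, g; μ] ≤ 1 / 2 * ((∫ ω, f ω ^ 2 ∂μ) + ∫ ω, g ω ^ 2 ∂μ) := by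
  have hsub := variance_nonneg (f - g) μ
  rw [variance_sub hf hg] at hsub
  have hvarf := variance_le_expectation_sq (X := f) (μ := μ) hf.aestronglyMeasurable
  have hvarg := variance_le_expectation_sq (X := g) (μ := μ) hg.aestronglyMeasurable
  simp only [Pi.pow_apply] at hvarf hvarg
  linarith

lemma variance_sum_le (S : Finset ι) {K : ι → Ω → ℝ} (hK : ∀ j, MemLp (K j) 2 μ) {r κ : ℝ}
    (hindep : ∀ j l, r < dist j l → IndepFun (K j) (K l) μ)
    (hκ : ∀ i : ι, ((near r i).card : ℝ) ≤ κ) :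
    Var[fun ω => ∑ j ∈ S, K j ω; μ] ≤ κ * ∑ j, ∫ ω, K j ω ^ 2 ∂μ := by
  classical
  set v : ι → ℝ := fun j => ∫ ω, K j ω ^ 2 ∂μ
  have hv_nonneg : ∀ j, 0 ≤ v j := fun j => integral_nonneg fun ω => sq_nonneg _
  have hcov : ∀ j l, cov[K j, K l; μ] ≤ if l ∈ near r j then 1 / 2 * (v j + v l) else 0 := by
    intro j l
    split_ifs with h
    · exact covariance_le_half_add (hK j) (hK l)
    · exact ((hindep j l (not_le.1 (mem_near.not.1 h))).covariance_eq_zero (hK j) (hK l)).le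
  have hterm : ∀ j l, 0 ≤ if l ∈ near r j then 1 / 2 * (v j + v l) else 0 := fun j l => by
    split_ifs <;> linarith [hv_nonneg j, hv_nonneg l]
  calc Var[fun ω => ∑ j ∈ S, K j ω; μ] = ∑ j ∈ S, ∑ l ∈ S, cov[K j, K l; μ] :=
        variance_fun_sum' fun j _ => hK j
    _ ≤ ∑ j ∈ S, ∑ l ∈ S, if l ∈ near r j then 1 / 2 * (v j + v l) else 0 :=
        Finset.sum_le_sum fun j _ => Finset.sum_le_sum fun l _ => hcov j l
    _ ≤ ∑ j ∈ S, ∑ l, if l ∈ near r j then 1 / 2 * (v j + v l) else 0 :=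
        Finset.sum_le_sum fun j _ => Finset.sum_le_univ_sum_of_nonneg (hterm j)
    _ ≤ ∑ j, ∑ l, if l ∈ near r j then 1 / 2 * (v j + v l) else 0 :=
        Finset.sum_le_univ_sum_of_nonneg fun j => Finset.sum_nonneg fun l _ => hterm j l
    _ = ∑ j, ∑ l ∈ near r j, 1 / 2 * v j + ∑ j, ∑ l ∈ near r j, 1 / 2 * v l := by
        simp only [Finset.sum_ite_mem, Finset.univ_inter, mul_add, Finset.sum_add_distrib]
    _ = ∑ j, (near r j).card * v j := by
        rw [sum_sum_near_comm r fun _ l => 1 / 2 * v l, ← Finset.sum_add_distrib]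
        refine Finset.sum_congr rfl fun j _ => ?_
        rw [Finset.sum_const, nsmul_eq_mul]
        ring
    _ ≤ ∑ j, κ * v j := Finset.sum_le_sum fun j _ => mul_le_mul_of_nonneg_right (hκ j) (hv_nonneg j)
    _ = κ * ∑ j, v j := (Finset.mul_sum ..).symm

end Fields

/-! ### Concentration -/

section Concentration

variable {Ω ι : Type*} [mΩ : MeasurableSpace Ω] {μ : Measure Ω} {α q : ℝ}

lemma integral_mul_ramp_sub_ramp_le [SFinite μ] {ξ u v : Ω → ℝ} {C : ℝ} (hα : 0 ≤ α)
    (hu : Measurable u) (hv : Measurable v) (hξ : ∀ ω, 0 ≤ ξ ω) (huv : ∀ ω, u ω ≤ v ω)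
    (hint : Integrable (fun ω => ξ ω * (v ω - u ω)) μ)
    (hC : ∀ s, ∫ ω, ξ ω * (v ω - u ω) * (Icc 0 α).indicator 1 (u ω + s * (v ω - u ω)) ∂μ ≤ C) :
    ∫ ω, ξ ω * (ramp α (v ω) - ramp α (u ω)) ∂μ ≤ C := by
  set F : Ω → ℝ → ℝ := fun ω s =>
    ξ ω * (v ω - u ω) * (Icc 0 α).indicator 1 (u ω + s * (v ω - u ω))
  have hF : Integrable (Function.uncurry F) (μ.prod (volume.restrict (Ioc (0 : ℝ) 1))) := by
    refine (hint.comp_fst _).mul_bdd (c := 1) ?_ (.of_forall fun z => ?_)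
    · exact ((measurable_one.indicator measurableSet_Icc).comp (by fun_prop :
        Measurable fun z : Ω × ℝ => u z.1 + z.2 * (v z.1 - u z.1))).aestronglyMeasurable
    · exact (norm_indicator_le_norm_self _ _).trans_eq norm_one
  have hpoint : ∀ ω, ξ ω * (ramp α (v ω) - ramp α (u ω)) ≤ ∫ s in Ioc (0 : ℝ) 1, F ω s := by
    intro ω
    have hramp := ramp_sub_ramp_le_integral hα (huv ω)
    rw [intervalIntegral.integral_of_le zero_le_one] at hramp
    refine (mul_le_mul_of_nonneg_left hramp (hξ ω)).trans_eq ?_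
    simp only [F, mul_assoc, integral_const_mul]
  calc ∫ ω, ξ ω * (ramp α (v ω) - ramp α (u ω)) ∂μ
      ≤ ∫ ω, (∫ s in Ioc (0 : ℝ) 1, F ω s) ∂μ :=
        integral_mono_of_nonneg
          (.of_forall fun ω => mul_nonneg (hξ ω) (sub_nonneg.2 (monotone_ramp (huv ω))))
          hF.integral_prod_left (.of_forall hpoint)
    _ = ∫ s in Ioc (0 : ℝ) 1, ∫ ω, F ω s ∂μ := integral_integral_swap hF
    _ ≤ ∫ _ in Ioc (0 : ℝ) 1, C :=
        integral_mono hF.swap.integral_prod_left (integrable_const _) hC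
    _ = C := by simp

variable [Fintype ι] [PseudoMetricSpace ι] {X : ι → Ω → ℝ} {m : ℝ}

/-- Concentration of the total sum `W` at scale `α`: weighted by a nonnegative `ξ` and shifted by
`a`, both functions of the field near a single index, `W` visits `[0, α]` with mass at most
`q * E ξ`. -/
def IsConcentrated (μ : Measure Ω) (X : ι → Ω → ℝ) (m α q : ℝ) : Prop :=
  ∀ (i : ι) (ξ a : Ω → ℝ), Measurable[sigmaOf X (near (2 * m) i)] ξ →
    Measurable[sigmaOf X (near (2 * m) i)] a → (∀ ω, 0 ≤ ξ ω) → Integrable ξ μ →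
    ∫ ω, ξ ω * (Icc 0 α).indicator 1 (partialSum X Finset.univ ω + a ω) ∂μ ≤ q * ∫ ω, ξ ω ∂μ

lemma IsConcentrated.integral_mul_ramp_sub_ramp_le [SFinite μ] (hq : IsConcentrated μ X m α q)
    (hX : LocallyDependent μ X m) (hα : 0 ≤ α) (i : ι) {ξ y y' : Ω → ℝ}
    (hξ : Measurable[sigmaOf X (near (2 * m) i)] ξ) (hy : Measurable[sigmaOf X (near (2 * m) i)] y)
    (hy' : Measurable[sigmaOf X (near (2 * m) i)] y') (hξ0 : ∀ ω, 0 ≤ ξ ω)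
    (hyy' : ∀ ω, y ω ≤ y' ω) (hint : Integrable (fun ω => ξ ω * (y' ω - y ω)) μ) :
    ∫ ω, ξ ω * (ramp α (partialSum X Finset.univ ω + y' ω) -
      ramp α (partialSum X Finset.univ ω + y ω)) ∂μ ≤ q * ∫ ω, ξ ω * (y' ω - y ω) ∂μ := by
  have hW := hX.measurable_partialSum Finset.univ
  have hle := hX.sigmaOf_le (near (2 * m) i)
  refine LocalDependence.integral_mul_ramp_sub_ramp_le hα (hW.add (hy.mono hle le_rfl))
    (hW.add (hy'.mono hle le_rfl)) hξ0 (fun ω => by gcongr; exact hyy' ω) ?_ fun s => ?_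
  · simpa only [add_sub_add_left_eq_sub] using hint
  · simp only [add_sub_add_left_eq_sub, add_assoc]
    exact hq i _ (fun ω => y ω + s * (y' ω - y ω)) (hξ.mul (hy'.sub hy))
      (hy.add (measurable_const.mul (hy'.sub hy)))
      (fun ω => mul_nonneg (hξ0 ω) (sub_nonneg.2 (hyy' ω))) hint

end Concentration

/-! ### Kernel sums -/

section KernelFubini

variable {Ω : Type*} [MeasurableSpace Ω] {μ : Measure Ω} {u Y : Ω → ℝ}

lemma measurable_steinKernel_comp (hY : Measurable Y) :
    Measurable fun z : Ω × ℝ => steinKernel (Y z.1) z.2 :=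
  measurable_uncurry_steinKernel.comp ((hY.comp measurable_fst).prodMk measurable_snd)

lemma measurable_steinKernel_left (t : ℝ) : Measurable fun y => steinKernel y t :=
  measurable_uncurry_steinKernel.comp (measurable_id.prodMk measurable_const)

lemma integrable_mul_steinKernel_prod (hu : Integrable u μ) (hY : Measurable Y) :
    Integrable (fun z : Ω × ℝ => u z.1 * steinKernel (Y z.1) z.2) (μ.prod ν) :=
  (hu.comp_fst ν).mul_bdd (c := 1) (measurable_steinKernel_comp hY).aestronglyMeasurable
    (.of_forall fun _ => abs_steinKernel_le_one _ _)

lemma integrable_mul_abs_steinKernel_prod (hu : Integrable u μ) (hY : Measurable Y) :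
    Integrable (fun z : Ω × ℝ => u z.1 * |steinKernel (Y z.1) z.2|) (μ.prod ν) :=
  (hu.comp_fst ν).mul_bdd (c := 1) (measurable_steinKernel_comp hY).abs.aestronglyMeasurable
    (.of_forall fun _ => (abs_abs _).trans_le (abs_steinKernel_le_one _ _))

variable [SFinite μ]

lemma integral_integral_mul_steinKernel (hu : Integrable u μ) (hY : Measurable Y) :
    ∫ t, ∫ ω, u ω * steinKernel (Y ω) t ∂μ ∂ν = ∫ ω, u ω * clip (Y ω) ∂μ := by
  rw [← integral_integral_swap (f := fun ω t => u ω * steinKernel (Y ω) t)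
    (integrable_mul_steinKernel_prod hu hY)]
  simp only [integral_const_mul, integral_steinKernel]

lemma integral_integral_mul_abs_steinKernel (hu : Integrable u μ) (hY : Measurable Y) :
    ∫ t, ∫ ω, u ω * |steinKernel (Y ω) t| ∂μ ∂ν = ∫ ω, u ω * min 1 |Y ω| ∂μ := by
  rw [← integral_integral_swap (f := fun ω t => u ω * |steinKernel (Y ω) t|)
    (integrable_mul_abs_steinKernel_prod hu hY)]
  simp only [integral_const_mul, integral_abs_steinKernel]

end KernelFubini

section KernelSums

variable {Ω ι : Type*} [PseudoMetricSpace ι] [Fintype ι] {X : ι → Ω → ℝ} {m : ℝ}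

/-- The contribution of the index `j` to the Stein kernel of the total sum. -/
noncomputable def kernelTerm (X : ι → Ω → ℝ) (m : ℝ) (j : ι) (t : ℝ) (ω : Ω) : ℝ :=
  X j ω * steinKernel (localSum X m j ω) t

/-- The part of the Stein kernel contributed by the indices at distance more than `4 * m`
from `i`. -/
noncomputable def farKernel (X : ι → Ω → ℝ) (m : ℝ) (i : ι) (t : ℝ) (ω : Ω) : ℝ :=
  ∑ j ∈ far (4 * m) i, kernelTerm X m j t ω

lemma abs_kernelTerm_le (j : ι) (t : ℝ) (ω : Ω) : |kernelTerm X m j t ω| ≤ |X j ω| := by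
  rw [kernelTerm, abs_mul]
  exact mul_le_of_le_one_right (abs_nonneg _) (abs_steinKernel_le_one _ _)

lemma abs_mul_abs_farKernel_le (i : ι) (t : ℝ) (ω : Ω) :
    |t| * |farKernel X m i t ω| ≤ ∑ j ∈ far (4 * m) i,
      |X j ω| * min 1 |localSum X m j ω| * |steinKernel (localSum X m j ω) t| := by
  refine (mul_le_mul_of_nonneg_left (Finset.abs_sum_le_sum_abs _ _) (abs_nonneg t)).trans ?_
  rw [Finset.mul_sum]
  refine Finset.sum_le_sum fun j _ => ?_
  rw [kernelTerm, abs_mul, mul_left_comm, mul_assoc]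
  exact mul_le_mul_of_nonneg_left (abs_mul_abs_steinKernel_le _ t) (abs_nonneg _)

lemma abs_farKernel_le (i : ι) (t : ℝ) (ω : Ω) :
    |farKernel X m i t ω| ≤ absSum X (far (4 * m) i) ω :=
  (Finset.abs_sum_le_sum_abs _ _).trans (Finset.sum_le_sum fun j _ => abs_kernelTerm_le j t ω)

lemma measurable_kernelTerm_sigmaOf (hm : 0 ≤ m) (j : ι) (t : ℝ) :
    Measurable[sigmaOf X (near m j)] (kernelTerm X m j t) :=
  (measurable_sigmaOf (mem_near.2 (by rwa [dist_self]))).mul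
    ((measurable_steinKernel_left t).comp (measurable_partialSum_sigmaOf subset_rfl))

lemma near_subset_far {i j : ι} (hj : j ∈ far (4 * m) i) : near m j ⊆ far (3 * m) i :=
  fun l hl => mem_far.2 <| by
    have hij := mem_far.1 hj
    have hjl := mem_near.1 hl
    linarith [dist_triangle_right i j l]

lemma far_subset_far (hm : 0 ≤ m) (i : ι) : far (4 * m) i ⊆ far (3 * m) i :=
  fun l hl => mem_far.2 (by linarith [mem_far.1 hl])

lemma measurable_farKernel_sigmaOf (hm : 0 ≤ m) (i : ι) (t : ℝ) :
    Measurable[sigmaOf X (far (3 * m) i)] (farKernel X m i t) :=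
  Finset.measurable_fun_sum _ fun j hj =>
    (measurable_kernelTerm_sigmaOf hm j t).mono (sigmaOf_mono (near_subset_far hj)) le_rfl

variable [mΩ : MeasurableSpace Ω] {μ : Measure Ω}

/-- The mean of the far part of the Stein kernel. -/
noncomputable def meanFarKernel (μ : Measure Ω) (X : ι → Ω → ℝ) (m : ℝ) (i : ι) (t : ℝ) : ℝ :=
  ∫ ω, farKernel X m i t ω ∂μ

namespace LocallyDependent

variable (hX : LocallyDependent μ X m)
include hX

lemma measurable_kernelTerm (j : ι) (t : ℝ) : Measurable (kernelTerm X m j t) :=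
  (hX.measurable j).mul ((measurable_steinKernel_left t).comp (hX.measurable_partialSum _))

lemma memLp_kernelTerm (j : ι) (t : ℝ) : MemLp (kernelTerm X m j t) 2 μ :=
  (hX.memLp_two j).of_le (hX.measurable_kernelTerm j t).aestronglyMeasurable
    (.of_forall fun ω => abs_kernelTerm_le j t ω)

lemma measurable_uncurry_farKernel (i : ι) :
    Measurable fun z : Ω × ℝ => farKernel X m i z.2 z.1 :=
  Finset.measurable_fun_sum _ fun j _ => ((hX.measurable j).comp measurable_fst).mul
    (measurable_steinKernel_comp (hX.measurable_partialSum _))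

lemma memLp_farKernel (i : ι) (t : ℝ) : MemLp (farKernel X m i t) 2 μ :=
  memLp_finsetSum _ fun j _ => hX.memLp_kernelTerm j t

lemma integrable_abs_mul_localSum_mul_min (j : ι) :
    Integrable (fun ω => |X j ω| * |localSum X m j ω| * min 1 |localSum X m j ω|) μ :=
  integrable_mul_min_one ((hX.memLp_two j).abs.integrable_mul (hX.memLp_partialSum _).abs)
    (hX.measurable_partialSum _).abs fun _ => abs_nonneg _

lemma indep_near_far (i : ι) : Indep (sigmaOf X (near (2 * m) i)) (sigmaOf X (far (3 * m) i)) μ :=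
  hX.indep fun k hk l hl => by
    have hik := mem_near.1 hk
    have hil := mem_far.1 hl
    linarith [dist_triangle i k l]

lemma indepFun_kernelTerm (hm : 0 ≤ m) (t : ℝ) {j l : ι} (hjl : 4 * m < dist j l) :
    IndepFun (kernelTerm X m j t) (kernelTerm X m l t) μ :=
  indepFun_of_indep
    (hX.indep fun k hk k' hk' => by
      have hjk := mem_near.1 hk
      have hlk' := mem_near.1 hk'
      rw [dist_comm] at hlk'
      linarith [dist_triangle4 j k k' l])
    (measurable_kernelTerm_sigmaOf hm j t) (measurable_kernelTerm_sigmaOf hm l t)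

variable [IsFiniteMeasure μ]

lemma measurable_meanFarKernel (i : ι) : Measurable (meanFarKernel μ X m i) :=
  (hX.measurable_uncurry_farKernel i).stronglyMeasurable.integral_prod_left'.measurable

lemma abs_meanFarKernel_le (i : ι) (t : ℝ) :
    |meanFarKernel μ X m i t| ≤ ∫ ω, absSum X (far (4 * m) i) ω ∂μ :=
  abs_integral_le_integral_abs.trans <|
    integral_mono ((hX.memLp_farKernel i t).integrable one_le_two).abs
      ((hX.memLp_absSum _).integrable one_le_two) fun ω => abs_farKernel_le i t ω

lemma meanFarKernel_eq_sum (i : ι) :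
    meanFarKernel μ X m i = fun t => ∑ j ∈ far (4 * m) i, ∫ ω, kernelTerm X m j t ω ∂μ :=
  funext fun t => integral_finsetSum _ fun j _ =>
    (hX.memLp_kernelTerm j t).integrable one_le_two

lemma integrable_integral_kernelTerm (j : ι) :
    Integrable (fun t => ∫ ω, kernelTerm X m j t ω ∂μ) ν :=
  (integrable_mul_steinKernel_prod ((hX.memLp_two j).integrable one_le_two)
    (hX.measurable_partialSum _)).integral_prod_right

lemma integrable_meanFarKernel (i : ι) : Integrable (meanFarKernel μ X m i) ν := by
  rw [hX.meanFarKernel_eq_sum i]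
  exact integrable_finsetSum _ fun j _ => hX.integrable_integral_kernelTerm j

lemma integral_meanFarKernel (i : ι) :
    ∫ t, meanFarKernel μ X m i t ∂ν =
      ∑ j ∈ far (4 * m) i, ∫ ω, X j ω * clip (localSum X m j ω) ∂μ := by
  rw [hX.meanFarKernel_eq_sum i,
    integral_finsetSum _ fun j _ => hX.integrable_integral_kernelTerm j]
  exact Finset.sum_congr rfl fun j _ => integral_integral_mul_steinKernel
    ((hX.memLp_two j).integrable one_le_two) (hX.measurable_partialSum _)

lemma integral_mul_univ_sub_le_integral_mul_clip (j : ι) :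
    ∫ ω, X j ω * partialSum X Finset.univ ω ∂μ -
        ∫ ω, |X j ω| * |localSum X m j ω| * min 1 |localSum X m j ω| ∂μ ≤
      ∫ ω, X j ω * clip (localSum X m j ω) ∂μ := by
  have hprod : Integrable (fun ω => X j ω * localSum X m j ω) μ :=
    (hX.memLp_two j).integrable_mul (hX.memLp_partialSum _)
  have hclip : Integrable (fun ω => X j ω * clip (localSum X m j ω)) μ :=
    ((hX.memLp_two j).integrable one_le_two).mul_bdd (c := 1)
      (continuous_clip.measurable.comp (hX.measurable_partialSum _)).aestronglyMeasurable
      (.of_forall fun ω => abs_clip_le_one _)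
  have herr := hX.integrable_abs_mul_localSum_mul_min j
  rw [hX.integral_mul_partialSum_univ, ← integral_sub hprod herr]
  refine integral_mono (hprod.sub herr) hclip fun ω => ?_
  have hsub := mul_le_mul_of_nonneg_left (abs_sub_clip_le (localSum X m j ω)) (abs_nonneg (X j ω))
  rw [← abs_mul, ← mul_assoc] at hsub
  dsimp only
  linarith [le_abs_self (X j ω * (localSum X m j ω - clip (localSum X m j ω)))]

lemma abs_mul_abs_meanFarKernel_le (i : ι) (t : ℝ) :
    |t| * |meanFarKernel μ X m i t| ≤ ∑ j ∈ far (4 * m) i, ∫ ω,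
      |X j ω| * min 1 |localSum X m j ω| * |steinKernel (localSum X m j ω) t| ∂μ := by
  have hint : ∀ j, Integrable (fun ω =>
      |X j ω| * min 1 |localSum X m j ω| * |steinKernel (localSum X m j ω) t|) μ := fun j =>
    (integrable_mul_min_one ((hX.memLp_two j).integrable one_le_two).abs
      (hX.measurable_partialSum _).abs fun _ => abs_nonneg _).mul_bdd (c := 1)
      ((measurable_steinKernel_left t).comp (hX.measurable_partialSum _)).abs.aestronglyMeasurable
      (.of_forall fun ω => (abs_abs _).trans_le (abs_steinKernel_le_one _ _))
  rw [← integral_finsetSum _ fun j _ => hint j]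
  refine (mul_le_mul_of_nonneg_left abs_integral_le_integral_abs (abs_nonneg t)).trans ?_
  rw [← integral_const_mul]
  exact integral_mono (((hX.memLp_farKernel i t).integrable one_le_two).abs.const_mul _)
    (integrable_finsetSum _ fun j _ => hint j) fun ω => abs_mul_abs_farKernel_le i t ω

end LocallyDependent

namespace NormalApproxData

variable {κ b : ℝ} (hX : NormalApproxData μ X m κ b)
include hX

lemma sum_integral_abs_mul_localSum_mul_min_le (S : Finset ι) :
    ∑ j ∈ S, ∫ ω, |X j ω| * |localSum X m j ω| * min 1 |localSum X m j ω| ∂μ ≤ b := by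
  refine (Finset.sum_le_univ_sum_of_nonneg fun j => integral_nonneg fun ω => by positivity).trans
    ((Finset.sum_le_sum fun j _ => integral_mono (hX.integrable_abs_mul_localSum_mul_min j) ?_
      fun ω => ?_).trans hX.sum_integral_le)
  · exact hX.integrable_abs_mul_localMass_mul_min j
  · have hlocal := hX.abs_localSum_le_localMass j ω
    have hmass : 0 ≤ localMass X m j ω := localMass_nonneg j ω
    dsimp only
    gcongr

lemma sum_integral_sq_mul_min_localSum_le :
    κ * ∑ j, ∫ ω, X j ω ^ 2 * min 1 |localSum X m j ω| ∂μ ≤ b := by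
  refine le_trans ?_ hX.card_mul_sum_integral_sq_le
  have hκ : ∀ _ : ι, 0 ≤ κ := fun j => (Nat.cast_nonneg _).trans (hX.card_near_le j)
  rw [Finset.mul_sum, Finset.mul_sum]
  refine Finset.sum_le_sum fun j _ => mul_le_mul_of_nonneg_left (integral_mono
    (integrable_mul_min_one (hX.memLp_two j).integrable_sq (hX.measurable_partialSum _).abs
      fun _ => abs_nonneg _)
    (hX.integrable_sq_mul_min_localMass j) fun ω => ?_) (hκ j)
  exact mul_le_mul_of_nonneg_left (min_le_min_left _ (hX.abs_localSum_le_localMass j ω))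
    (sq_nonneg _)

lemma sum_far_integral_mul_univ_ge (i : ι) :
    2 / 3 ≤ ∑ j ∈ far (4 * m) i, ∫ ω, X j ω * partialSum X Finset.univ ω ∂μ := by
  have hprod : ∀ S, Integrable (fun ω => partialSum X S ω * partialSum X Finset.univ ω) μ :=
    fun S => (hX.memLp_partialSum S).integrable_mul (hX.memLp_partialSum _)
  have hfar : ∑ j ∈ far (4 * m) i, ∫ ω, X j ω * partialSum X Finset.univ ω ∂μ =
      ∫ ω, partialSum X (far (4 * m) i) ω * partialSum X Finset.univ ω ∂μ := by
    rw [← integral_finsetSum (f := fun j ω => X j ω * partialSum X Finset.univ ω) _ fun j _ =>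
      (hX.memLp_two j).integrable_mul (hX.memLp_partialSum _)]
    simp only [partialSum, Finset.sum_mul]
  have hsum := integral_add (hprod (near (4 * m) i)) (hprod (far (4 * m) i))
  simp only [← add_mul, partialSum_near_add_partialSum_far, ← pow_two,
    hX.integral_sq_eq_one] at hsum
  have hnear : ∫ ω, partialSum X (near (4 * m) i) ω * partialSum X Finset.univ ω ∂μ ≤ 1 / 3 :=
    ((le_abs_self _).trans abs_integral_le_integral_abs).trans (hX.integral_abs_near_mul_univ_le i)
  linarith

variable [IsFiniteMeasure μ]

lemma integral_meanFarKernel_ge (i : ι) : 13 / 20 ≤ ∫ t, meanFarKernel μ X m i t ∂ν := by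
  rw [hX.integral_meanFarKernel i]
  have hclip := Finset.sum_le_sum fun j (_ : j ∈ far (4 * m) i) =>
    hX.integral_mul_univ_sub_le_integral_mul_clip j
  rw [Finset.sum_sub_distrib] at hclip
  linarith [hX.sum_integral_abs_mul_localSum_mul_min_le (far (4 * m) i),
    hX.sum_far_integral_mul_univ_ge i, hX.bound_le]

lemma integral_abs_mul_abs_meanFarKernel_le (i : ι) :
    ∫ t, |t| * |meanFarKernel μ X m i t| ∂ν ≤ b := by
  have hmin : ∀ j, Integrable (fun ω => |X j ω| * min 1 |localSum X m j ω|) μ := fun j =>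
    integrable_mul_min_one ((hX.memLp_two j).integrable one_le_two).abs
      (hX.measurable_partialSum _).abs fun _ => abs_nonneg _
  have hfubini : ∀ j, Integrable (fun t => ∫ ω,
      |X j ω| * min 1 |localSum X m j ω| * |steinKernel (localSum X m j ω) t| ∂μ) ν := fun j =>
    (integrable_mul_abs_steinKernel_prod (hmin j) (hX.measurable_partialSum _)).integral_prod_right
  calc ∫ t, |t| * |meanFarKernel μ X m i t| ∂ν
      ≤ ∫ t, ∑ j ∈ far (4 * m) i, ∫ ω,
          |X j ω| * min 1 |localSum X m j ω| * |steinKernel (localSum X m j ω) t| ∂μ ∂ν :=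
        integral_mono_of_nonneg (.of_forall fun t => by positivity)
          (integrable_finsetSum _ fun j _ => hfubini j)
          (.of_forall (hX.abs_mul_abs_meanFarKernel_le i))
    _ = ∑ j ∈ far (4 * m) i,
          ∫ ω, |X j ω| * min 1 |localSum X m j ω| * min 1 |localSum X m j ω| ∂μ := by
        rw [integral_finsetSum _ fun j _ => hfubini j]
        exact Finset.sum_congr rfl fun j _ =>
          integral_integral_mul_abs_steinKernel (hmin j) (hX.measurable_partialSum _)
    _ ≤ ∑ j ∈ far (4 * m) i,
          ∫ ω, |X j ω| * |localSum X m j ω| * min 1 |localSum X m j ω| ∂μ := by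
        refine Finset.sum_le_sum fun j _ => integral_mono
          (integrable_mul_min_one (hmin j) (hX.measurable_partialSum _).abs fun _ => abs_nonneg _)
          (hX.integrable_abs_mul_localSum_mul_min j) fun ω => ?_
        dsimp only
        gcongr
        exact min_le_right _ _
    _ ≤ b := hX.sum_integral_abs_mul_localSum_mul_min_le _

lemma integrable_mul_sq_farKernel_sub (i : ι) {ξ : Ω → ℝ}
    (hξ : Measurable[sigmaOf X (near (2 * m) i)] ξ) (hξi : Integrable ξ μ) :
    Integrable (fun z : Ω × ℝ =>
      ξ z.1 * (farKernel X m i z.2 z.1 - meanFarKernel μ X m i z.2) ^ 2) (μ.prod ν) := by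
  set c := ∫ ω, absSum X (far (4 * m) i) ω ∂μ
  have hindep : IndepFun ξ (fun ω => (absSum X (far (4 * m) i) ω + c) ^ 2) μ :=
    indepFun_of_indep (hX.indep_near_far i) hξ
      (((measurable_absSum_sigmaOf (far_subset_far hX.range_nonneg i)).add
        measurable_const).pow_const 2)
  have hdom : Integrable (fun ω => ξ ω * (absSum X (far (4 * m) i) ω + c) ^ 2) μ :=
    hindep.integrable_mul hξi ((hX.memLp_absSum _).add (memLp_const c)).integrable_sq
  refine (hdom.norm.comp_fst ν).mono' ?_ (.of_forall fun z => ?_)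
  · exact (((hξ.mono (hX.sigmaOf_le _) le_rfl).comp measurable_fst).mul
      (((hX.measurable_uncurry_farKernel i).sub
        ((hX.measurable_meanFarKernel i).comp measurable_snd)).pow_const 2)).aestronglyMeasurable
  · simp only [norm_mul, norm_pow]
    gcongr
    exact (abs_sub _ _).trans ((add_le_add (abs_farKernel_le i _ _)
      (hX.abs_meanFarKernel_le i _)).trans (le_abs_self _))

end NormalApproxData

section Variance

variable [IsProbabilityMeasure μ] {κ b : ℝ} (hX : NormalApproxData μ X m κ b)
include hX

lemma NormalApproxData.integral_sq_farKernel_sub_le (i : ι) (t : ℝ) :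
    ∫ ω, (farKernel X m i t ω - meanFarKernel μ X m i t) ^ 2 ∂μ ≤
      κ * ∑ j, ∫ ω, X j ω ^ 2 * |steinKernel (localSum X m j ω) t| ∂μ := by
  have hvar : Var[farKernel X m i t; μ] ≤ _ :=
    variance_sum_le (far (4 * m) i) (fun j => hX.memLp_kernelTerm j t)
    (fun j l => hX.indepFun_kernelTerm hX.range_nonneg t) hX.card_near_le
  rw [variance_eq_integral (hX.memLp_farKernel i t).aestronglyMeasurable.aemeasurable] at hvar
  simpa only [meanFarKernel, kernelTerm, mul_pow, sq_steinKernel] using hvar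

lemma NormalApproxData.integral_mul_sq_farKernel_sub_le (i : ι) {ξ : Ω → ℝ}
    (hξ : Measurable[sigmaOf X (near (2 * m) i)] ξ) (hξ0 : ∀ ω, 0 ≤ ξ ω) (t : ℝ) :
    ∫ ω, ξ ω * (farKernel X m i t ω - meanFarKernel μ X m i t) ^ 2 ∂μ ≤
      (∫ ω, ξ ω ∂μ) * (κ * ∑ j, ∫ ω, X j ω ^ 2 * |steinKernel (localSum X m j ω) t| ∂μ) := by
  have hfar : Measurable[sigmaOf X (far (3 * m) i)]
      fun ω => (farKernel X m i t ω - meanFarKernel μ X m i t) ^ 2 :=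
    ((measurable_farKernel_sigmaOf hX.range_nonneg i t).sub measurable_const).pow_const 2
  rw [integral_mul_of_indep (hX.indep_near_far i) (hX.sigmaOf_le _) (hX.sigmaOf_le _) hξ hfar]
  exact mul_le_mul_of_nonneg_left (hX.integral_sq_farKernel_sub_le i t) (integral_nonneg hξ0)

lemma NormalApproxData.integral_integral_mul_sq_farKernel_sub_le (i : ι) {ξ : Ω → ℝ}
    (hξ : Measurable[sigmaOf X (near (2 * m) i)] ξ) (hξ0 : ∀ ω, 0 ≤ ξ ω) (hξi : Integrable ξ μ) :
    ∫ ω, ∫ t, ξ ω * (farKernel X m i t ω - meanFarKernel μ X m i t) ^ 2 ∂ν ∂μ ≤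
      b * ∫ ω, ξ ω ∂μ := by
  have hprod := hX.integrable_mul_sq_farKernel_sub i hξ hξi
  have hfubini : ∀ j, Integrable (fun t => ∫ ω,
      X j ω ^ 2 * |steinKernel (localSum X m j ω) t| ∂μ) ν := fun j =>
    (integrable_mul_abs_steinKernel_prod (hX.memLp_two j).integrable_sq
      (hX.measurable_partialSum _)).integral_prod_right
  calc ∫ ω, ∫ t, ξ ω * (farKernel X m i t ω - meanFarKernel μ X m i t) ^ 2 ∂ν ∂μ
      = ∫ t, ∫ ω, ξ ω * (farKernel X m i t ω - meanFarKernel μ X m i t) ^ 2 ∂μ ∂ν :=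
        integral_integral_swap hprod
    _ ≤ ∫ t, (∫ ω, ξ ω ∂μ) *
          (κ * ∑ j, ∫ ω, X j ω ^ 2 * |steinKernel (localSum X m j ω) t| ∂μ) ∂ν :=
        integral_mono hprod.integral_prod_right
          (((integrable_finsetSum _ fun j _ => hfubini j).const_mul _).const_mul _)
          (hX.integral_mul_sq_farKernel_sub_le i hξ hξ0)
    _ = (∫ ω, ξ ω ∂μ) * (κ * ∑ j, ∫ ω, X j ω ^ 2 * min 1 |localSum X m j ω| ∂μ) := by
        rw [integral_const_mul, integral_const_mul, integral_finsetSum _ fun j _ => hfubini j]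
        simp only [integral_integral_mul_abs_steinKernel (hX.memLp_two _).integrable_sq
          (hX.measurable_partialSum _)]
    _ ≤ (∫ ω, ξ ω ∂μ) * b :=
        mul_le_mul_of_nonneg_left hX.sum_integral_sq_mul_min_localSum_le (integral_nonneg hξ0)
    _ = b * ∫ ω, ξ ω ∂μ := mul_comm _ _

end Variance

end KernelSums

/-! ### The concentration bootstrap -/

section Bootstrap

section Integrability

variable {Ω : Type*} [MeasurableSpace Ω] {μ : Measure Ω} {ξ V : Ω → ℝ} {α : ℝ}

lemma integrable_mul_trapezoid (hα : 0 < α) (hξ : Integrable ξ μ) (hV : Measurable V) :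
    Integrable (fun ω => ξ ω * trapezoid α (V ω)) μ :=
  hξ.mul_bdd (c := 1) (continuous_trapezoid.measurable.comp hV).aestronglyMeasurable
    (.of_forall fun _ => by
      rw [norm_of_nonneg (trapezoid_nonneg hα _)]
      exact trapezoid_le_one hα _)

lemma integrable_mul_ramp (hα : 0 ≤ α) (hξ : Integrable ξ μ) (hV : Measurable V) :
    Integrable (fun ω => ξ ω * ramp α (V ω)) μ :=
  hξ.mul_bdd (c := α) (continuous_ramp.measurable.comp hV).aestronglyMeasurable
    (.of_forall fun _ => by
      rw [norm_of_nonneg (ramp_nonneg _)]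
      exact ramp_le hα _)

lemma integral_mul_le_integral_mul_add {g k l : Ω → ℝ} (hg : MemLp g 2 μ) (hk : MemLp k 2 μ)
    (hl : MemLp l 2 μ) :
    ∫ ω, g ω * l ω ∂μ ≤
      ∫ ω, g ω * k ω ∂μ + 1 / 4 * ∫ ω, g ω ^ 2 ∂μ + ∫ ω, (k ω - l ω) ^ 2 ∂μ := by
  have hgk : Integrable (fun ω => g ω * k ω) μ := hg.integrable_mul hk
  have hgg : Integrable (fun ω => 1 / 4 * g ω ^ 2) μ := hg.integrable_sq.const_mul _
  have hkl : Integrable (fun ω => (k ω - l ω) ^ 2) μ := (hk.sub hl).integrable_sq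
  have hsum : Integrable (fun ω => g ω * k ω + 1 / 4 * g ω ^ 2) μ := hgk.add hgg
  rw [← integral_const_mul, ← integral_add hgk hgg, ← integral_add hsum hkl]
  refine integral_mono (hg.integrable_mul hl) (hsum.add hkl) fun ω => ?_
  dsimp only
  nlinarith [sq_nonneg (1 / 2 * g ω + (k ω - l ω))]

end Integrability

variable {Ω ι : Type*} [mΩ : MeasurableSpace Ω] {μ : Measure Ω} [Fintype ι] [PseudoMetricSpace ι]
  {X : ι → Ω → ℝ} {m α q : ℝ} {i : ι} {ξ a : Ω → ℝ}

section Shift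

variable [SFinite μ] (hq : IsConcentrated μ X m α q) (hX : LocallyDependent μ X m)
include hq hX

lemma IsConcentrated.abs_integral_mul_ramp_shift_le (hα : 0 ≤ α)
    (hξ : Measurable[sigmaOf X (near (2 * m) i)] ξ) (ha : Measurable[sigmaOf X (near (2 * m) i)] a)
    (hξ0 : ∀ ω, 0 ≤ ξ ω) (hξi : Integrable ξ μ) (t : ℝ) :
    |∫ ω, ξ ω * (ramp α (partialSum X Finset.univ ω + (a ω + t)) -
      ramp α (partialSum X Finset.univ ω + a ω)) ∂μ| ≤ q * |t| * ∫ ω, ξ ω ∂μ := by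
  have hat : Measurable[sigmaOf X (near (2 * m) i)] fun ω => a ω + t := ha.add measurable_const
  rcases le_total 0 t with ht | ht
  · have hinc := hq.integral_mul_ramp_sub_ramp_le hX hα i hξ ha hat hξ0 (fun ω => by linarith)
      (by simpa only [add_sub_cancel_left] using hξi.mul_const t)
    simp only [add_sub_cancel_left, integral_mul_const] at hinc
    rw [abs_of_nonneg ht, abs_of_nonneg (integral_nonneg fun ω => mul_nonneg (hξ0 ω)
      (sub_nonneg.2 (monotone_ramp (by linarith))))]
    linarith
  · have hinc := hq.integral_mul_ramp_sub_ramp_le hX hα i hξ hat ha hξ0 (fun ω => by linarith)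
      (by simpa only [sub_add_cancel_left] using hξi.mul_const (-t))
    simp only [sub_add_cancel_left, integral_mul_const] at hinc
    rw [abs_of_nonpos ht, abs_of_nonpos (integral_nonpos fun ω =>
      mul_nonpos_of_nonneg_of_nonpos (hξ0 ω) (sub_nonpos.2 (monotone_ramp (by linarith)))),
      ← integral_neg]
    simp only [← mul_neg, neg_sub]
    linarith

lemma IsConcentrated.abs_integral_mul_trapezoid_shift_le (hα : 0 < α)
    (hξ : Measurable[sigmaOf X (near (2 * m) i)] ξ) (ha : Measurable[sigmaOf X (near (2 * m) i)] a)
    (hξ0 : ∀ ω, 0 ≤ ξ ω) (hξi : Integrable ξ μ) (t : ℝ) :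
    |∫ ω, ξ ω * trapezoid α (partialSum X Finset.univ ω + a ω + t) ∂μ -
        ∫ ω, ξ ω * trapezoid α (partialSum X Finset.univ ω + a ω) ∂μ| ≤
      2 * q / α * |t| * ∫ ω, ξ ω ∂μ := by
  have hV : Measurable fun ω => partialSum X Finset.univ ω + a ω :=
    (hX.measurable_partialSum _).add (ha.mono (hX.sigmaOf_le _) le_rfl)
  set D : ℝ → ℝ := fun c => ∫ ω, ξ ω * (ramp α (partialSum X Finset.univ ω + (a ω + c + t)) -
    ramp α (partialSum X Finset.univ ω + (a ω + c))) ∂μ with hD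
  have hDle : ∀ c, |D c| ≤ q * |t| * ∫ ω, ξ ω ∂μ := fun c =>
    hq.abs_integral_mul_ramp_shift_le hX hα.le hξ (ha.add measurable_const) hξ0 hξi t
  have hint : ∀ c, Integrable (fun ω => ξ ω *
      (ramp α (partialSum X Finset.univ ω + (a ω + c + t)) -
        ramp α (partialSum X Finset.univ ω + (a ω + c)))) μ := fun c => by
    simp only [mul_sub, ← add_assoc]
    exact (integrable_mul_ramp hα.le hξi ((hV.add_const c).add_const t)).sub
      (integrable_mul_ramp hα.le hξi (hV.add_const c))
  have hsplit : ∫ ω, ξ ω * trapezoid α (partialSum X Finset.univ ω + a ω + t) ∂μ -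
      ∫ ω, ξ ω * trapezoid α (partialSum X Finset.univ ω + a ω) ∂μ = (D α - D (-α)) / α := by
    rw [hD, ← integral_sub (integrable_mul_trapezoid hα hξi (hV.add_const t))
      (integrable_mul_trapezoid hα hξi hV), ← integral_sub (hint α) (hint (-α)),
      ← integral_div]
    refine integral_congr_ae (.of_forall fun ω => ?_)
    simp only [trapezoid]
    ring_nf
  rw [hsplit, abs_div, abs_of_pos hα, div_le_iff₀ hα]
  calc |D α - D (-α)| ≤ |D α| + |D (-α)| := abs_sub _ _
    _ ≤ 2 * (q * |t| * ∫ ω, ξ ω ∂μ) := by linarith [hDle α, hDle (-α)]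
    _ = 2 * q / α * |t| * (∫ ω, ξ ω ∂μ) * α := by field_simp

end Shift

lemma LocallyDependent.integrable_mul_trapezoid_mul_meanFarKernel [IsFiniteMeasure μ]
    (hX : LocallyDependent μ X m) (hα : 0 < α) (i : ι) {V : Ω → ℝ} (hV : Measurable V)
    (hξi : Integrable ξ μ) :
    Integrable (fun z : Ω × ℝ => ξ z.1 * meanFarKernel μ X m i z.2 * trapezoid α (V z.1 + z.2))
      (μ.prod ν) :=
  integrable_mul_trapezoid hα (hξi.mul_prod (hX.integrable_meanFarKernel i))
    ((hV.comp measurable_fst).add measurable_snd)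

lemma NormalApproxData.integrable_abs_mul_abs_meanFarKernel [IsFiniteMeasure μ] {κ b : ℝ}
    (hX : NormalApproxData μ X m κ b) (i : ι) :
    Integrable (fun t => |t| * |meanFarKernel μ X m i t|) ν :=
  (hX.integrable_meanFarKernel i).abs.bdd_mul (c := 1) measurable_id.abs.aestronglyMeasurable <|
    (ae_restrict_mem measurableSet_Ioc).mono fun t ht => by
      simpa only [norm_eq_abs, abs_abs] using abs_le.2 ⟨ht.1.le, ht.2⟩

section LowerBound

variable [IsFiniteMeasure μ] {κ b : ℝ} (hX : NormalApproxData μ X m κ b)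
  (hq : IsConcentrated μ X m α q)
include hX hq

lemma NormalApproxData.integral_integral_mul_meanFarKernel_ge (hα : 0 < α) (hq0 : 0 ≤ q)
    (hξ : Measurable[sigmaOf X (near (2 * m) i)] ξ) (ha : Measurable[sigmaOf X (near (2 * m) i)] a)
    (hξ0 : ∀ ω, 0 ≤ ξ ω) (hξi : Integrable ξ μ) :
    13 / 20 * ∫ ω, ξ ω * trapezoid α (partialSum X Finset.univ ω + a ω) ∂μ -
        2 * q / α * b * ∫ ω, ξ ω ∂μ ≤
      ∫ ω, ∫ t, ξ ω * meanFarKernel μ X m i t *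
        trapezoid α (partialSum X Finset.univ ω + a ω + t) ∂ν ∂μ := by
  have hV : Measurable fun ω => partialSum X Finset.univ ω + a ω :=
    (hX.measurable_partialSum _).add (ha.mono (hX.sigmaOf_le _) le_rfl)
  have hprod := hX.integrable_mul_trapezoid_mul_meanFarKernel hα i hV hξi
  set H : ℝ → ℝ := fun t => ∫ ω, ξ ω * trapezoid α (partialSum X Finset.univ ω + a ω + t) ∂μ
  set H₀ := ∫ ω, ξ ω * trapezoid α (partialSum X Finset.univ ω + a ω) ∂μ
  set L := 2 * q / α * ∫ ω, ξ ω ∂μ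
  have hH₀ : 0 ≤ H₀ := integral_nonneg fun ω => mul_nonneg (hξ0 ω) (trapezoid_nonneg hα _)
  have hL : 0 ≤ L := mul_nonneg (by positivity) (integral_nonneg hξ0)
  have hswap : ∀ t, ∫ ω, ξ ω * meanFarKernel μ X m i t *
      trapezoid α (partialSum X Finset.univ ω + a ω + t) ∂μ = H t * meanFarKernel μ X m i t :=
    fun t => by simp only [H, ← integral_mul_const, mul_right_comm]
  have hmean := (hX.integrable_meanFarKernel i).const_mul H₀
  have hdrift := (hX.integrable_abs_mul_abs_meanFarKernel i).const_mul L
  have hpoint : ∀ t, H₀ * meanFarKernel μ X m i t - L * (|t| * |meanFarKernel μ X m i t|) ≤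
      H t * meanFarKernel μ X m i t := fun t => by
    have hshift : |H t - H₀| ≤ 2 * q / α * |t| * ∫ ω, ξ ω ∂μ :=
      hq.abs_integral_mul_trapezoid_shift_le hX.toLocallyDependent hα hξ ha hξ0 hξi t
    have hmul := mul_le_mul_of_nonneg_right hshift (abs_nonneg (meanFarKernel μ X m i t))
    rw [← abs_mul] at hmul
    linarith [neg_abs_le ((H t - H₀) * meanFarKernel μ X m i t)]
  calc 13 / 20 * H₀ - 2 * q / α * b * ∫ ω, ξ ω ∂μ
      ≤ H₀ * (∫ t, meanFarKernel μ X m i t ∂ν) -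
          L * ∫ t, |t| * |meanFarKernel μ X m i t| ∂ν := by
        linarith [mul_le_mul_of_nonneg_left (hX.integral_meanFarKernel_ge i) hH₀,
          mul_le_mul_of_nonneg_left (hX.integral_abs_mul_abs_meanFarKernel_le i) hL]
    _ = ∫ t, (H₀ * meanFarKernel μ X m i t - L * (|t| * |meanFarKernel μ X m i t|)) ∂ν := by
        rw [integral_sub hmean hdrift, integral_const_mul, integral_const_mul]
    _ ≤ ∫ t, H t * meanFarKernel μ X m i t ∂ν :=
        integral_mono (hmean.sub hdrift)
          (by simpa only [hswap] using hprod.integral_prod_right) hpoint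
    _ = _ := by
        rw [integral_integral_swap hprod]
        simp only [hswap]

end LowerBound

section UpperBound

/-- The pointwise cost of replacing the increments of `trapezoidPrimitive` by the Stein kernel
truncated to `(-1, 1]`, over the indices at distance more than `4 * m` from `i`. -/
noncomputable def truncationError (X : ι → Ω → ℝ) (m : ℝ) (i : ι) (ω : Ω) : ℝ :=
  ∑ j ∈ far (4 * m) i, |X j ω| * |localSum X m j ω| * min 1 |localSum X m j ω|

lemma LocallyDependent.memLp_farKernel_left [IsFiniteMeasure μ] (hX : LocallyDependent μ X m)
    (i : ι) (ω : Ω) : MemLp (fun t => farKernel X m i t ω) 2 ν :=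
  .of_bound ((hX.measurable_uncurry_farKernel i).comp measurable_prodMk_left).aestronglyMeasurable
    _ (.of_forall fun t => abs_farKernel_le i t ω)

lemma LocallyDependent.memLp_meanFarKernel [IsFiniteMeasure μ] (hX : LocallyDependent μ X m)
    (i : ι) : MemLp (meanFarKernel μ X m i) 2 ν :=
  .of_bound (hX.measurable_meanFarKernel i).aestronglyMeasurable _
    (.of_forall fun t => hX.abs_meanFarKernel_le i t)

lemma memLp_trapezoid_add (hα : 0 < α) (v : ℝ) : MemLp (fun t => trapezoid α (v + t)) 2 ν :=
  .of_bound (continuous_trapezoid.comp (continuous_const.add continuous_id)).aestronglyMeasurable 1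
    (.of_forall fun t => by
      rw [norm_of_nonneg (trapezoid_nonneg hα _)]
      exact trapezoid_le_one hα _)

omit mΩ in
lemma integral_trapezoid_mul_farKernel_le (hα : 0 < α) (v : ℝ) (i : ι) (ω : Ω) :
    ∫ t, trapezoid α (v + t) * farKernel X m i t ω ∂ν ≤
      ∑ j ∈ far (4 * m) i, X j ω * (trapezoidPrimitive α v -
        trapezoidPrimitive α (v - localSum X m j ω)) + truncationError X m i ω := by
  have hterm : ∀ j, MemLp (fun t => kernelTerm X m j t ω) 2 ν := fun j =>
    .of_bound (measurable_const.mul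
      (measurable_uncurry_steinKernel.comp measurable_prodMk_left)).aestronglyMeasurable
      _ (.of_forall fun t => abs_kernelTerm_le j t ω)
  have hint : ∀ j, Integrable (fun t => trapezoid α (v + t) * kernelTerm X m j t ω) ν := fun j =>
    (memLp_trapezoid_add hα v).integrable_mul (hterm j)
  simp only [farKernel, Finset.mul_sum, truncationError, ← Finset.sum_add_distrib]
  rw [integral_finsetSum _ fun j _ => hint j]
  refine Finset.sum_le_sum fun j _ => ?_
  have hincr := integral_trapezoid_mul_steinKernel_sub_le hα v (X j ω) (localSum X m j ω)
  rw [mul_assoc |X j ω|]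
  exact sub_le_iff_le_add.1 hincr

lemma LocallyDependent.integral_trapezoid_mul_meanFarKernel_le [IsFiniteMeasure μ]
    (hX : LocallyDependent μ X m) (hα : 0 < α) (v : ℝ) (i : ι) (ω : Ω) :
    ∫ t, trapezoid α (v + t) * meanFarKernel μ X m i t ∂ν ≤
      ∑ j ∈ far (4 * m) i, X j ω * (trapezoidPrimitive α v -
        trapezoidPrimitive α (v - localSum X m j ω)) + truncationError X m i ω + 3 / 4 * α +
      ∫ t, (farKernel X m i t ω - meanFarKernel μ X m i t) ^ 2 ∂ν := by
  have hyoung := integral_mul_le_integral_mul_add (memLp_trapezoid_add hα v)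
    (hX.memLp_farKernel_left i ω) (hX.memLp_meanFarKernel i)
  linarith [integral_trapezoid_mul_farKernel_le (X := X) (m := m) hα v i ω,
    integral_trapezoid_sq_le hα v]

section Exchange

variable {G : ℝ → ℝ} {C : ℝ}

lemma LocallyDependent.integrable_mul_mul_comp [IsFiniteMeasure μ]
    (hX : LocallyDependent μ X m) (hm : 0 ≤ m) (hG : Measurable G) (hGC : ∀ x, |G x| ≤ C)
    {j : ι} (hj : j ∈ far (4 * m) i)
    (hξ : Measurable[sigmaOf X (near (2 * m) i)] ξ) (hξi : Integrable ξ μ) {V : Ω → ℝ}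
    (hV : Measurable V) :
    Integrable (fun ω => ξ ω * (X j ω * G (V ω))) μ := by
  have hindep : IndepFun ξ (X j) μ := indepFun_of_indep (hX.indep_near_far i) hξ
    (measurable_sigmaOf (far_subset_far hm i hj))
  simp only [← mul_assoc]
  exact (hindep.integrable_mul hξi ((hX.memLp_two j).integrable one_le_two)).mul_bdd (c := C)
    (hG.comp hV).aestronglyMeasurable (.of_forall fun _ => hGC _)

lemma LocallyDependent.integral_mul_mul_comp_sub_localSum (hX : LocallyDependent μ X m) (hm : 0 ≤ m)
    (hG : Measurable G) {j : ι} (hj : j ∈ far (4 * m) i)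
    (hξ : Measurable[sigmaOf X (near (2 * m) i)] ξ)
    (ha : Measurable[sigmaOf X (near (2 * m) i)] a) :
    ∫ ω, ξ ω * (X j ω * G (partialSum X Finset.univ ω + a ω - localSum X m j ω)) ∂μ = 0 := by
  have hsub : sigmaOf X (near (2 * m) i) ≤ sigmaOf X (far m j) := sigmaOf_mono fun k hk =>
    mem_far.2 (by linarith [mem_near.1 hk, mem_far.1 hj, dist_triangle_right i j k])
  rw [← hX.integral_mul_eq_zero_of_far j ((hξ.mono hsub le_rfl).mul
    (hG.comp ((measurable_partialSum_sigmaOf subset_rfl).add (ha.mono hsub le_rfl))))]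
  refine integral_congr_ae (.of_forall fun ω => ?_)
  dsimp only [Pi.mul_apply, Function.comp_apply, Pi.add_apply]
  rw [← partialSum_near_add_partialSum_far X m j ω, mul_left_comm]
  ring_nf

variable [IsProbabilityMeasure μ] {κ b : ℝ} (hX : NormalApproxData μ X m κ b)
include hX

lemma NormalApproxData.integral_mul_partialSum_far_mul_le {h : Ω → ℝ} (hhC : ∀ ω, |h ω| ≤ C)
    (hC : 0 ≤ C) (hξ : Measurable[sigmaOf X (near (2 * m) i)] ξ) (hξ0 : ∀ ω, 0 ≤ ξ ω)
    (hξi : Integrable ξ μ) :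
    ∫ ω, ξ ω * (partialSum X (far (4 * m) i) ω * h ω) ∂μ ≤ 4 / 3 * C * ∫ ω, ξ ω ∂μ := by
  have hfar : Measurable[sigmaOf X (far (3 * m) i)] fun ω => |partialSum X (far (4 * m) i) ω| :=
    continuous_abs.measurable.comp
      (measurable_partialSum_sigmaOf (far_subset_far hX.range_nonneg i))
  have hint : Integrable (fun ω => ξ ω * |partialSum X (far (4 * m) i) ω|) μ :=
    (indepFun_of_indep (hX.indep_near_far i) hξ hfar).integrable_mul hξi
      ((hX.memLp_partialSum _).integrable one_le_two).abs
  calc ∫ ω, ξ ω * (partialSum X (far (4 * m) i) ω * h ω) ∂μ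
      ≤ ∫ ω, |ξ ω * (partialSum X (far (4 * m) i) ω * h ω)| ∂μ :=
        (le_abs_self _).trans abs_integral_le_integral_abs
    _ ≤ ∫ ω, C * (ξ ω * |partialSum X (far (4 * m) i) ω|) ∂μ := by
        refine integral_mono_of_nonneg (.of_forall fun _ => abs_nonneg _) (hint.const_mul C)
          (.of_forall fun ω => ?_)
        dsimp only
        rw [abs_mul, abs_mul, abs_of_nonneg (hξ0 ω), ← mul_assoc, mul_comm]
        exact mul_le_mul_of_nonneg_right (hhC ω) (mul_nonneg (hξ0 ω) (abs_nonneg _))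
    _ = C * ((∫ ω, ξ ω ∂μ) * ∫ ω, |partialSum X (far (4 * m) i) ω| ∂μ) := by
        rw [integral_const_mul, integral_mul_of_indep (hX.indep_near_far i) (hX.sigmaOf_le _)
          (hX.sigmaOf_le _) hξ hfar]
    _ ≤ C * ((∫ ω, ξ ω ∂μ) * (4 / 3)) := by
        have hξint : 0 ≤ ∫ ω, ξ ω ∂μ := integral_nonneg hξ0
        have hle := hX.integral_abs_far_le i
        gcongr
    _ = 4 / 3 * C * ∫ ω, ξ ω ∂μ := by ring

lemma NormalApproxData.sum_integral_mul_comp_sub_le (hG : Measurable G) (hGC : ∀ x, |G x| ≤ C)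
    (hξ : Measurable[sigmaOf X (near (2 * m) i)] ξ) (ha : Measurable[sigmaOf X (near (2 * m) i)] a)
    (hξ0 : ∀ ω, 0 ≤ ξ ω) (hξi : Integrable ξ μ) :
    ∑ j ∈ far (4 * m) i, ∫ ω, ξ ω * (X j ω * (G (partialSum X Finset.univ ω + a ω) -
        G (partialSum X Finset.univ ω + a ω - localSum X m j ω))) ∂μ ≤
      4 / 3 * C * ∫ ω, ξ ω ∂μ := by
  have hV : Measurable fun ω => partialSum X Finset.univ ω + a ω :=
    (hX.measurable_partialSum _).add (ha.mono (hX.sigmaOf_le _) le_rfl)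
  have hint : ∀ {V : Ω → ℝ}, Measurable V → ∀ j ∈ far (4 * m) i,
      Integrable (fun ω => ξ ω * (X j ω * G (V ω))) μ :=
    fun hV j hj => hX.integrable_mul_mul_comp hX.range_nonneg hG hGC hj hξ hξi hV
  calc ∑ j ∈ far (4 * m) i, ∫ ω, ξ ω * (X j ω * (G (partialSum X Finset.univ ω + a ω) -
        G (partialSum X Finset.univ ω + a ω - localSum X m j ω))) ∂μ
      = ∑ j ∈ far (4 * m) i, ∫ ω, ξ ω * (X j ω * G (partialSum X Finset.univ ω + a ω)) ∂μ := by
        refine Finset.sum_congr rfl fun j hj => ?_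
        simp only [mul_sub]
        rw [integral_sub (hint hV j hj)
            (hint (V := fun ω => partialSum X Finset.univ ω + a ω - localSum X m j ω)
              (hV.sub (hX.measurable_partialSum _)) j hj),
          hX.integral_mul_mul_comp_sub_localSum hX.range_nonneg hG hj hξ ha, sub_zero]
    _ = ∫ ω, ξ ω * (partialSum X (far (4 * m) i) ω *
          G (partialSum X Finset.univ ω + a ω)) ∂μ := by
        rw [← integral_finsetSum _ (hint hV)]
        simp only [partialSum, Finset.sum_mul, Finset.mul_sum]
    _ ≤ 4 / 3 * C * ∫ ω, ξ ω ∂μ := hX.integral_mul_partialSum_far_mul_le (fun ω => hGC _)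
        ((abs_nonneg _).trans (hGC 0)) hξ hξ0 hξi

end Exchange

variable {κ b : ℝ} (hX : NormalApproxData μ X m κ b)
include hX

lemma NormalApproxData.integral_mul_truncationError_le
    (hξ : Measurable[sigmaOf X (near (2 * m) i)] ξ) (hξ0 : ∀ ω, 0 ≤ ξ ω) (hξi : Integrable ξ μ) :
    Integrable (fun ω => ξ ω * truncationError X m i ω) μ ∧
      ∫ ω, ξ ω * truncationError X m i ω ∂μ ≤ b * ∫ ω, ξ ω ∂μ := by
  have hR : Measurable[sigmaOf X (far (3 * m) i)] (truncationError X m i) :=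
    Finset.measurable_fun_sum _ fun j hj =>
      have hlocal : Measurable[sigmaOf X (far (3 * m) i)] fun ω => |localSum X m j ω| :=
        continuous_abs.measurable.comp (measurable_partialSum_sigmaOf (near_subset_far hj))
      ((continuous_abs.measurable.comp (measurable_sigmaOf
        (far_subset_far hX.range_nonneg i hj))).mul hlocal).mul
        (measurable_const.min hlocal)
  have hRi : Integrable (truncationError X m i) μ :=
    integrable_finsetSum _ fun j _ => hX.integrable_abs_mul_localSum_mul_min j
  refine ⟨(indepFun_of_indep (hX.indep_near_far i) hξ hR).integrable_mul hξi hRi, ?_⟩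
  rw [integral_mul_of_indep (hX.indep_near_far i) (hX.sigmaOf_le _) (hX.sigmaOf_le _) hξ hR,
    mul_comm]
  refine mul_le_mul_of_nonneg_right ?_ (integral_nonneg hξ0)
  unfold truncationError
  rw [integral_finsetSum _ fun j _ => hX.integrable_abs_mul_localSum_mul_min j]
  exact hX.sum_integral_abs_mul_localSum_mul_min_le _

variable [IsProbabilityMeasure μ]

lemma NormalApproxData.integral_integral_mul_meanFarKernel_le (hα : 0 < α)
    (hξ : Measurable[sigmaOf X (near (2 * m) i)] ξ) (ha : Measurable[sigmaOf X (near (2 * m) i)] a)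
    (hξ0 : ∀ ω, 0 ≤ ξ ω) (hξi : Integrable ξ μ) :
    ∫ ω, ∫ t, ξ ω * meanFarKernel μ X m i t *
        trapezoid α (partialSum X Finset.univ ω + a ω + t) ∂ν ∂μ ≤
      (11 / 4 * α + 2 * b) * ∫ ω, ξ ω ∂μ := by
  have hV : Measurable fun ω => partialSum X Finset.univ ω + a ω :=
    (hX.measurable_partialSum _).add (ha.mono (hX.sigmaOf_le _) le_rfl)
  set D : ι → Ω → ℝ := fun j ω => ξ ω * (X j ω *
    (trapezoidPrimitive α (partialSum X Finset.univ ω + a ω) -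
      trapezoidPrimitive α (partialSum X Finset.univ ω + a ω - localSum X m j ω))) with hD
  set Q : Ω → ℝ := fun ω =>
    ∫ t, ξ ω * (farKernel X m i t ω - meanFarKernel μ X m i t) ^ 2 ∂ν with hQ
  obtain ⟨hRi, hR⟩ := hX.integral_mul_truncationError_le hξ hξ0 hξi
  have hDi : ∀ j ∈ far (4 * m) i, Integrable (D j) μ := fun j hj => by
    simp only [hD, mul_sub]
    have hint : ∀ {V : Ω → ℝ}, Measurable V →
        Integrable (fun ω => ξ ω * (X j ω * trapezoidPrimitive α (V ω))) μ := fun hV =>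
      hX.integrable_mul_mul_comp hX.range_nonneg continuous_trapezoidPrimitive.measurable
        (abs_trapezoidPrimitive_le hα) hj hξ hξi hV
    exact (hint hV).sub (hint (hV.sub (hX.measurable_partialSum _)))
  have hQi : Integrable Q μ := (hX.integrable_mul_sq_farKernel_sub i hξ hξi).integral_prod_left
  have hpoint : ∀ ω, ∫ t, ξ ω * meanFarKernel μ X m i t *
      trapezoid α (partialSum X Finset.univ ω + a ω + t) ∂ν ≤
        ∑ j ∈ far (4 * m) i, D j ω + ξ ω * truncationError X m i ω + 3 / 4 * α * ξ ω + Q ω :=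
    fun ω => by
      have hkernel := mul_le_mul_of_nonneg_left (hX.integral_trapezoid_mul_meanFarKernel_le hα
        (partialSum X Finset.univ ω + a ω) i ω) (hξ0 ω)
      simp only [hD, hQ, integral_const_mul, mul_assoc, ← Finset.mul_sum]
      simp only [mul_comm (meanFarKernel μ X m i _)]
      linarith
  have hDR := (integrable_finsetSum _ hDi).add hRi
  have hint := integral_mono
    (hX.integrable_mul_trapezoid_mul_meanFarKernel hα i hV hξi).integral_prod_left
    ((hDR.add (hξi.const_mul (3 / 4 * α))).add hQi) hpoint
  rw [integral_add' (hDR.add (hξi.const_mul _)) hQi, integral_add' hDR (hξi.const_mul _),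
    integral_add' (integrable_finsetSum _ hDi) hRi, integral_finsetSum _ hDi,
    integral_const_mul] at hint
  have hDle := hX.sum_integral_mul_comp_sub_le (C := 3 / 2 * α)
    continuous_trapezoidPrimitive.measurable (abs_trapezoidPrimitive_le hα) hξ ha hξ0 hξi
  linarith [hX.integral_integral_mul_sq_farKernel_sub_le i hξ hξ0 hξi]

end UpperBound

variable [IsProbabilityMeasure μ] {κ b : ℝ} (hX : NormalApproxData μ X m κ b)
include hX

lemma IsConcentrated.bootstrap (hq : IsConcentrated μ X m α q) (hα : 0 < α) (hq0 : 0 ≤ q) :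
    IsConcentrated μ X m α ((11 / 4 * α + 2 * b + 2 * q / α * b) / (13 / 20)) := by
  intro i ξ a hξ ha hξ0 hξi
  have hV : Measurable fun ω => partialSum X Finset.univ ω + a ω :=
    (hX.measurable_partialSum _).add (ha.mono (hX.sigmaOf_le _) le_rfl)
  have htrapezoid : ∫ ω, ξ ω * (Icc 0 α).indicator 1 (partialSum X Finset.univ ω + a ω) ∂μ ≤
      ∫ ω, ξ ω * trapezoid α (partialSum X Finset.univ ω + a ω) ∂μ :=
    integral_mono_of_nonneg
      (.of_forall fun ω => mul_nonneg (hξ0 ω) (indicator_nonneg (fun _ _ => zero_le_one) _))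
      (integrable_mul_trapezoid hα hξi hV)
      (.of_forall fun ω => mul_le_mul_of_nonneg_left (indicator_Icc_le_trapezoid hα _) (hξ0 ω))
  rw [div_mul_eq_mul_div, le_div_iff₀ (by norm_num)]
  linarith [hX.integral_integral_mul_meanFarKernel_ge hq hα hq0 hξ ha hξ0 hξi,
    hX.integral_integral_mul_meanFarKernel_le hα hξ ha hξ0 hξi]

end Bootstrap

section Concentration

variable {Ω ι : Type*} [MeasurableSpace Ω] {μ : Measure Ω} [Fintype ι] [PseudoMetricSpace ι]
  {X : ι → Ω → ℝ} {m α q r : ℝ}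

lemma IsConcentrated.mono (hq : IsConcentrated μ X m α q) (hqr : q ≤ r) :
    IsConcentrated μ X m α r := fun i ξ a hξ ha hξ0 hξi =>
  (hq i ξ a hξ ha hξ0 hξi).trans (mul_le_mul_of_nonneg_right hqr (integral_nonneg hξ0))

lemma isConcentrated_one : IsConcentrated μ X m α 1 := by
  intro _ ξ a _ _ hξ0 hξi
  rw [one_mul]
  refine integral_mono_of_nonneg
    (.of_forall fun ω => mul_nonneg (hξ0 ω) (indicator_nonneg (fun _ _ => zero_le_one) _)) hξi
    (.of_forall fun ω => mul_le_of_le_one_right (hξ0 ω) ?_)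
  exact indicator_le_self' (fun _ _ => zero_le_one) _

lemma isConcentrated_csInf {s : Set ℝ} (hs : s.Nonempty) (h : ∀ q ∈ s, IsConcentrated μ X m α q) :
    IsConcentrated μ X m α (sInf s) := by
  intro i ξ a hξ ha hξ0 hξi
  have hξint : 0 ≤ ∫ ω, ξ ω ∂μ := integral_nonneg hξ0
  rcases hξint.eq_or_lt with hzero | hpos
  · obtain ⟨q, hq⟩ := hs
    simpa only [← hzero, mul_zero] using h q hq i ξ a hξ ha hξ0 hξi
  · rw [← div_le_iff₀ hpos]
    exact le_csInf hs fun q hq => (div_le_iff₀ hpos).2 (h q hq i ξ a hξ ha hξ0 hξi)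

lemma NormalApproxData.isConcentrated [IsProbabilityMeasure μ] {κ b : ℝ}
    (hX : NormalApproxData μ X m κ b) : IsConcentrated μ X m (8 * b) (60 * b) := by
  have hb := hX.bound_pos
  set s : Set ℝ := {q | 0 ≤ q ∧ IsConcentrated μ X m (8 * b) q}
  have hs : s.Nonempty := ⟨1, zero_le_one, isConcentrated_one⟩
  have hinf : IsConcentrated μ X m (8 * b) (sInf s) := isConcentrated_csInf hs fun q hq => hq.2
  have hinf0 : 0 ≤ sInf s := le_csInf hs fun q hq => hq.1
  have hstep := hinf.bootstrap hX (by positivity) hinf0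
  have hle : sInf s ≤ (11 / 4 * (8 * b) + 2 * b + 2 * sInf s / (8 * b) * b) / (13 / 20) :=
    csInf_le ⟨0, fun q hq => hq.1⟩ ⟨by positivity, hstep⟩
  have hdrift : 2 * sInf s / (8 * b) * b = sInf s / 4 := by
    field_simp
    ring
  rw [hdrift, le_div_iff₀ (by norm_num)] at hle
  exact hinf.mono (by linarith)

end Concentration

/-! ### Local oscillation of the Stein solution -/

section Oscillation

lemma exists_mem_uIcc_sub_eq_mul {f f' : ℝ → ℝ} (hf : ∀ w, HasDerivAt f (f' w) w) (x y : ℝ) :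
    ∃ u ∈ uIcc x y, f x - f y = (x - y) * f' u := by
  have hc : Continuous f := continuous_iff_continuousAt.2 fun w => (hf w).continuousAt
  wlog hxy : x ≤ y generalizing x y
  · obtain ⟨u, hu, h⟩ := this y x (le_of_not_ge hxy)
    exact ⟨u, uIcc_comm y x ▸ hu, by linarith⟩
  rcases hxy.eq_or_lt with rfl | hlt
  · exact ⟨x, left_mem_uIcc, by ring⟩
  · obtain ⟨u, hu, h⟩ := exists_hasDerivAt_eq_slope f f' hlt hc.continuousOn fun w _ => hf w
    refine ⟨u, Icc_subset_uIcc (Ioo_subset_Icc_self hu), ?_⟩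
    rw [h]
    field_simp [sub_ne_zero.2 hlt.ne']
    ring

lemma abs_mul_steinSolution_sub_le {h : ℝ → ℝ} (hc : Continuous h) (h01 : ∀ x, h x ∈ Icc 0 1)
    (u v : ℝ) :
    |u * steinSolution h u - v * steinSolution h v| ≤ 2 * |u - v| * (1 + |v|) := by
  obtain ⟨x, -, hx⟩ := exists_mem_uIcc_sub_eq_mul (hasDerivAt_steinSolution hc h01) u v
  have hfactor : u * steinSolution h u - v * steinSolution h v =
      (u - v) * (steinSolution h u + v * steinDeriv h x) := by
    linear_combination v * hx
  rw [hfactor, abs_mul, mul_comm 2, mul_assoc]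
  gcongr
  calc |steinSolution h u + v * steinDeriv h x|
      ≤ |steinSolution h u| + |v| * |steinDeriv h x| := by
        rw [← abs_mul]
        exact abs_add_le _ _
    _ ≤ 2 + |v| * 2 := by
        gcongr
        exacts [abs_steinSolution_le hc h01 u, abs_steinDeriv_le hc h01 x]
    _ = 2 * (1 + |v|) := by ring

lemma abs_mul_steinSolution_sub_le_min {h : ℝ → ℝ} (hc : Continuous h)
    (h01 : ∀ x, h x ∈ Icc 0 1) {u v N B D : ℝ} (hB : 0 ≤ B) (hBD : B ≤ D) (huv : |u - v| ≤ 2 * B)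
    (hv : |v| ≤ |N| + D) :
    |u * steinSolution h u - v * steinSolution h v| ≤
      4 * (min 1 B * (|N| + 1)) + 4 * min 1 D := by
  rcases le_total 1 D with hD | hD
  · have htwo := (abs_sub _ _).trans
      (add_le_add (abs_mul_steinSolution_le hc h01 u) (abs_mul_steinSolution_le hc h01 v))
    have hmin : 0 ≤ min 1 B * (|N| + 1) := mul_nonneg (le_min zero_le_one hB) (by positivity)
    rw [min_eq_left hD]
    linarith
  · rw [min_eq_right hD, min_eq_right (hBD.trans hD)]
    calc |u * steinSolution h u - v * steinSolution h v|
        ≤ 2 * |u - v| * (1 + |v|) := abs_mul_steinSolution_sub_le hc h01 u v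
      _ ≤ 2 * (2 * B) * (1 + (|N| + D)) := by gcongr
      _ ≤ 4 * (B * (|N| + 1)) + 4 * D := by nlinarith [abs_nonneg N]

variable {α : ℝ}

lemma smoothIndicator_sub_smoothIndicator (z u v : ℝ) :
    smoothIndicator α z u - smoothIndicator α z v =
      1 / α * (ramp α (v - z) - ramp α (u - z)) := by
  unfold smoothIndicator
  ring

lemma antitone_smoothIndicator (hα : 0 ≤ α) (z : ℝ) : Antitone (smoothIndicator α z) := by
  intro u v huv
  rw [← sub_nonneg, smoothIndicator_sub_smoothIndicator]
  exact mul_nonneg (by positivity) (sub_nonneg.2 (monotone_ramp (by linarith)))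

lemma abs_smoothIndicator_sub_le (hα : 0 < α) (z : ℝ) {w u v B : ℝ} (hu : |u - w| ≤ B)
    (hv : |v - w| ≤ B) :
    |smoothIndicator α z u - smoothIndicator α z v| ≤
      min 1 B + (smoothIndicator α z (w - min 1 B) - smoothIndicator α z (w + min 1 B)) := by
  have hanti := antitone_smoothIndicator hα.le z
  have hB : 0 ≤ B := (abs_nonneg _).trans hu
  rcases le_total 1 B with hB1 | hB1
  · have hu01 := smoothIndicator_mem_Icc hα z u
    have hv01 := smoothIndicator_mem_Icc hα z v
    have hmono := hanti (show w - 1 ≤ w + 1 by linarith)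
    rw [min_eq_left hB1, abs_le]
    constructor <;> linarith [hu01.1, hu01.2, hv01.1, hv01.2]
  · rw [abs_le] at hu hv
    have hmem : ∀ x, -B ≤ x - w ∧ x - w ≤ B →
        smoothIndicator α z x ∈ Icc (smoothIndicator α z (w + B)) (smoothIndicator α z (w - B)) :=
      fun x hx => ⟨hanti (by linarith), hanti (by linarith)⟩
    rw [min_eq_right hB1, abs_le]
    constructor <;> linarith [(hmem u hu).1, (hmem u hu).2, (hmem v hv).1, (hmem v hv).2]

/-- A bound for the oscillation of `steinDeriv (smoothIndicator α z)` on the `B`-neighbourhood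
of `w`, for points of absolute value at most `|N| + D`. -/
noncomputable def steinOscillation (α z w N B D : ℝ) : ℝ :=
  4 * (min 1 B * (|N| + 1)) + 5 * min 1 D +
    (smoothIndicator α z (w - min 1 B) - smoothIndicator α z (w + min 1 B))

lemma abs_steinDeriv_smoothIndicator_sub_le (hα : 0 < α) (z : ℝ) {w N B D u v : ℝ}
    (hBD : B ≤ D) (hu : |u - w| ≤ B) (hv : |v - w| ≤ B) (hvN : |v| ≤ |N| + D) :
    |steinDeriv (smoothIndicator α z) u - steinDeriv (smoothIndicator α z) v| ≤
      steinOscillation α z w N B D := by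
  have huv : |u - v| ≤ 2 * B := by
    have := abs_sub_le u w v
    rw [abs_sub_comm w v] at this
    linarith
  have hlinear := abs_mul_steinSolution_sub_le_min (continuous_smoothIndicator z)
    (smoothIndicator_mem_Icc hα z) ((abs_nonneg _).trans hu) hBD huv hvN
  have hjump := abs_smoothIndicator_sub_le hα z hu hv
  have hmin : min 1 B ≤ min 1 D := min_le_min_left _ hBD
  have hsplit : steinDeriv (smoothIndicator α z) u - steinDeriv (smoothIndicator α z) v =
      (u * steinSolution (smoothIndicator α z) u - v * steinSolution (smoothIndicator α z) v) +
        (smoothIndicator α z u - smoothIndicator α z v) := by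
    unfold steinDeriv
    ring
  rw [hsplit]
  unfold steinOscillation
  linarith [abs_add_le
    (u * steinSolution (smoothIndicator α z) u - v * steinSolution (smoothIndicator α z) v)
    (smoothIndicator α z u - smoothIndicator α z v)]

end Oscillation

section LocalOscillation

variable {Ω ι : Type*} [Fintype ι] [PseudoMetricSpace ι]

/-- The bound `steinOscillation` around `W = ∑ X_j`, at the scale of the variables near `i`. -/
noncomputable def localOscillation (X : ι → Ω → ℝ) (m α z : ℝ) (i : ι) (ω : Ω) : ℝ :=
  steinOscillation α z (partialSum X Finset.univ ω) (partialSum X (far (4 * m) i) ω)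
    (absSum X (near (2 * m) i) ω) (localMass X m i ω)

/-- The sum of the `|X_j|` over the indices within `2m` of `i`, capped at `1`. -/
noncomputable def cappedMass (X : ι → Ω → ℝ) (m : ℝ) (i : ι) (ω : Ω) : ℝ :=
  min 1 (absSum X (near (2 * m) i) ω)

/-- The drop of the smoothed indicator across the interval of radius `cappedMass` around
`W = ∑ X_j`. -/
noncomputable def localDrop (X : ι → Ω → ℝ) (m α z : ℝ) (i : ι) (ω : Ω) : ℝ :=
  smoothIndicator α z (partialSum X Finset.univ ω - cappedMass X m i ω) -
    smoothIndicator α z (partialSum X Finset.univ ω + cappedMass X m i ω)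

variable {X : ι → Ω → ℝ} {m α : ℝ}

lemma cappedMass_nonneg (i : ι) (ω : Ω) : 0 ≤ cappedMass X m i ω :=
  le_min zero_le_one (absSum_nonneg ω)

lemma measurable_cappedMass_sigmaOf (i : ι) :
    Measurable[sigmaOf X (near (2 * m) i)] (cappedMass X m i) :=
  measurable_const.min (measurable_absSum_sigmaOf subset_rfl)

lemma measurable_abs_far_add_one_sigmaOf (hm : 0 ≤ m) (i : ι) :
    Measurable[sigmaOf X (far (3 * m) i)] fun ω => |partialSum X (far (4 * m) i) ω| + 1 :=
  (continuous_abs.measurable.comp (measurable_partialSum_sigmaOf (far_subset_far hm i))).add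
    measurable_const

lemma mul_localOscillation (x z : ℝ) (i : ι) (ω : Ω) :
    x * localOscillation X m α z i ω =
      4 * (x * cappedMass X m i ω * (|partialSum X (far (4 * m) i) ω| + 1)) +
        5 * (x * min 1 (localMass X m i ω)) + x * localDrop X m α z i ω := by
  simp only [localOscillation, steinOscillation, localDrop, cappedMass]
  ring

lemma abs_partialSum_far_le_add_localMass (hm : 0 ≤ m) (i : ι) (ω : Ω) :
    |partialSum X (far (2 * m) i) ω| ≤ |partialSum X (far (4 * m) i) ω| + localMass X m i ω := by
  classical
  have hsub : far (4 * m) i ⊆ far (2 * m) i := fun j hj => by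
    rw [mem_far] at hj ⊢
    linarith
  have hring : far (2 * m) i \ far (4 * m) i ⊆ near (4 * m) i := fun j hj => by
    simpa only [mem_near, mem_far, not_lt] using (Finset.mem_sdiff.1 hj).2
  have hsplit : partialSum X (far (2 * m) i) ω =
      partialSum X (far (4 * m) i) ω + partialSum X (far (2 * m) i \ far (4 * m) i) ω := by
    rw [add_comm]
    exact (Finset.sum_sdiff hsub).symm
  rw [hsplit]
  exact (abs_add_le _ _).trans
    (add_le_add_right ((abs_partialSum_le_absSum ω).trans (absSum_mono hring ω)) _)

lemma abs_steinDeriv_sub_far_le_localOscillation (hm : 0 ≤ m) (hα : 0 < α) (z : ℝ) (i : ι) (ω : Ω)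
    {u : ℝ} (hu : |u - partialSum X Finset.univ ω| ≤ absSum X (near (2 * m) i) ω) :
    |steinDeriv (smoothIndicator α z) u -
        steinDeriv (smoothIndicator α z) (partialSum X (far (2 * m) i) ω)| ≤
      localOscillation X m α z i ω := by
  refine abs_steinDeriv_smoothIndicator_sub_le hα z
    (absSum_mono (near_mono (by linarith) i) ω) hu ?_ (abs_partialSum_far_le_add_localMass hm i ω)
  rw [abs_sub_comm, ← partialSum_near_add_partialSum_far X (2 * m) i, add_sub_cancel_right]
  exact abs_partialSum_le_absSum ω

variable [mΩ : MeasurableSpace Ω] {μ : Measure Ω} {κ b : ℝ} {i : ι} {ξ : Ω → ℝ}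

namespace NormalApproxData

lemma measurable_cappedMass (hX : NormalApproxData μ X m κ b) (i : ι) :
    Measurable (cappedMass X m i) :=
  measurable_const.min (hX.measurable_absSum _)

lemma integrable_mul_cappedMass (hX : NormalApproxData μ X m κ b) (hξi : Integrable ξ μ) :
    Integrable (fun ω => ξ ω * cappedMass X m i ω) μ :=
  integrable_mul_min_one hξi (hX.measurable_absSum _) absSum_nonneg

lemma integrable_mul_min_localMass (hX : NormalApproxData μ X m κ b) (hξi : Integrable ξ μ) :
    Integrable (fun ω => ξ ω * min 1 (localMass X m i ω)) μ :=
  integrable_mul_min_one hξi (hX.measurable_localMass i) (localMass_nonneg i)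

lemma integral_mul_cappedMass_le (hX : NormalApproxData μ X m κ b) (hξ0 : ∀ ω, 0 ≤ ξ ω)
    (hξi : Integrable ξ μ) :
    ∫ ω, ξ ω * cappedMass X m i ω ∂μ ≤ ∫ ω, ξ ω * min 1 (localMass X m i ω) ∂μ :=
  integral_mono (hX.integrable_mul_cappedMass hξi) (hX.integrable_mul_min_localMass hξi)
    fun ω => mul_le_mul_of_nonneg_left (min_le_min_left _ (absSum_mono
      (near_mono (by linarith [hX.range_nonneg]) i) ω)) (hξ0 ω)

lemma integrable_mul_localDrop (hX : NormalApproxData μ X m κ b) (hα : 0 < α) (z : ℝ)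
    (hξi : Integrable ξ μ) : Integrable (fun ω => ξ ω * localDrop X m α z i ω) μ := by
  have hW := hX.measurable_partialSum Finset.univ
  have hB := hX.measurable_cappedMass i
  have hbound : ∀ x, ‖smoothIndicator α z x‖ ≤ 1 := fun x => by
    rw [norm_of_nonneg (smoothIndicator_mem_Icc hα z x).1]
    exact (smoothIndicator_mem_Icc hα z x).2
  have hint : ∀ {V : Ω → ℝ}, Measurable V →
      Integrable (fun ω => ξ ω * smoothIndicator α z (V ω)) μ := fun hV =>
    hξi.mul_bdd ((continuous_smoothIndicator z).measurable.comp hV).aestronglyMeasurable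
      (.of_forall fun _ => hbound _)
  simp only [localDrop, mul_sub]
  exact (hint (hW.sub hB)).sub (hint (hW.add hB))

variable [IsProbabilityMeasure μ]

lemma integrable_abs_far_add_one (hX : NormalApproxData μ X m κ b) (i : ι) :
    Integrable (fun ω => |partialSum X (far (4 * m) i) ω| + 1) μ :=
  ((hX.memLp_partialSum _).integrable one_le_two).abs.add (integrable_const _)

lemma integral_abs_far_add_one_le (hX : NormalApproxData μ X m κ b) (i : ι) :
    ∫ ω, (|partialSum X (far (4 * m) i) ω| + 1) ∂μ ≤ 7 / 3 := by
  rw [integral_add ((hX.memLp_partialSum _).integrable one_le_two).abs (integrable_const _),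
    integral_const, probReal_univ, one_smul]
  linarith [hX.integral_abs_far_le i]

lemma integrable_mul_cappedMass_mul_abs_far (hX : NormalApproxData μ X m κ b)
    (hξ : Measurable[sigmaOf X (near (2 * m) i)] ξ) (hξi : Integrable ξ μ) :
    Integrable (fun ω => ξ ω * cappedMass X m i ω * (|partialSum X (far (4 * m) i) ω| + 1)) μ :=
  (indepFun_of_indep (hX.indep_near_far i) (hξ.mul (measurable_cappedMass_sigmaOf i))
    (measurable_abs_far_add_one_sigmaOf hX.range_nonneg i)).integrable_mul
      (hX.integrable_mul_cappedMass hξi) (hX.integrable_abs_far_add_one i)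

lemma integral_mul_cappedMass_mul_abs_far_le (hX : NormalApproxData μ X m κ b)
    (hξ : Measurable[sigmaOf X (near (2 * m) i)] ξ) (hξ0 : ∀ ω, 0 ≤ ξ ω) (hξi : Integrable ξ μ) :
    ∫ ω, ξ ω * cappedMass X m i ω * (|partialSum X (far (4 * m) i) ω| + 1) ∂μ ≤
      7 / 3 * ∫ ω, ξ ω * min 1 (localMass X m i ω) ∂μ := by
  have hcapped : Measurable[sigmaOf X (near (2 * m) i)] fun ω => ξ ω * cappedMass X m i ω :=
    hξ.mul (measurable_cappedMass_sigmaOf i)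
  rw [integral_mul_of_indep (hX.indep_near_far i) (hX.sigmaOf_le _) (hX.sigmaOf_le _) hcapped
    (measurable_abs_far_add_one_sigmaOf hX.range_nonneg i), mul_comm]
  exact mul_le_mul (hX.integral_abs_far_add_one_le i) (hX.integral_mul_cappedMass_le hξ0 hξi)
    (integral_nonneg fun ω => mul_nonneg (hξ0 ω) (cappedMass_nonneg i ω)) (by norm_num)

lemma integral_mul_localDrop_le (hX : NormalApproxData μ X m κ b) (z : ℝ)
    (hξ : Measurable[sigmaOf X (near (2 * m) i)] ξ) (hξ0 : ∀ ω, 0 ≤ ξ ω) (hξi : Integrable ξ μ) :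
    ∫ ω, ξ ω * localDrop X m (8 * b) z i ω ∂μ ≤
      15 * ∫ ω, ξ ω * min 1 (localMass X m i ω) ∂μ := by
  have hb := hX.bound_pos
  have hB : Measurable[sigmaOf X (near (2 * m) i)] (cappedMass X m i) :=
    measurable_cappedMass_sigmaOf i
  have hwidth : ∀ ω, ξ ω * (cappedMass X m i ω - z - (-cappedMass X m i ω - z)) =
      2 * (ξ ω * cappedMass X m i ω) := fun ω => by ring
  have hramp := hX.isConcentrated.integral_mul_ramp_sub_ramp_le hX.toLocallyDependent
    (by positivity) i hξ (y := fun ω => -cappedMass X m i ω - z)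
    (y' := fun ω => cappedMass X m i ω - z) (hB.neg.sub measurable_const)
    (hB.sub measurable_const) hξ0 (fun ω => by linarith [cappedMass_nonneg (X := X) (m := m) i ω])
    (by simpa only [hwidth] using (hX.integrable_mul_cappedMass hξi).const_mul 2)
  simp only [hwidth, integral_const_mul] at hramp
  have hdrop : ∀ ω, ξ ω * localDrop X m (8 * b) z i ω = 1 / (8 * b) *
      (ξ ω * (ramp (8 * b) (partialSum X Finset.univ ω + (cappedMass X m i ω - z)) -
        ramp (8 * b) (partialSum X Finset.univ ω + (-cappedMass X m i ω - z)))) := fun ω => by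
    rw [localDrop, smoothIndicator_sub_smoothIndicator]
    ring_nf
  simp only [hdrop]
  rw [integral_const_mul]
  calc 1 / (8 * b) * ∫ ω, ξ ω * (ramp (8 * b)
          (partialSum X Finset.univ ω + (cappedMass X m i ω - z)) -
        ramp (8 * b) (partialSum X Finset.univ ω + (-cappedMass X m i ω - z))) ∂μ
      ≤ 1 / (8 * b) * (60 * b * (2 * ∫ ω, ξ ω * cappedMass X m i ω ∂μ)) :=
        mul_le_mul_of_nonneg_left hramp (by positivity)
    _ = 15 * ∫ ω, ξ ω * cappedMass X m i ω ∂μ := by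
        field_simp
        ring
    _ ≤ 15 * ∫ ω, ξ ω * min 1 (localMass X m i ω) ∂μ :=
        mul_le_mul_of_nonneg_left (hX.integral_mul_cappedMass_le hξ0 hξi) (by norm_num)

lemma integrable_mul_localOscillation (hX : NormalApproxData μ X m κ b) (hα : 0 < α) (z : ℝ)
    (hξ : Measurable[sigmaOf X (near (2 * m) i)] ξ) (hξi : Integrable ξ μ) :
    Integrable (fun ω => ξ ω * localOscillation X m α z i ω) μ := by
  simp only [mul_localOscillation]
  exact (((hX.integrable_mul_cappedMass_mul_abs_far hξ hξi).const_mul 4).add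
    ((hX.integrable_mul_min_localMass hξi).const_mul 5)).add
    (hX.integrable_mul_localDrop hα z hξi)

lemma integral_mul_localOscillation_le (hX : NormalApproxData μ X m κ b) (z : ℝ)
    (hξ : Measurable[sigmaOf X (near (2 * m) i)] ξ) (hξ0 : ∀ ω, 0 ≤ ξ ω) (hξi : Integrable ξ μ) :
    ∫ ω, ξ ω * localOscillation X m (8 * b) z i ω ∂μ ≤
      30 * ∫ ω, ξ ω * min 1 (localMass X m i ω) ∂μ := by
  have hfar := (hX.integrable_mul_cappedMass_mul_abs_far hξ hξi).const_mul 4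
  have hmin := (hX.integrable_mul_min_localMass (i := i) hξi).const_mul 5
  have hdrop := hX.integrable_mul_localDrop (i := i) (mul_pos (by norm_num) hX.bound_pos) z hξi
    (α := 8 * b)
  have hmin0 : 0 ≤ ∫ ω, ξ ω * min 1 (localMass X m i ω) ∂μ := integral_nonneg fun ω =>
    mul_nonneg (hξ0 ω) (le_min zero_le_one (localMass_nonneg i ω))
  simp only [mul_localOscillation]
  rw [integral_add (by exact hfar.add hmin) hdrop, integral_add hfar hmin, integral_const_mul,
    integral_const_mul]
  linarith [hX.integral_mul_cappedMass_mul_abs_far_le hξ hξ0 hξi,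
    hX.integral_mul_localDrop_le z hξ hξ0 hξi]

end NormalApproxData

end LocalOscillation

/-! ### Stein's expansion -/

section SteinExpansion

variable {Ω ι : Type*} [mΩ : MeasurableSpace Ω] {μ : Measure Ω}

lemma integral_comp_sub_integral_gaussian [IsProbabilityMeasure μ] {h : ℝ → ℝ}
    (hc : Continuous h) (h01 : ∀ x, h x ∈ Icc 0 1) {V : Ω → ℝ} (hV : Measurable V) :
    ∫ ω, h (V ω) ∂μ - ∫ x, h x ∂γ =
      ∫ ω, steinDeriv h (V ω) ∂μ - ∫ ω, V ω * steinSolution h (V ω) ∂μ := by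
  have hh : Integrable (fun ω => h (V ω)) μ :=
    .of_mem_Icc 0 1 (hc.measurable.comp hV).aemeasurable (.of_forall fun _ => h01 _)
  have hlinear : Integrable (fun ω => V ω * steinSolution h (V ω)) μ :=
    .of_bound (hV.mul ((continuous_steinSolution hc h01).measurable.comp hV)).aestronglyMeasurable
      1 (.of_forall fun _ => abs_mul_steinSolution_le hc h01 _)
  have hcentered : Integrable (fun ω => h (V ω) - ∫ x, h x ∂γ) μ := hh.sub (integrable_const _)
  simp only [steinDeriv]
  rw [integral_add hlinear hcentered, integral_sub hh (integrable_const _),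
    integral_const, probReal_univ, one_smul]
  ring

variable [PseudoMetricSpace ι] {X : ι → Ω → ℝ} {m : ℝ}

namespace LocallyDependent

lemma integrable_mul_comp (hX : LocallyDependent μ X m) [IsFiniteMeasure μ] (i : ι) {G : ℝ → ℝ}
    {C : ℝ} (hG : Measurable G) (hGC : ∀ x, |G x| ≤ C) {V : Ω → ℝ} (hV : Measurable V) :
    Integrable (fun ω => X i ω * G (V ω)) μ :=
  ((hX.memLp_two i).integrable one_le_two).mul_bdd (hG.comp hV).aestronglyMeasurable
    (.of_forall fun _ => hGC _)

lemma integrable_comp_partialSum (hX : LocallyDependent μ X m) [IsFiniteMeasure μ]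
    (S : Finset ι) {G : ℝ → ℝ} {C : ℝ} (hG : Measurable G) (hGC : ∀ x, |G x| ≤ C) :
    Integrable (fun ω => G (partialSum X S ω)) μ :=
  .of_bound (hG.comp (hX.measurable_partialSum S)).aestronglyMeasurable C
    (.of_forall fun _ => hGC _)

variable [Fintype ι]

lemma integrable_mul_localSum (hX : LocallyDependent μ X m) (i : ι) :
    Integrable (fun ω => X i ω * localSum X m i ω) μ :=
  (hX.memLp_two i).integrable_mul (hX.memLp_partialSum _)

lemma integrable_mul_localSum_mul_comp_far (hX : LocallyDependent μ X m) (i : ι) {G : ℝ → ℝ}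
    {C : ℝ} (hG : Measurable G) (hGC : ∀ x, |G x| ≤ C) :
    Integrable
      (fun ω => X i ω * localSum X m i ω * G (partialSum X (far (2 * m) i) ω)) μ :=
  (hX.integrable_mul_localSum i).mul_bdd
    (hG.comp (hX.measurable_partialSum _)).aestronglyMeasurable (.of_forall fun _ => hGC _)

lemma sum_integral_mul_localSum (hX : LocallyDependent μ X m) :
    ∑ i, ∫ ω, X i ω * localSum X m i ω ∂μ = ∫ ω, partialSum X Finset.univ ω ^ 2 ∂μ := by
  have hint : ∀ i, Integrable (fun ω => X i ω * partialSum X Finset.univ ω) μ := fun i =>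
    (hX.memLp_two i).integrable_mul (hX.memLp_partialSum _)
  simp only [← hX.integral_mul_partialSum_univ]
  rw [← integral_finsetSum _ fun i _ => hint i]
  simp only [← Finset.sum_mul, pow_two]
  rfl

lemma integral_mul_localSum_mul_comp_far (hX : LocallyDependent μ X m) (hm : 0 ≤ m) (i : ι)
    {G : ℝ → ℝ} (hG : Measurable G) :
    ∫ ω, X i ω * localSum X m i ω * G (partialSum X (far (2 * m) i) ω) ∂μ =
      (∫ ω, X i ω * localSum X m i ω ∂μ) * ∫ ω, G (partialSum X (far (2 * m) i) ω) ∂μ := by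
  have hindep : Indep (sigmaOf X (near m i)) (sigmaOf X (far (2 * m) i)) μ :=
    hX.indep fun j hj l hl => by
      rw [mem_near] at hj
      rw [mem_far] at hl
      linarith [dist_triangle i j l]
  have hi : i ∈ near m i := mem_near.2 (by rwa [dist_self])
  exact integral_mul_of_indep hindep (hX.sigmaOf_le _) (hX.sigmaOf_le _)
    ((measurable_sigmaOf hi).mul (measurable_partialSum_sigmaOf subset_rfl))
    (hG.comp (measurable_partialSum_sigmaOf subset_rfl))

variable [IsFiniteMeasure μ]

lemma integral_mul_comp_univ (hX : LocallyDependent μ X m) (i : ι) {G : ℝ → ℝ} {C : ℝ}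
    (hG : Measurable G) (hGC : ∀ x, |G x| ≤ C) :
    ∫ ω, X i ω * (G (partialSum X Finset.univ ω) - G (partialSum X (far m i) ω)) ∂μ =
      ∫ ω, X i ω * G (partialSum X Finset.univ ω) ∂μ := by
  have hzero : ∫ ω, X i ω * G (partialSum X (far m i) ω) ∂μ = 0 :=
    hX.integral_mul_eq_zero_of_far i (hG.comp (measurable_partialSum_sigmaOf subset_rfl))
  simp only [mul_sub]
  rw [integral_sub (hX.integrable_mul_comp i hG hGC (hX.measurable_partialSum _))
    (hX.integrable_mul_comp i hG hGC (hX.measurable_partialSum _)), hzero, sub_zero]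

lemma integral_partialSum_mul_comp (hX : LocallyDependent μ X m) {G : ℝ → ℝ} {C : ℝ}
    (hG : Measurable G) (hGC : ∀ x, |G x| ≤ C) :
    ∫ ω, partialSum X Finset.univ ω * G (partialSum X Finset.univ ω) ∂μ =
      ∑ i, ∫ ω, X i ω * (G (partialSum X Finset.univ ω) - G (partialSum X (far m i) ω)) ∂μ := by
  simp only [hX.integral_mul_comp_univ _ hG hGC]
  rw [← integral_finsetSum _ fun i _ =>
    hX.integrable_mul_comp i hG hGC (hX.measurable_partialSum _)]
  simp only [← Finset.sum_mul]
  rfl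

end LocallyDependent

variable [Fintype ι]

/-- The error of replacing `f'` at `W = ∑ X_j` by its value at the sum over the indices far
from `i`, where `f` is the Stein solution for `h`. -/
noncomputable def derivRemainder (h : ℝ → ℝ) (X : ι → Ω → ℝ) (m : ℝ) (i : ι) (ω : Ω) : ℝ :=
  steinDeriv h (partialSum X Finset.univ ω) - steinDeriv h (partialSum X (far (2 * m) i) ω)

/-- The error of the first order expansion of `f` between `W = ∑ X_j` and the sum over the indices
far from `i`, where `f` is the Stein solution for `h`. -/
noncomputable def taylorRemainder (h : ℝ → ℝ) (X : ι → Ω → ℝ) (m : ℝ) (i : ι) (ω : Ω) : ℝ :=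
  localSum X m i ω * steinDeriv h (partialSum X (far (2 * m) i) ω) -
    (steinSolution h (partialSum X Finset.univ ω) - steinSolution h (partialSum X (far m i) ω))

variable [IsProbabilityMeasure μ] {h : ℝ → ℝ}

lemma LocallyDependent.integral_comp_sub_integral_gaussian_eq_sum (hX : LocallyDependent μ X m)
    (hm : 0 ≤ m) (hvar : ∫ ω, partialSum X Finset.univ ω ^ 2 ∂μ = 1) (hc : Continuous h)
    (h01 : ∀ x, h x ∈ Icc 0 1) :
    ∫ ω, h (partialSum X Finset.univ ω) ∂μ - ∫ x, h x ∂γ =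
      ∑ i, ((∫ ω, X i ω * localSum X m i ω ∂μ) * ∫ ω, derivRemainder h X m i ω ∂μ +
        ∫ ω, X i ω * taylorRemainder h X m i ω ∂μ) := by
  have hf : Measurable (steinSolution h) := (continuous_steinSolution hc h01).measurable
  have hf' : Measurable (steinDeriv h) := (continuous_steinDeriv hc h01).measurable
  have hf'C := abs_steinDeriv_le hc h01
  have hfint : ∀ i S, Integrable (fun ω => X i ω * steinSolution h (partialSum X S ω)) μ :=
    fun i S => hX.integrable_mul_comp i hf (abs_steinSolution_le hc h01)
      (hX.measurable_partialSum S)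
  have hderiv : ∀ i, (∫ ω, X i ω * localSum X m i ω ∂μ) * ∫ ω, derivRemainder h X m i ω ∂μ =
      (∫ ω, X i ω * localSum X m i ω ∂μ) * ∫ ω, steinDeriv h (partialSum X Finset.univ ω) ∂μ -
        ∫ ω, X i ω * localSum X m i ω * steinDeriv h (partialSum X (far (2 * m) i) ω) ∂μ := by
    intro i
    simp only [derivRemainder]
    rw [integral_sub (hX.integrable_comp_partialSum _ hf' hf'C)
      (hX.integrable_comp_partialSum _ hf' hf'C), mul_sub,
      hX.integral_mul_localSum_mul_comp_far hm i hf']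
  have htaylor : ∀ i, ∫ ω, X i ω * taylorRemainder h X m i ω ∂μ =
      ∫ ω, X i ω * localSum X m i ω * steinDeriv h (partialSum X (far (2 * m) i) ω) ∂μ -
        ∫ ω, X i ω * (steinSolution h (partialSum X Finset.univ ω) -
          steinSolution h (partialSum X (far m i) ω)) ∂μ := by
    intro i
    simp only [taylorRemainder, mul_sub, ← mul_assoc]
    exact integral_sub (hX.integrable_mul_localSum_mul_comp_far i hf' hf'C)
      ((hfint i _).sub (hfint i _))
  simp only [hderiv, htaylor, sub_add_sub_cancel]
  rw [integral_comp_sub_integral_gaussian hc h01 (hX.measurable_partialSum _),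
    hX.integral_partialSum_mul_comp hf (abs_steinSolution_le hc h01), Finset.sum_sub_distrib,
    ← Finset.sum_mul, hX.sum_integral_mul_localSum, hvar, one_mul]

end SteinExpansion

section NormalApproximation

variable {Ω ι : Type*} [Fintype ι] [PseudoMetricSpace ι] {X : ι → Ω → ℝ} {m κ b α : ℝ}

lemma abs_derivRemainder_le (hm : 0 ≤ m) (hα : 0 < α) (z : ℝ) (i : ι) (ω : Ω) :
    |derivRemainder (smoothIndicator α z) X m i ω| ≤ localOscillation X m α z i ω :=
  abs_steinDeriv_sub_far_le_localOscillation (u := partialSum X Finset.univ ω) hm hα z i ω (by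
    rw [sub_self, abs_zero]
    exact absSum_nonneg ω)

lemma abs_mul_taylorRemainder_le (hm : 0 ≤ m) (hα : 0 < α) (z : ℝ) (i : ι) (ω : Ω) :
    |X i ω * taylorRemainder (smoothIndicator α z) X m i ω| ≤
      |X i ω * localSum X m i ω| * localOscillation X m α z i ω := by
  have hW := partialSum_near_add_partialSum_far X m i ω
  obtain ⟨u, hu, hmvt⟩ := exists_mem_uIcc_sub_eq_mul (hasDerivAt_steinSolution
    (continuous_smoothIndicator z) (smoothIndicator_mem_Icc hα z))
    (partialSum X Finset.univ ω) (partialSum X (far m i) ω)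
  have hu' : |u - partialSum X Finset.univ ω| ≤ absSum X (near (2 * m) i) ω :=
    calc |u - partialSum X Finset.univ ω|
        ≤ |partialSum X (far m i) ω - partialSum X Finset.univ ω| :=
          abs_sub_left_of_mem_uIcc hu
      _ = |localSum X m i ω| := by rw [← hW, ← abs_neg (localSum X m i ω)]; ring_nf
      _ ≤ absSum X (near m i) ω := abs_partialSum_le_absSum ω
      _ ≤ absSum X (near (2 * m) i) ω := absSum_mono (near_mono (by linarith) i) ω
  have hfactor : X i ω * taylorRemainder (smoothIndicator α z) X m i ω =
      -(X i ω * localSum X m i ω) * (steinDeriv (smoothIndicator α z) u -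
        steinDeriv (smoothIndicator α z) (partialSum X (far (2 * m) i) ω)) := by
    rw [taylorRemainder, hmvt, ← hW]
    ring
  rw [hfactor, abs_mul, abs_neg]
  exact mul_le_mul_of_nonneg_left
    (abs_steinDeriv_sub_far_le_localOscillation hm hα z i ω hu') (abs_nonneg _)

lemma abs_integral_le_of_abs_le [MeasurableSpace Ω] {μ : Measure Ω} {f g : Ω → ℝ}
    (hg : Integrable g μ) (h : ∀ ω, |f ω| ≤ g ω) : |∫ ω, f ω ∂μ| ≤ ∫ ω, g ω ∂μ :=
  abs_integral_le_integral_abs.trans (integral_mono_of_nonneg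
    (.of_forall fun _ => abs_nonneg _) hg (.of_forall h))

variable [mΩ : MeasurableSpace Ω] {μ : Measure Ω}

namespace NormalApproxData

lemma abs_mul_localSum_le (hX : NormalApproxData μ X m κ b) (i : ι) (ω : Ω) :
    |X i ω * localSum X m i ω| ≤ |X i ω| * localMass X m i ω := by
  rw [abs_mul]
  exact mul_le_mul_of_nonneg_left (hX.abs_localSum_le_localMass i ω) (abs_nonneg _)

lemma abs_integral_mul_localSum_le (hX : NormalApproxData μ X m κ b) (i : ι) :
    |∫ ω, X i ω * localSum X m i ω ∂μ| ≤ ∫ ω, |X i ω| * localMass X m i ω ∂μ :=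
  abs_integral_le_of_abs_le ((hX.memLp_two i).abs.integrable_mul (hX.memLp_localMass i))
    fun ω => hX.abs_mul_localSum_le i ω

variable [IsProbabilityMeasure μ]

lemma abs_integral_derivRemainder_le (hX : NormalApproxData μ X m κ b) (z : ℝ) (i : ι) :
    |∫ ω, derivRemainder (smoothIndicator (8 * b) z) X m i ω ∂μ| ≤
      30 * ∫ ω, min 1 (localMass X m i ω) ∂μ := by
  have hα : 0 < 8 * b := mul_pos (by norm_num) hX.bound_pos
  have hint := hX.integrable_mul_localOscillation (i := i) (ξ := fun _ => 1) hα z measurable_const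
    (integrable_const _)
  have hle := hX.integral_mul_localOscillation_le (i := i) (ξ := fun _ => 1) z measurable_const
    (fun _ => zero_le_one) (integrable_const _)
  simp only [one_mul] at hint hle
  exact (abs_integral_le_of_abs_le hint
    fun ω => abs_derivRemainder_le hX.range_nonneg hα z i ω).trans hle

lemma abs_integral_mul_taylorRemainder_le (hX : NormalApproxData μ X m κ b) (z : ℝ) (i : ι) :
    |∫ ω, X i ω * taylorRemainder (smoothIndicator (8 * b) z) X m i ω ∂μ| ≤
      30 * ∫ ω, |X i ω| * localMass X m i ω * min 1 (localMass X m i ω) ∂μ := by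
  have hα : 0 < 8 * b := mul_pos (by norm_num) hX.bound_pos
  have hm := hX.range_nonneg
  have hi : i ∈ near (2 * m) i := mem_near.2 (by rw [dist_self]; positivity)
  have hξ : Measurable[sigmaOf X (near (2 * m) i)] fun ω => |X i ω * localSum X m i ω| :=
    continuous_abs.measurable.comp ((measurable_sigmaOf hi).mul
      (measurable_partialSum_sigmaOf (near_mono (by linarith) i)))
  have hξi : Integrable (fun ω => |X i ω * localSum X m i ω|) μ :=
    (hX.integrable_mul_localSum i).abs
  calc |∫ ω, X i ω * taylorRemainder (smoothIndicator (8 * b) z) X m i ω ∂μ|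
      ≤ ∫ ω, |X i ω * localSum X m i ω| * localOscillation X m (8 * b) z i ω ∂μ :=
        abs_integral_le_of_abs_le (hX.integrable_mul_localOscillation hα z hξ hξi)
          fun ω => abs_mul_taylorRemainder_le hm hα z i ω
    _ ≤ 30 * ∫ ω, |X i ω * localSum X m i ω| * min 1 (localMass X m i ω) ∂μ :=
        hX.integral_mul_localOscillation_le z hξ (fun _ => abs_nonneg _) hξi
    _ ≤ 30 * ∫ ω, |X i ω| * localMass X m i ω * min 1 (localMass X m i ω) ∂μ := by
        refine mul_le_mul_of_nonneg_left (integral_mono (hX.integrable_mul_min_localMass hξi)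
          (hX.integrable_abs_mul_localMass_mul_min i) fun ω => ?_) (by norm_num)
        exact mul_le_mul_of_nonneg_right (hX.abs_mul_localSum_le i ω)
          (le_min zero_le_one (localMass_nonneg i ω))

lemma abs_integral_smoothIndicator_sub_le (hX : NormalApproxData μ X m κ b) (z : ℝ) :
    |∫ ω, smoothIndicator (8 * b) z (partialSum X Finset.univ ω) ∂μ -
      ∫ x, smoothIndicator (8 * b) z x ∂γ| ≤ 60 * b := by
  rw [hX.integral_comp_sub_integral_gaussian_eq_sum hX.range_nonneg hX.integral_sq_eq_one
    (continuous_smoothIndicator z)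
    (smoothIndicator_mem_Icc (mul_pos (by norm_num) hX.bound_pos) z)]
  have hterm : ∀ i, |(∫ ω, X i ω * localSum X m i ω ∂μ) *
        ∫ ω, derivRemainder (smoothIndicator (8 * b) z) X m i ω ∂μ +
        ∫ ω, X i ω * taylorRemainder (smoothIndicator (8 * b) z) X m i ω ∂μ| ≤
      30 * ((∫ ω, |X i ω| * localMass X m i ω ∂μ) * ∫ ω, min 1 (localMass X m i ω) ∂μ) +
        30 * ∫ ω, |X i ω| * localMass X m i ω * min 1 (localMass X m i ω) ∂μ := fun i => by
    refine (abs_add_le _ _).trans (add_le_add ?_ (hX.abs_integral_mul_taylorRemainder_le z i))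
    rw [abs_mul, mul_left_comm]
    exact mul_le_mul (hX.abs_integral_mul_localSum_le i) (hX.abs_integral_derivRemainder_le z i)
      (abs_nonneg _) ((abs_nonneg _).trans (hX.abs_integral_mul_localSum_le i))
  refine (Finset.abs_sum_le_sum_abs _ _).trans ((Finset.sum_le_sum fun i _ => hterm i).trans ?_)
  rw [Finset.sum_add_distrib, ← Finset.mul_sum, ← Finset.mul_sum]
  linarith [hX.sum_integral_le, hX.sum_integral_mul_integral_le]

lemma abs_measureReal_sub_stdGaussianCDF_le (hX : NormalApproxData μ X m κ b) (z : ℝ) :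
    |μ.real {ω | partialSum X Finset.univ ω ≤ z} - stdGaussianCDF z| ≤ 64 * b := by
  have hW := hX.measurable_partialSum Finset.univ
  have hlaw : IsProbabilityMeasure (μ.map (partialSum X Finset.univ)) :=
    Measure.isProbabilityMeasure_map hW.aemeasurable
  have hsmooth : ∀ z, |∫ w, smoothIndicator (8 * b) z w ∂μ.map (partialSum X Finset.univ) -
      ∫ w, smoothIndicator (8 * b) z w ∂γ| ≤ 60 * b := fun z => by
    rw [integral_map hW.aemeasurable (continuous_smoothIndicator z).aestronglyMeasurable]
    exact hX.abs_integral_smoothIndicator_sub_le z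
  have hcdf := abs_measureReal_Iic_sub_gaussian_le (μ.map (partialSum X Finset.univ))
    (mul_pos (by norm_num) hX.bound_pos) hsmooth z
  rw [map_measureReal_apply hW measurableSet_Iic, ← stdGaussianCDF_eq_gaussianReal_real_Iic] at hcdf
  calc |μ.real {ω | partialSum X Finset.univ ω ≤ z} - stdGaussianCDF z|
      ≤ 60 * b + 8 * b / 2 := hcdf
    _ = 64 * b := by ring

end NormalApproxData

end NormalApproximation

/-! ### Moment bounds -/

section MomentInequalities

variable {p : ℝ}

lemma min_one_le_rpow {w q : ℝ} (hw : 0 ≤ w) (hq0 : 0 ≤ q) (hq1 : q ≤ 1) : min 1 w ≤ w ^ q := by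
  rcases le_total 1 w with h | h
  · exact (min_le_left _ _).trans (one_le_rpow h hq0)
  · refine (min_le_right _ _).trans ?_
    simpa using rpow_le_rpow_of_exponent_ge' hw h hq0 hq1

lemma mul_mul_min_one_le (hp : 2 ≤ p) (hp3 : p ≤ 3) {u v w : ℝ} (hu : 0 ≤ u) (hv : 0 ≤ v)
    (hw : 0 ≤ w) : u * v * min 1 w ≤ (u ^ p + v ^ p + (p - 2) * w ^ p) / p := by
  have hp0 : 0 < p := by linarith
  have hyoung := geom_mean_le_arith_mean3_weighted (w₁ := 1 / p) (w₂ := 1 / p)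
    (w₃ := (p - 2) / p) (by positivity) (by positivity) (div_nonneg (by linarith) hp0.le)
    (rpow_nonneg hu p) (rpow_nonneg hv p) (rpow_nonneg hw p) (by field_simp; ring)
  rw [← rpow_mul hu, ← rpow_mul hv, ← rpow_mul hw, mul_one_div_cancel hp0.ne',
    mul_div_cancel₀ _ hp0.ne', rpow_one, rpow_one] at hyoung
  calc u * v * min 1 w ≤ u * v * w ^ (p - 2) :=
        mul_le_mul_of_nonneg_left (min_one_le_rpow hw (by linarith) (by linarith))
          (mul_nonneg hu hv)
    _ ≤ 1 / p * u ^ p + 1 / p * v ^ p + (p - 2) / p * w ^ p := hyoung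
    _ = (u ^ p + v ^ p + (p - 2) * w ^ p) / p := by ring

lemma sq_le_sq_add_inv_mul_rpow (hp : 2 ≤ p) (hp3 : p ≤ 3) {ε z : ℝ} (hε : 0 < ε) (hε1 : ε ≤ 1)
    (hz : 0 ≤ z) : z ^ 2 ≤ ε ^ 2 + ε⁻¹ * z ^ p := by
  rcases le_total z ε with h | h
  · have := rpow_nonneg hz p
    exact (pow_le_pow_left₀ hz h 2).trans (le_add_of_nonneg_right (by positivity))
  · have hz0 : 0 < z := hε.trans_le h
    have hsplit : z ^ p = z ^ 2 * z ^ (p - 2) := by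
      rw [← rpow_natCast z 2, ← rpow_add hz0, Nat.cast_two, add_sub_cancel]
    have hpow : ε ≤ z ^ (p - 2) :=
      calc ε = min 1 ε := (min_eq_right hε1).symm
        _ ≤ min 1 z := min_le_min_left 1 h
        _ ≤ z ^ (p - 2) := min_one_le_rpow hz (by linarith) (by linarith)
    calc z ^ 2 = ε⁻¹ * (z ^ 2 * ε) := by field_simp
      _ ≤ ε⁻¹ * z ^ p := by
          rw [hsplit]
          gcongr
      _ ≤ ε ^ 2 + ε⁻¹ * z ^ p := le_add_of_nonneg_left (sq_nonneg ε)

lemma sum_div_le {ι : Type*} [Fintype ι] (hp : 2 ≤ p) {u v w : ι → ℝ} {B : ℝ}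
    (hu : ∑ i, u i ≤ B) (hv : ∑ i, v i ≤ B) (hw : ∑ i, w i ≤ B) :
    ∑ i, (u i + v i + (p - 2) * w i) / p ≤ B := by
  rw [← Finset.sum_div, Finset.sum_add_distrib, Finset.sum_add_distrib, ← Finset.mul_sum,
    div_le_iff₀ (by linarith)]
  nlinarith

variable {Ω : Type*} [MeasurableSpace Ω] {μ : Measure Ω} {U V Z : Ω → ℝ}

lemma integral_mul_mul_min_one_le (hp : 2 ≤ p) (hp3 : p ≤ 3) (hU0 : ∀ ω, 0 ≤ U ω)
    (hV0 : ∀ ω, 0 ≤ V ω) (hZ0 : ∀ ω, 0 ≤ Z ω) (hU : Integrable (fun ω => U ω ^ p) μ)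
    (hV : Integrable (fun ω => V ω ^ p) μ) (hZ : Integrable (fun ω => Z ω ^ p) μ) :
    ∫ ω, U ω * V ω * min 1 (Z ω) ∂μ ≤
      (∫ ω, U ω ^ p ∂μ + ∫ ω, V ω ^ p ∂μ + (p - 2) * ∫ ω, Z ω ^ p ∂μ) / p :=
  calc ∫ ω, U ω * V ω * min 1 (Z ω) ∂μ
      ≤ ∫ ω, (U ω ^ p + V ω ^ p + (p - 2) * Z ω ^ p) / p ∂μ :=
        integral_mono_of_nonneg
          (.of_forall fun ω => mul_nonneg (mul_nonneg (hU0 ω) (hV0 ω))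
            (le_min zero_le_one (hZ0 ω)))
          (((hU.add hV).add (hZ.const_mul _)).div_const p)
          (.of_forall fun ω => mul_mul_min_one_le hp hp3 (hU0 ω) (hV0 ω) (hZ0 ω))
    _ = (∫ ω, U ω ^ p ∂μ + ∫ ω, V ω ^ p ∂μ + (p - 2) * ∫ ω, Z ω ^ p ∂μ) / p := by
        have hUV : Integrable (fun ω => U ω ^ p + V ω ^ p) μ := hU.add hV
        rw [integral_div, integral_add hUV (hZ.const_mul _), integral_add hU hV,
          integral_const_mul]

-- The product on the left is an integral over `μ.prod μ`, with `Z` read off an independent copy.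
lemma integral_mul_mul_integral_min_one_le [IsProbabilityMeasure μ] (hp : 2 ≤ p) (hp3 : p ≤ 3)
    (hU0 : ∀ ω, 0 ≤ U ω) (hV0 : ∀ ω, 0 ≤ V ω) (hZ0 : ∀ ω, 0 ≤ Z ω)
    (hU : Integrable (fun ω => U ω ^ p) μ) (hV : Integrable (fun ω => V ω ^ p) μ)
    (hZ : Integrable (fun ω => Z ω ^ p) μ) :
    (∫ ω, U ω * V ω ∂μ) * ∫ ω, min 1 (Z ω) ∂μ ≤
      (∫ ω, U ω ^ p ∂μ + ∫ ω, V ω ^ p ∂μ + (p - 2) * ∫ ω, Z ω ^ p ∂μ) / p := by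
  have hprod := integral_mul_mul_min_one_le (μ := μ.prod μ) hp hp3 (fun ω => hU0 ω.1)
    (fun ω => hV0 ω.1) (fun ω => hZ0 ω.2) (hU.comp_fst μ) (hV.comp_fst μ) (hZ.comp_snd μ)
  rwa [integral_prod_mul (fun ω => U ω * V ω) fun ω => min 1 (Z ω),
    integral_fun_fst fun ω => U ω ^ p, integral_fun_fst fun ω => V ω ^ p,
    integral_fun_snd fun ω => Z ω ^ p, probReal_univ, one_smul, one_smul, one_smul] at hprod

lemma integrable_const_mul_abs_rpow {κ : ℝ} (hκ : 0 ≤ κ)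
    (hU : Integrable (fun ω => |U ω| ^ p) μ) : Integrable (fun ω => (κ * |U ω|) ^ p) μ := by
  simp only [mul_rpow hκ (abs_nonneg _)]
  exact hU.const_mul _

lemma sum_integral_const_mul_abs_rpow {ι : Type*} (S : Finset ι) (X : ι → Ω → ℝ) {κ : ℝ}
    (hκ : 0 ≤ κ) :
    ∑ i ∈ S, ∫ ω, (κ * |X i ω|) ^ p ∂μ = κ ^ p * ∑ i ∈ S, ∫ ω, |X i ω| ^ p ∂μ := by
  simp only [mul_rpow hκ (abs_nonneg _), integral_const_mul, Finset.mul_sum]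

lemma memLp_two_of_integrable_rpow [IsFiniteMeasure μ] (hp : 2 ≤ p) (hp3 : p ≤ 3)
    (hU : Measurable U) (hUp : Integrable (fun ω => |U ω| ^ p) μ) : MemLp U 2 μ := by
  refine (memLp_two_iff_integrable_sq hU.aestronglyMeasurable).2 <|
    ((integrable_const (1 ^ 2)).add (hUp.const_mul 1⁻¹)).mono' (hU.pow_const 2).aestronglyMeasurable
      (.of_forall fun ω => ?_)
  rw [norm_of_nonneg (sq_nonneg _), ← sq_abs]
  exact sq_le_sq_add_inv_mul_rpow hp hp3 one_pos le_rfl (abs_nonneg _)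

end MomentInequalities

section LocalMassMoments

variable {Ω ι : Type*} [Fintype ι] [PseudoMetricSpace ι] {X : ι → Ω → ℝ} {m κ b p : ℝ}

lemma localMass_rpow_le (hp : 1 ≤ p) {i : ι} (hκ : ((near (4 * m) i).card : ℝ) ≤ κ) (ω : Ω) :
    localMass X m i ω ^ p ≤ κ ^ (p - 1) * ∑ k ∈ near (4 * m) i, |X k ω| ^ p :=
  (rpow_sum_le_const_mul_sum_rpow _ (fun k => X k ω) hp).trans <|
    mul_le_mul_of_nonneg_right (rpow_le_rpow (Nat.cast_nonneg _) hκ (by linarith))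
      (Finset.sum_nonneg fun _ _ => rpow_nonneg (abs_nonneg _) _)

variable [MeasurableSpace Ω] {μ : Measure Ω}

namespace LocallyDependent

lemma integrable_localMass_rpow (hX : LocallyDependent μ X m) (hp : 1 ≤ p)
    (hXp : ∀ i, Integrable (fun ω => |X i ω| ^ p) μ) (i : ι) :
    Integrable (fun ω => localMass X m i ω ^ p) μ :=
  ((integrable_finsetSum _ fun k _ => hXp k).const_mul _).mono'
    ((hX.measurable_absSum _).pow_const p).aestronglyMeasurable
    (.of_forall fun ω => by
      rw [norm_of_nonneg (rpow_nonneg (localMass_nonneg i ω) p)]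
      exact localMass_rpow_le hp le_rfl ω)

lemma integral_localMass_rpow_le (hX : LocallyDependent μ X m) (hp : 1 ≤ p)
    (hXp : ∀ i, Integrable (fun ω => |X i ω| ^ p) μ) {i : ι}
    (hκ : ((near (4 * m) i).card : ℝ) ≤ κ) :
    ∫ ω, localMass X m i ω ^ p ∂μ ≤
      κ ^ (p - 1) * ∑ k ∈ near (4 * m) i, ∫ ω, |X k ω| ^ p ∂μ := by
  rw [← integral_finsetSum _ fun k _ => hXp k, ← integral_const_mul]
  exact integral_mono (hX.integrable_localMass_rpow hp hXp i)
    ((integrable_finsetSum _ fun k _ => hXp k).const_mul _) (localMass_rpow_le hp hκ)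

lemma sum_integral_localMass_rpow_le (hX : LocallyDependent μ X m) (hp : 1 ≤ p)
    (hXp : ∀ i, Integrable (fun ω => |X i ω| ^ p) μ) (hκ0 : 0 < κ)
    (hκ : ∀ i : ι, ((near (4 * m) i).card : ℝ) ≤ κ) :
    ∑ i, ∫ ω, localMass X m i ω ^ p ∂μ ≤ κ ^ p * ∑ i, ∫ ω, |X i ω| ^ p ∂μ := by
  calc ∑ i, ∫ ω, localMass X m i ω ^ p ∂μ
      ≤ κ ^ (p - 1) * ∑ i, ∑ k ∈ near (4 * m) i, ∫ ω, |X k ω| ^ p ∂μ := by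
        rw [Finset.mul_sum]
        exact Finset.sum_le_sum fun i _ => hX.integral_localMass_rpow_le hp hXp (hκ i)
    _ = κ ^ (p - 1) * ∑ i, (near (4 * m) i).card * ∫ ω, |X i ω| ^ p ∂μ := by
        rw [sum_sum_near_comm _ fun _ k => ∫ ω, |X k ω| ^ p ∂μ]
        simp only [Finset.sum_const, nsmul_eq_mul]
    _ ≤ κ ^ (p - 1) * ∑ i, κ * ∫ ω, |X i ω| ^ p ∂μ := by
        gcongr with i
        exact hκ i
    _ = κ ^ p * ∑ i, ∫ ω, |X i ω| ^ p ∂μ := by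
        rw [← Finset.mul_sum, ← mul_assoc, ← rpow_add_one hκ0.ne', sub_add_cancel]

lemma sum_integral_abs_mul_localMass_mul_min_le (hX : LocallyDependent μ X m) (hp : 2 ≤ p)
    (hp3 : p ≤ 3) (hXp : ∀ i, Integrable (fun ω => |X i ω| ^ p) μ) (hκ0 : 0 < κ)
    (hκ : ∀ i : ι, ((near (4 * m) i).card : ℝ) ≤ κ) :
    ∑ i, ∫ ω, |X i ω| * localMass X m i ω * min 1 (localMass X m i ω) ∂μ ≤
      κ ^ (p - 1) * ∑ i, ∫ ω, |X i ω| ^ p ∂μ := by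
  have hX_le := (sum_integral_const_mul_abs_rpow (μ := μ) (p := p) Finset.univ X hκ0.le).le
  have hM_le := hX.sum_integral_localMass_rpow_le (by linarith) hXp hκ0 hκ
  have hM := hX.integrable_localMass_rpow (by linarith) hXp
  refine le_of_mul_le_mul_left ?_ hκ0
  calc κ * ∑ i, ∫ ω, |X i ω| * localMass X m i ω * min 1 (localMass X m i ω) ∂μ
      = ∑ i, ∫ ω, κ * |X i ω| * localMass X m i ω * min 1 (localMass X m i ω) ∂μ := by
        simp only [Finset.mul_sum, ← integral_const_mul, mul_assoc]
    _ ≤ ∑ i, (∫ ω, (κ * |X i ω|) ^ p ∂μ + ∫ ω, localMass X m i ω ^ p ∂μ +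
          (p - 2) * ∫ ω, localMass X m i ω ^ p ∂μ) / p :=
        Finset.sum_le_sum fun i _ => integral_mul_mul_min_one_le hp hp3
          (fun ω => mul_nonneg hκ0.le (abs_nonneg _)) (localMass_nonneg i) (localMass_nonneg i)
          (integrable_const_mul_abs_rpow hκ0.le (hXp i)) (hM i) (hM i)
    _ ≤ κ ^ p * ∑ i, ∫ ω, |X i ω| ^ p ∂μ := sum_div_le hp hX_le hM_le hM_le
    _ = κ * (κ ^ (p - 1) * ∑ i, ∫ ω, |X i ω| ^ p ∂μ) := by
        rw [rpow_sub_one hκ0.ne']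
        field_simp

lemma card_mul_sum_integral_sq_mul_min_le (hX : LocallyDependent μ X m) (hp : 2 ≤ p)
    (hp3 : p ≤ 3) (hXp : ∀ i, Integrable (fun ω => |X i ω| ^ p) μ) (hκ0 : 0 < κ)
    (hκ : ∀ i : ι, ((near (4 * m) i).card : ℝ) ≤ κ) :
    κ * ∑ i, ∫ ω, X i ω ^ 2 * min 1 (localMass X m i ω) ∂μ ≤
      κ ^ (p - 1) * ∑ i, ∫ ω, |X i ω| ^ p ∂μ := by
  have hX_le := (sum_integral_const_mul_abs_rpow (μ := μ) (p := p) Finset.univ X hκ0.le).le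
  have hM_le := hX.sum_integral_localMass_rpow_le (by linarith) hXp hκ0 hκ
  have hXi := fun i => integrable_const_mul_abs_rpow hκ0.le (hXp i)
  have hX0 : ∀ i ω, 0 ≤ κ * |X i ω| := fun i ω => mul_nonneg hκ0.le (abs_nonneg _)
  refine le_of_mul_le_mul_left ?_ hκ0
  calc κ * (κ * ∑ i, ∫ ω, X i ω ^ 2 * min 1 (localMass X m i ω) ∂μ)
      = ∑ i, ∫ ω, κ * |X i ω| * (κ * |X i ω|) * min 1 (localMass X m i ω) ∂μ := by
        simp only [Finset.mul_sum, ← integral_const_mul, ← sq_abs (X _ _)]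
        refine Finset.sum_congr rfl fun i _ => integral_congr_ae (.of_forall fun ω => ?_)
        ring
    _ ≤ ∑ i, (∫ ω, (κ * |X i ω|) ^ p ∂μ + ∫ ω, (κ * |X i ω|) ^ p ∂μ +
          (p - 2) * ∫ ω, localMass X m i ω ^ p ∂μ) / p :=
        Finset.sum_le_sum fun i _ => integral_mul_mul_min_one_le hp hp3 (hX0 i) (hX0 i)
          (localMass_nonneg i) (hXi i) (hXi i) (hX.integrable_localMass_rpow (by linarith) hXp i)
    _ ≤ κ ^ p * ∑ i, ∫ ω, |X i ω| ^ p ∂μ := sum_div_le hp hX_le hX_le hM_le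
    _ = κ * (κ ^ (p - 1) * ∑ i, ∫ ω, |X i ω| ^ p ∂μ) := by
        rw [rpow_sub_one hκ0.ne']
        field_simp

variable [IsProbabilityMeasure μ]

lemma sum_integral_abs_mul_localMass_mul_integral_min_le (hX : LocallyDependent μ X m)
    (hp : 2 ≤ p) (hp3 : p ≤ 3) (hXp : ∀ i, Integrable (fun ω => |X i ω| ^ p) μ) (hκ0 : 0 < κ)
    (hκ : ∀ i : ι, ((near (4 * m) i).card : ℝ) ≤ κ) :
    ∑ i, (∫ ω, |X i ω| * localMass X m i ω ∂μ) * ∫ ω, min 1 (localMass X m i ω) ∂μ ≤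
      κ ^ (p - 1) * ∑ i, ∫ ω, |X i ω| ^ p ∂μ := by
  have hX_le := (sum_integral_const_mul_abs_rpow (μ := μ) (p := p) Finset.univ X hκ0.le).le
  have hM_le := hX.sum_integral_localMass_rpow_le (by linarith) hXp hκ0 hκ
  have hM := hX.integrable_localMass_rpow (by linarith) hXp
  refine le_of_mul_le_mul_left ?_ hκ0
  calc κ * ∑ i, (∫ ω, |X i ω| * localMass X m i ω ∂μ) * ∫ ω, min 1 (localMass X m i ω) ∂μ
      = ∑ i, (∫ ω, κ * |X i ω| * localMass X m i ω ∂μ) *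
          ∫ ω, min 1 (localMass X m i ω) ∂μ := by
        simp only [Finset.mul_sum, ← integral_const_mul, ← mul_assoc]
    _ ≤ ∑ i, (∫ ω, (κ * |X i ω|) ^ p ∂μ + ∫ ω, localMass X m i ω ^ p ∂μ +
          (p - 2) * ∫ ω, localMass X m i ω ^ p ∂μ) / p :=
        Finset.sum_le_sum fun i _ => integral_mul_mul_integral_min_one_le hp hp3
          (fun ω => mul_nonneg hκ0.le (abs_nonneg _)) (localMass_nonneg i) (localMass_nonneg i)
          (integrable_const_mul_abs_rpow hκ0.le (hXp i)) (hM i) (hM i)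
    _ ≤ κ ^ p * ∑ i, ∫ ω, |X i ω| ^ p ∂μ := sum_div_le hp hX_le hM_le hM_le
    _ = κ * (κ ^ (p - 1) * ∑ i, ∫ ω, |X i ω| ^ p ∂μ) := by
        rw [rpow_sub_one hκ0.ne']
        field_simp

lemma integral_localMass_sq_le (hX : LocallyDependent μ X m) (hp : 2 ≤ p) (hp3 : p ≤ 3)
    (hXp : ∀ i, Integrable (fun ω => |X i ω| ^ p) μ) (hκ0 : 0 ≤ κ)
    (hκ : ∀ i : ι, ((near (4 * m) i).card : ℝ) ≤ κ) (i : ι) :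
    ∫ ω, localMass X m i ω ^ 2 ∂μ ≤
      1 / 25 + 5 * (κ ^ (p - 1) * ∑ k, ∫ ω, |X k ω| ^ p ∂μ) := by
  have hM := hX.integrable_localMass_rpow (by linarith) hXp i
  calc ∫ ω, localMass X m i ω ^ 2 ∂μ
      ≤ ∫ ω, ((1 / 5) ^ 2 + (1 / 5)⁻¹ * localMass X m i ω ^ p) ∂μ :=
        integral_mono (hX.memLp_absSum _).integrable_sq
          ((integrable_const _).add (hM.const_mul _))
          fun ω => sq_le_sq_add_inv_mul_rpow hp hp3 (by norm_num) (by norm_num)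
            (localMass_nonneg i ω)
    _ = 1 / 25 + 5 * ∫ ω, localMass X m i ω ^ p ∂μ := by
        rw [integral_add (integrable_const _) (hM.const_mul _), integral_const_mul,
          integral_const, probReal_univ]
        norm_num
    _ ≤ 1 / 25 + 5 * (κ ^ (p - 1) * ∑ k ∈ near (4 * m) i, ∫ ω, |X k ω| ^ p ∂μ) := by
        gcongr
        exact hX.integral_localMass_rpow_le (by linarith) hXp (hκ i)
    _ ≤ 1 / 25 + 5 * (κ ^ (p - 1) * ∑ k, ∫ ω, |X k ω| ^ p ∂μ) := by
        gcongr
        exact Finset.subset_univ _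

lemma normalApproxData (hX : LocallyDependent μ X m) (hp : 2 ≤ p) (hp3 : p ≤ 3)
    (hXp : ∀ i, Integrable (fun ω => |X i ω| ^ p) μ) (hm : 0 ≤ m) (hκ0 : 0 < κ)
    (hκ : ∀ i : ι, ((near (4 * m) i).card : ℝ) ≤ κ)
    (hvar : ∫ ω, partialSum X Finset.univ ω ^ 2 ∂μ = 1) (hb0 : 0 < b) (hb : b ≤ 1 / 75)
    (hle : κ ^ (p - 1) * ∑ i, ∫ ω, |X i ω| ^ p ∂μ ≤ b) : NormalApproxData μ X m κ b where
  toLocallyDependent := hX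
  range_nonneg := hm
  card_near_le := hκ
  integral_sq_eq_one := hvar
  bound_pos := hb0
  bound_le := hb
  sum_integral_le :=
    (hX.sum_integral_abs_mul_localMass_mul_min_le hp hp3 hXp hκ0 hκ).trans hle
  sum_integral_mul_integral_le :=
    (hX.sum_integral_abs_mul_localMass_mul_integral_min_le hp hp3 hXp hκ0 hκ).trans hle
  card_mul_sum_integral_sq_le :=
    (hX.card_mul_sum_integral_sq_mul_min_le hp hp3 hXp hκ0 hκ).trans hle
  integral_localMass_sq_le i := by
    linarith [hX.integral_localMass_sq_le hp hp3 hXp hκ0.le hκ i]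

end LocallyDependent

end LocalMassMoments

/-! ### The Berry–Esseen bound -/

section Restriction

variable {ι : Type*} [PseudoMetricSpace ι] {J : Finset ι}

lemma card_near_subtype_le (i : J) (r : ℝ) :
    (near r i).card ≤ {j ∈ J | dist i.1 j ≤ r}.card :=
  Finset.card_le_card_of_injOn Subtype.val
    (fun j hj => Finset.mem_filter.2 ⟨j.2, (mem_near (i := i)).1 hj⟩)
    Subtype.val_injective.injOn

lemma locallyDependent_subtype {Ω : Type*} [MeasurableSpace Ω] {μ : Measure Ω}
    {X : ι → Ω → ℝ} {m : ℝ}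
    (hXmeas : ∀ i ∈ J, Measurable (X i)) (hXmean : ∀ i ∈ J, ∫ ω, X i ω ∂μ = 0)
    (hX2 : ∀ i ∈ J, MemLp (X i) 2 μ)
    (hdep : ∀ A B : Finset ι, A ⊆ J → B ⊆ J → (∀ i ∈ A, ∀ j ∈ B, m < dist i j) →
      IndepFun (fun ω (a : A) => X a ω) (fun ω (b : B) => X b ω) μ) :
    LocallyDependent μ (fun i : J => X i) m where
  measurable i := hXmeas i i.2
  memLp_two i := hX2 i i.2
  integral_eq_zero i := hXmean i i.2
  indepFun S T hST := by
    let valEmb : J ↪ ι := Function.Embedding.subtype _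
    have hsub : ∀ S : Finset J, S.map valEmb ⊆ J := fun S x hx => by
      obtain ⟨y, -, rfl⟩ := Finset.mem_map.1 hx
      exact y.2
    have hsep : ∀ i ∈ S.map valEmb, ∀ j ∈ T.map valEmb, m < dist i j := fun i hi j hj => by
      obtain ⟨i, hiS, rfl⟩ := Finset.mem_map.1 hi
      obtain ⟨j, hjT, rfl⟩ := Finset.mem_map.1 hj
      exact hST i hiS j hjT
    have hpull : ∀ S : Finset J, Measurable fun (g : S.map valEmb → ℝ) (a : S) =>
        g ⟨a, Finset.mem_map_of_mem valEmb a.2⟩ := fun S =>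
      measurable_pi_lambda _ fun a => measurable_pi_apply _
    exact (hdep _ _ (hsub S) (hsub T) hsep).comp (hpull S) (hpull T)

end Restriction

section BerryEsseen

variable {Ω ι : Type*} [MeasurableSpace Ω] {μ : Measure Ω} [IsProbabilityMeasure μ]
  [PseudoMetricSpace ι] {m κ p : ℝ}

lemma abs_measureReal_sub_stdGaussianCDF_le_one (s : Set Ω) (z : ℝ) :
    |μ.real s - stdGaussianCDF z| ≤ 1 := by
  rw [stdGaussianCDF_eq_gaussianReal_real_Iic]
  exact abs_sub_le_of_nonneg_of_le measureReal_nonneg measureReal_le_one measureReal_nonneg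
    measureReal_le_one

lemma LocallyDependent.abs_measureReal_sub_stdGaussianCDF_le [Fintype ι] {X : ι → Ω → ℝ}
    (hX : LocallyDependent μ X m) (hm : 0 ≤ m) (hp : 2 ≤ p) (hp3 : p ≤ 3)
    (hXp : ∀ i, Integrable (fun ω => |X i ω| ^ p) μ) (hκ0 : 0 < κ)
    (hκ : ∀ i : ι, ((near (4 * m) i).card : ℝ) ≤ κ)
    (hvar : ∫ ω, partialSum X Finset.univ ω ^ 2 ∂μ = 1) (z : ℝ) :
    |μ.real {ω | partialSum X Finset.univ ω ≤ z} - stdGaussianCDF z| ≤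
      75 * (κ ^ (p - 1) * ∑ i, ∫ ω, |X i ω| ^ p ∂μ) := by
  have hmoment : 0 ≤ κ ^ (p - 1) * ∑ i, ∫ ω, |X i ω| ^ p ∂μ := by positivity
  by_contra! hlt
  set D := |μ.real {ω | partialSum X Finset.univ ω ≤ z} - stdGaussianCDF z|
  have hD : D ≤ 1 := abs_measureReal_sub_stdGaussianCDF_le_one _ z
  have hdata := hX.normalApproxData (b := D / 75) hp hp3 hXp hm hκ0 hκ hvar (by linarith)
    (by linarith) (by linarith)
  have := hdata.abs_measureReal_sub_stdGaussianCDF_le z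
  linarith

end BerryEsseen

section Lattice

variable {α : Type*} [Fintype α]

lemma exists_lt_abs_sub_of_lt_dist {m : ℕ} {i j : α → ℤ} (h : (m : ℝ) < dist i j) :
    ∃ l, (m : ℤ) < |i l - j l| := by
  contrapose! h
  refine (dist_pi_le_iff m.cast_nonneg).2 fun l => ?_
  rw [Int.dist_eq]
  exact_mod_cast h l

lemma card_filter_dist_le (J : Finset (α → ℤ)) (i : α → ℤ) (r : ℕ) :
    {j ∈ J | dist i j ≤ r}.card ≤ (2 * r + 1) ^ Fintype.card α := by
  classical
  calc {j ∈ J | dist i j ≤ r}.card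
      ≤ (Finset.Icc (fun l => i l - r) (fun l => i l + r)).card := by
        refine Finset.card_le_card fun j hj => ?_
        have hcoord : ∀ l, |i l - j l| ≤ (r : ℤ) := fun l => by
          have hl := (dist_le_pi_dist i j l).trans (Finset.mem_filter.1 hj).2
          rw [Int.dist_eq] at hl
          exact_mod_cast hl
        simp only [abs_le] at hcoord
        exact Finset.mem_Icc.2 ⟨fun l => by linarith [hcoord l], fun l => by linarith [hcoord l]⟩
    _ = (2 * r + 1) ^ Fintype.card α := by
        have hside : ∀ l, (i l + r + 1 - (i l - r)).toNat = 2 * r + 1 := fun l => by omega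
        simp only [Pi.card_Icc, Int.card_Icc, hside, Finset.prod_const, Finset.card_univ]

lemma card_filter_dist_le_ten_mul_add_one_pow {d : ℕ} (J : Finset (Fin d → ℤ)) (i : Fin d → ℤ)
    (m : ℕ) : ({j ∈ J | dist i j ≤ 4 * (m : ℝ)}.card : ℝ) ≤ (10 * (m : ℝ) + 1) ^ d := by
  have hcard := card_filter_dist_le J i (4 * m)
  rw [Fintype.card_fin] at hcard
  calc ({j ∈ J | dist i j ≤ 4 * (m : ℝ)}.card : ℝ)
      ≤ (2 * (4 * (m : ℝ)) + 1) ^ d := by exact_mod_cast hcard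
    _ ≤ (10 * (m : ℝ) + 1) ^ d :=
        pow_le_pow_left₀ (by positivity) (by linarith [(m.cast_nonneg : (0 : ℝ) ≤ m)]) d

end Lattice

end LocalDependence

open LocalDependence

theorem stmt_5_general
    {Ω ι : Type*} [MeasurableSpace Ω] {μ : Measure Ω} [IsProbabilityMeasure μ]
    [PseudoMetricSpace ι] (J : Finset ι) {m κ p : ℝ} (hm : 0 ≤ m) (hp : 2 ≤ p) (hp3 : p ≤ 3)
    (hκ : ∀ i ∈ J, ({j ∈ J | dist i j ≤ 4 * m}.card : ℝ) ≤ κ)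
    {X : ι → Ω → ℝ} (hXmeas : ∀ i ∈ J, Measurable (X i)) (hXmean : ∀ i ∈ J, ∫ ω, X i ω ∂μ = 0)
    (hXp : ∀ i ∈ J, Integrable (fun ω => |X i ω| ^ p) μ)
    (hdep : ∀ A B : Finset ι, A ⊆ J → B ⊆ J → (∀ i ∈ A, ∀ j ∈ B, m < dist i j) →
      IndepFun (fun ω (a : A) => X a ω) (fun ω (b : B) => X b ω) μ)
    (hvar : ∫ ω, (∑ i ∈ J, X i ω) ^ 2 ∂μ = 1) (z : ℝ) :
    |μ.real {ω | ∑ i ∈ J, X i ω ≤ z} - stdGaussianCDF z| ≤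
      75 * κ ^ (p - 1) * ∑ i ∈ J, ∫ ω, |X i ω| ^ p ∂μ := by
  have hX : LocallyDependent μ (fun i : J => X i) m := locallyDependent_subtype hXmeas hXmean
    (fun i hi => memLp_two_of_integrable_rpow hp hp3 (hXmeas i hi) (hXp i hi)) hdep
  have hcard : ∀ i : J, ((near (4 * m) i).card : ℝ) ≤ κ := fun i =>
    (Nat.cast_le.2 (card_near_subtype_le i (4 * m))).trans (hκ i i.2)
  have hκ0 : 0 < κ := by
    obtain ⟨i, hi⟩ : J.Nonempty := by
      by_contra! hJ
      simp [hJ] at hvar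
    have hmem : i ∈ ({j ∈ J | dist i j ≤ 4 * m} : Finset ι) :=
      Finset.mem_filter.2 ⟨hi, by rw [dist_self]; positivity⟩
    exact (Nat.cast_pos.2 (Finset.card_pos.2 ⟨i, hmem⟩)).trans_le (hκ i hi)
  have hsum : partialSum (fun i : J => X i) Finset.univ = fun ω => ∑ i ∈ J, X i ω :=
    funext fun ω => Finset.sum_coe_sort J fun i => X i ω
  have hbound := hX.abs_measureReal_sub_stdGaussianCDF_le hm hp hp3 (fun i => hXp i i.2) hκ0 hcard
    (by rwa [hsum]) z
  rwa [hsum, Finset.sum_coe_sort J fun i => ∫ ω, |X i ω| ^ p ∂μ, ← mul_assoc] at hbound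

theorem stmt_5
    {Ω : Type*} [MeasurableSpace Ω] {μ : Measure Ω} [IsProbabilityMeasure μ]
    (d : ℕ) (hd : 0 < d) (J : Finset (Fin d → ℤ)) (m : ℕ)
    (p : ℝ) (hp : 2 < p ∧ p ≤ 3)
    (X : (Fin d → ℤ) → Ω → ℝ)
    (hXmeas : ∀ i ∈ J, Measurable (X i))
    (hXmean : ∀ i ∈ J, ∫ ω, X i ω ∂μ = 0)
    (hXp : ∀ i ∈ J, Integrable (fun ω => |X i ω| ^ p) μ)
    (hmdep : ∀ A B : Finset (Fin d → ℤ), A ⊆ J → B ⊆ J →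
      (∀ i ∈ A, ∀ j ∈ B, ∃ l, (m : ℤ) < |i l - j l|) →
      IndepFun (fun ω => fun a : (A : Finset (Fin d → ℤ)) => X a.1 ω)
        (fun ω => fun b : (B : Finset (Fin d → ℤ)) => X b.1 ω) μ)
    (W : Ω → ℝ) (hW : ∀ ω, W ω = ∑ i ∈ J, X i ω)
    (hWvar : ∫ ω, (W ω) ^ 2 ∂μ = 1) :
    ∀ z : ℝ, |(μ {ω | W ω ≤ z}).toReal - stdGaussianCDF z| ≤
      75 * ((10 * (m : ℝ) + 1) ^ ((p - 1) * d)) * ∑ i ∈ J, ∫ ω, |X i ω| ^ p ∂μ := by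
  intro z
  obtain rfl : W = fun ω => ∑ i ∈ J, X i ω := funext hW
  rw [mul_comm (p - 1), rpow_mul (by positivity), rpow_natCast]
  exact stmt_5_general J m.cast_nonneg hp.1.le hp.2
    (fun i _ => card_filter_dist_le_ten_mul_add_one_pow J i m) hXmeas hXmean hXp
    (fun A B hA hB hAB => hmdep A B hA hB fun i hi j hj =>
      exists_lt_abs_sub_of_lt_dist (hAB i hi j hj)) hWvar z
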